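/- arXiv:1511.04992 — 4 statements merged into one kernel-verified Lean document; each statement's English description precedes it below -/
import Mathlib

section
/- Fix θ ∈ Θ and ξ ∈ ℝ^d, and let N_T = ⌈β T^α⌉ with 1/3 < α ≤ 1 and β > 0. Assume: (a) ϑ ↦ ϖ(y₁, u₁; ϑ) is continuous at ϑ = θ for every (y₁,u₁) ∈ 𝖸 × ℝ^p; (b) ϑ ↦ E[ϖ(Y₁, U_{1,1}; ϑ)⁹] is continuous at ϑ = θ; (c) ϑ ↦ γ(ϑ) is continuously differentiable at ϑ = θ; and (d) E[ϖ(Y₁, U_{1,1}; θ)⁹] + E[γ(Y₁;θ)⁴] < ∞. Let the array U^T be distributed according to the θ-tilted measure P̃^θ_T while U'^T is an independent array of i.i.d. N(0,I_p) vectors, and set R_T = Σ_{t=1}^T [ log Ŵ^T_t(θ + ξ/√T; U'^T_t) − log Ŵ^T_t(θ; U^T_t) ]. Then, as T → ∞, T^{(α−1)/2} R_T + T^{(1−α)/2} β^{−1} γ(θ)² | 𝒴^T ⇒ N(0, 2 β^{−1} γ(θ)²), i.e. for every bounded continuous f : ℝ → ℝ the conditional expectation of f(T^{(α−1)/2} R_T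 + T^{(1−α)/2} β^{−1} γ(θ)²) given 𝒴^T converges in probability to ∫ f dN(0, 2β^{−1}γ(θ)²). -/
/-!
Write `Z = ϖ - 1` for the centred weight and `a = T^{(α-1)/2}`. Given the observations, `R_T` is a
difference of two independent sums of `T` independent blocks. A block is `log (1 + e)` with
`e = N⁻¹ ∑ᵢ Z(uᵢ)`, under the law of i.i.d. variables for the numerator and under the law with
density `1 + e` for the denominator. The proof computes conditional characteristic functions; there
is no Lindeberg argument and no law of large numbers for functions of the auxiliary variables.

*One block.* A third-order expansion of `(1 + e)^{ib}`, valid for all `e` with an error controlled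
by the sixth moment of `e` (`norm_cexp_log_sub_le`, `norm_tilt_cexp_log_sub_le`), combined with the
moments of an i.i.d. sum (`sum_second_moment`, `sum_higher_moments`), shows that both block
characteristic functions equal `1 - (ib + b²) γ²/(2N)` up to a small error (`block_charFun`,
`block_charFun_tilt`). Tilting reverses the sign of the mean of the log-likelihood estimate, which
is why numerator and denominator add up to a drift `-γ²/N` instead of cancelling.

*Fixed observations.* The characteristic functions of the blocks are compared with exponentials
factor by factor (`norm_prod_blocks_sub_exp_le`). With `b = s a`, the conditional characteristic
function of `a R_T + a⁻¹ σ`, `σ = γ(θ)²/β`, is within a multiple of `totalErr` of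
`exp (-s² σ - (i s + s² a) D)`, where `D = devD` measures how far `a ∑ₜ (γₜ² + γₜ'²)/(2N)` is from
`a⁻¹ σ`. A form of Lévy's theorem with a uniform threshold (`exists_delta_of_charFun_le`) then says
that `E[f | 𝒴]` is close to the Gaussian integral as soon as `totalErr + devD²` is small.

*Averaging over the observations.* By Markov's inequality, `totalErr + devD²` is small outside an
event of probability controlled by explicit rates (`measure_bad_le`). These tend to zero for
`N ~ β T^α` with `α > 1/3` (`tendsto_mul_eta`, `tendsto_sq_mul_div`, `tendsto_centering`); the
centring uses that `γ(θ + ξ/√T)² - γ(θ)² = O(T^{-1/2})`. Uniform moments along `θ + ξ/√T` come from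
the continuity of the ninth moment.

*Conditional expectations.* The tilt has conditional mass one, so it preserves the law of the
observations, and Bayes' formula identifies the conditional expectation with an integral over the
arrays (`condExp_tilt`, `measure_condExp_far_le`).
-/

open MeasureTheory ProbabilityTheory Filter
open scoped ENNReal

/-- The law of a standard Gaussian random vector in `ℝ^p`. -/
noncomputable def stdGaussianPi (p : ℕ) : Measure (Fin p → ℝ) :=
  Measure.pi fun _ => gaussianReal 0 1

/-! ### Expansion of the block characteristic integrand -/

theorem norm_exp_taylor_two (x : ℝ) :
    ‖Complex.exp (Complex.I * x) - (1 + Complex.I * x - (x : ℂ) ^ 2 / 2)‖ ≤ 4 * |x| ^ 3 := by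
  rcases le_or_gt |x| 1 with hx | hx
  · have hn : ‖Complex.I * (x : ℂ)‖ = |x| := by simp
    have h := Complex.exp_bound (x := Complex.I * x) (by rw [hn]; exact hx) (n := 3) (by norm_num)
    rw [hn] at h
    have e : (∑ m ∈ Finset.range 3, (Complex.I * (x : ℂ)) ^ m / (m.factorial : ℂ))
        = 1 + Complex.I * x - (x : ℂ) ^ 2 / 2 := by
      simp [Finset.sum_range_succ, Nat.factorial, mul_pow]
      ring
    rw [e] at h
    refine h.trans ?_
    have : 0 ≤ |x| ^ 3 := by positivity
    norm_num [Nat.factorial]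
    nlinarith
  · have h1 : ‖Complex.exp (Complex.I * x)‖ = 1 := by
      rw [mul_comm]; exact Complex.norm_exp_ofReal_mul_I x
    calc _ ≤ ‖Complex.exp (Complex.I * x)‖ + (‖(1 : ℂ)‖ + ‖Complex.I * (x : ℂ)‖
            + ‖(x : ℂ) ^ 2 / 2‖) := by
          refine (norm_sub_le _ _).trans ?_
          gcongr
          refine (norm_sub_le _ _).trans ?_
          gcongr
          exact norm_add_le _ _
      _ = 2 + |x| + |x| ^ 2 / 2 := by rw [h1]; simp; ring
      _ ≤ 4 * |x| ^ 3 := by nlinarith [sq_nonneg (|x| - 1), mul_pos (sub_pos.2 hx) (sub_pos.2 hx)]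

theorem abs_log_one_add_sub_le {e : ℝ} (he : |e| ≤ 1 / 2) :
    |Real.log (1 + e) - (e - e ^ 2 / 2 + e ^ 3 / 3)| ≤ 2 * e ^ 4 := by
  have h := Real.abs_log_sub_add_sum_range_le (x := -e) (by rw [abs_neg]; linarith) 3
  simp only [Finset.sum_range_succ, Finset.sum_range_zero, abs_neg] at h
  have h4 : |e| ^ 4 = e ^ 4 := by rw [← abs_pow]; exact abs_of_nonneg (by positivity)
  have e1 : Real.log (1 + e) - (e - e ^ 2 / 2 + e ^ 3 / 3)
      = 0 + (-e) ^ (0 + 1) / ((0 : ℕ) + 1 : ℝ) + (-e) ^ (1 + 1) / ((1 : ℕ) + 1 : ℝ)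
        + (-e) ^ (2 + 1) / ((2 : ℕ) + 1 : ℝ) + Real.log (1 - -e) := by
    rw [sub_neg_eq_add]; push_cast; ring
  rw [e1]
  refine h.trans ?_
  rw [h4, div_le_iff₀ (by linarith)]
  have : 0 ≤ e ^ 4 := by positivity
  nlinarith

/-- The error budget in the pointwise expansions of `(1 + e)^{ib}`. -/
noncomputable def errPoly (b e : ℝ) : ℝ :=
  |b| * e ^ 4 + (b ^ 2 + |b| ^ 3) * |e| ^ 3 + e ^ 6

/-- For `|e| ≥ 1/2` the terms of the cubic polynomial are themselves absorbed in the error budget. -/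
theorem norm_cubic_le (b c₁ c₂ c₃ e : ℝ) (h₁ : |c₁| ≤ 1) (h₂ : |c₂| ≤ 1) (h₃ : |c₃| ≤ 1)
    (he : 1 / 2 ≤ |e|) :
    ‖Complex.I * b * (c₁ * e + c₂ * e ^ 2 + c₃ * e ^ 3) - (b : ℂ) ^ 2 * e ^ 2 / 2‖
      ≤ 14 * (|b| * e ^ 4) + b ^ 2 * |e| ^ 3 := by
  have h4 : e ^ 4 = |e| ^ 4 := by rw [← abs_pow]; exact (abs_of_nonneg (by positivity)).symm
  have hb2 : b ^ 2 = |b| ^ 2 := (sq_abs b).symm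
  calc _ ≤ |b| * (|e| + |e| ^ 2 + |e| ^ 3) + |b| ^ 2 * |e| ^ 2 / 2 := by
        refine (norm_sub_le _ _).trans ?_
        gcongr
        · rw [norm_mul]
          simp only [norm_mul, Complex.norm_I, one_mul, Complex.norm_real, Real.norm_eq_abs]
          gcongr
          refine (norm_add₃_le).trans ?_
          simp only [norm_mul, norm_pow, Complex.norm_real, Real.norm_eq_abs]
          gcongr
          · exact mul_le_of_le_one_left (abs_nonneg _) h₁
          · exact mul_le_of_le_one_left (by positivity) h₂
          · exact mul_le_of_le_one_left (by positivity) h₃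
        · simp
    _ ≤ _ := by
        rw [h4, hb2]
        have e1 : |e| ≤ 8 * |e| ^ 4 := by
          have : 0 ≤ |e| * (8 * |e| ^ 3 - 1) := by
            refine mul_nonneg (abs_nonneg _) ?_
            have := pow_le_pow_left₀ (by norm_num) he 3
            linarith
          linarith
        have e2 : |e| ^ 2 ≤ 4 * |e| ^ 4 := by
          have : 0 ≤ |e| ^ 2 * (4 * |e| ^ 2 - 1) := by
            refine mul_nonneg (by positivity) ?_
            have := pow_le_pow_left₀ (by norm_num) he 2
            linarith
          linarith
        have e3 : |e| ^ 3 ≤ 2 * |e| ^ 4 := by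
          have : 0 ≤ |e| ^ 3 * (2 * |e| - 1) := mul_nonneg (by positivity) (by linarith)
          linarith
        have e4 : |e| ^ 2 / 2 ≤ |e| ^ 3 := by
          have : 0 ≤ |e| ^ 2 * (|e| - 1 / 2) := mul_nonneg (by positivity) (by linarith)
          linarith
        have hb := abs_nonneg b
        have := mul_le_mul_of_nonneg_left (add_le_add (add_le_add e1 e2) e3) hb
        have := mul_le_mul_of_nonneg_left e4 (sq_nonneg |b|)
        nlinarith

theorem one_le_of_half_le {e : ℝ} (he : 1 / 2 ≤ |e|) : 1 ≤ 64 * e ^ 6 ∧ |e| ≤ 32 * e ^ 6 := by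
  have h6 : e ^ 6 = |e| ^ 6 := by rw [← abs_pow]; exact (abs_of_nonneg (by positivity)).symm
  rw [h6]
  have h := pow_le_pow_left₀ (by norm_num) he 6
  have h5 := pow_le_pow_left₀ (by norm_num) he 5
  refine ⟨by linarith, ?_⟩
  have : 0 ≤ |e| * (32 * |e| ^ 5 - 1) := mul_nonneg (abs_nonneg _) (by linarith)
  linarith

/-- Third-order expansion of `(1 + e)^{ib}`, valid for every `e`: outside `|e| ≤ 1/2` the bound
`e ^ 6` takes over, so the singularity of the logarithm is harmless. -/
theorem norm_cexp_log_sub_le (b e : ℝ) :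
    ‖Complex.exp (Complex.I * (b * Real.log (1 + e) : ℝ))
      - (1 + (Complex.I * b * ((1 : ℝ) * e + (-1 / 2 : ℝ) * e ^ 2 + (1 / 3 : ℝ) * e ^ 3)
          - (b : ℂ) ^ 2 * e ^ 2 / 2))‖ ≤ 128 * errPoly b e := by
  unfold errPoly
  have h4 : e ^ 4 = |e| ^ 4 := by rw [← abs_pow]; exact (abs_of_nonneg (by positivity)).symm
  -- for small `e` the logarithm is expanded; for `e` large the left side is bounded termwise
  rcases le_or_gt |e| (1 / 2) with he | he
  · set l := Real.log (1 + e) with hl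
    have hlog : |l - (e - e ^ 2 / 2 + e ^ 3 / 3)| ≤ 2 * e ^ 4 := abs_log_one_add_sub_le he
    have hae := abs_nonneg e
    have hp2 : |e| ^ 2 ≤ |e| / 2 := by nlinarith
    have hp3 : |e| ^ 3 ≤ |e| ^ 2 / 2 := by nlinarith [sq_nonneg |e|]
    have hp4 : |e| ^ 4 ≤ |e| ^ 3 / 2 := by nlinarith [pow_nonneg hae 3]
    have hdiff : |l - e| ≤ 4 / 3 * |e| ^ 2 := by
      have : l - e = (l - (e - e ^ 2 / 2 + e ^ 3 / 3)) + (- e ^ 2 / 2 + e ^ 3 / 3) := by ring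
      rw [this]
      refine (abs_add_le _ _).trans ?_
      have h2 : |(- e ^ 2 / 2 + e ^ 3 / 3)| ≤ |e| ^ 2 / 2 + |e| ^ 3 / 3 := by
        refine (abs_add_le _ _).trans ?_
        simp [abs_div, abs_pow]
      rw [h4] at hlog
      nlinarith [sq_nonneg |e|]
    have hl2 : |l| ≤ 2 * |e| := by
      have := abs_add_le (l - e) e
      rw [sub_add_cancel] at this
      nlinarith
    have hsq : |l ^ 2 - e ^ 2| ≤ 4 * |e| ^ 3 := by
      have : l ^ 2 - e ^ 2 = (l - e) * (l + e) := by ring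
      rw [this, abs_mul]
      have h3 : |l + e| ≤ 3 * |e| := (abs_add_le _ _).trans (by linarith)
      calc _ ≤ (4 / 3 * |e| ^ 2) * (3 * |e|) := by gcongr
        _ = _ := by ring
    have hE := norm_exp_taylor_two (b * l)
    have key : Complex.exp (Complex.I * (b * l : ℝ))
      - (1 + (Complex.I * b * ((1 : ℝ) * e + (-1 / 2 : ℝ) * e ^ 2 + (1 / 3 : ℝ) * e ^ 3)
          - (b : ℂ) ^ 2 * e ^ 2 / 2))
        = (Complex.exp (Complex.I * (b * l : ℝ))
            - (1 + Complex.I * (b * l : ℝ) - ((b * l : ℝ) : ℂ) ^ 2 / 2))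
          + Complex.I * (b * (l - (e - e ^ 2 / 2 + e ^ 3 / 3)) : ℝ)
          - ((b ^ 2 * (l ^ 2 - e ^ 2) / 2 : ℝ) : ℂ) := by
      push_cast; ring
    rw [key]
    refine (norm_sub_le _ _).trans ?_
    have hA : ‖Complex.I * ((b * (l - (e - e ^ 2 / 2 + e ^ 3 / 3)) : ℝ) : ℂ)‖
        ≤ |b| * (2 * e ^ 4) := by
      rw [norm_mul, Complex.norm_I, one_mul, Complex.norm_real, Real.norm_eq_abs, abs_mul]
      gcongr
    have hB : ‖((b ^ 2 * (l ^ 2 - e ^ 2) / 2 : ℝ) : ℂ)‖ ≤ b ^ 2 * (2 * |e| ^ 3) := by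
      rw [Complex.norm_real, Real.norm_eq_abs, abs_div, abs_mul, abs_of_nonneg (sq_nonneg b)]
      rw [abs_of_pos (by norm_num : (0 : ℝ) < 2)]
      have := mul_le_mul_of_nonneg_left hsq (sq_nonneg b)
      linarith
    have hC : 4 * |b * l| ^ 3 ≤ |b| ^ 3 * (32 * |e| ^ 3) := by
      rw [abs_mul, mul_pow]
      have := pow_le_pow_left₀ (abs_nonneg _) hl2 3
      have := mul_le_mul_of_nonneg_left this (pow_nonneg (abs_nonneg b) 3)
      nlinarith
    have hD := norm_add_le (Complex.exp (Complex.I * (b * l : ℝ))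
            - (1 + Complex.I * (b * l : ℝ) - ((b * l : ℝ) : ℂ) ^ 2 / 2))
          (Complex.I * (b * (l - (e - e ^ 2 / 2 + e ^ 3 / 3)) : ℝ))
    have p1 : 0 ≤ |b| * e ^ 4 := by positivity
    have p2 : 0 ≤ b ^ 2 * |e| ^ 3 := by positivity
    have p3 : 0 ≤ |b| ^ 3 * |e| ^ 3 := by positivity
    have p4 : 0 ≤ e ^ 6 := by positivity
    nlinarith
  · obtain ⟨h1, -⟩ := one_le_of_half_le he.le
    have hP := norm_cubic_le b 1 (-1 / 2) (1 / 3) e (by norm_num) (by norm_num [abs_div])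
      (by norm_num [abs_div]) he.le
    have hn : ‖Complex.exp (Complex.I * (b * Real.log (1 + e) : ℝ))‖ = 1 := by
      rw [mul_comm]; exact Complex.norm_exp_ofReal_mul_I _
    refine (norm_sub_le _ _).trans ?_
    rw [hn]
    have hD := norm_add_le (1 : ℂ)
      (Complex.I * b * ((1 : ℝ) * e + (-1 / 2 : ℝ) * e ^ 2 + (1 / 3 : ℝ) * e ^ 3)
          - (b : ℂ) ^ 2 * e ^ 2 / 2)
    rw [norm_one] at hD
    have p1 : 0 ≤ |b| * e ^ 4 := by positivity
    have p2 : 0 ≤ b ^ 2 * |e| ^ 3 := by positivity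
    have p3 : 0 ≤ |b| ^ 3 * |e| ^ 3 := by positivity
    nlinarith

/-- The same expansion weighted by the likelihood `1 + e` of the tilted law. The factor is at most
`3 |e|` outside `|e| ≤ 1/2`, so sixth moments still suffice. -/
theorem norm_tilt_cexp_log_sub_le (b e : ℝ) :
    ‖((1 + e : ℝ) : ℂ) * Complex.exp (Complex.I * (b * Real.log (1 + e) : ℝ))
      - (((1 + e : ℝ) : ℂ)
        + (Complex.I * b * ((1 : ℝ) * e + (1 / 2 : ℝ) * e ^ 2 + (-1 / 6 : ℝ) * e ^ 3)
          - (b : ℂ) ^ 2 * e ^ 2 / 2))‖ ≤ 256 * errPoly b e := by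
  have p1 : 0 ≤ |b| * e ^ 4 := by positivity
  have p2 : 0 ≤ b ^ 2 * |e| ^ 3 := by positivity
  have p3 : 0 ≤ |b| ^ 3 * |e| ^ 3 := by positivity
  have p4 : 0 ≤ e ^ 6 := by positivity
  rcases le_or_gt |e| (1 / 2) with he | he
  · have h := norm_cexp_log_sub_le b e
    have key : ((1 + e : ℝ) : ℂ) * Complex.exp (Complex.I * (b * Real.log (1 + e) : ℝ))
      - (((1 + e : ℝ) : ℂ)
        + (Complex.I * b * ((1 : ℝ) * e + (1 / 2 : ℝ) * e ^ 2 + (-1 / 6 : ℝ) * e ^ 3)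
          - (b : ℂ) ^ 2 * e ^ 2 / 2))
      = ((1 + e : ℝ) : ℂ) * (Complex.exp (Complex.I * (b * Real.log (1 + e) : ℝ))
      - (1 + (Complex.I * b * ((1 : ℝ) * e + (-1 / 2 : ℝ) * e ^ 2 + (1 / 3 : ℝ) * e ^ 3)
          - (b : ℂ) ^ 2 * e ^ 2 / 2)))
        + (Complex.I * (b * (e ^ 4 / 3) : ℝ) - ((b ^ 2 * e ^ 3 / 2 : ℝ) : ℂ)) := by
      push_cast; ring
    rw [key]
    refine (norm_add_le _ _).trans ?_
    rw [norm_mul, Complex.norm_real, Real.norm_eq_abs]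
    have hab : |1 + e| ≤ 3 / 2 := by
      rw [abs_le] at he ⊢; constructor <;> linarith [he.1, he.2]
    have h1 := mul_le_mul hab h (norm_nonneg _) (by norm_num)
    have h2 : ‖Complex.I * ((b * (e ^ 4 / 3) : ℝ) : ℂ) - ((b ^ 2 * e ^ 3 / 2 : ℝ) : ℂ)‖
        ≤ |b| * e ^ 4 / 3 + b ^ 2 * |e| ^ 3 / 2 := by
      refine (norm_sub_le _ _).trans (le_of_eq ?_)
      rw [norm_mul, Complex.norm_I, one_mul, Complex.norm_real, Complex.norm_real,
        Real.norm_eq_abs, Real.norm_eq_abs, abs_mul, abs_div, abs_div, abs_mul,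
        abs_of_nonneg (sq_nonneg b), abs_pow, abs_pow]
      have h4 : e ^ 4 = |e| ^ 4 := by rw [← abs_pow]; exact (abs_of_nonneg (by positivity)).symm
      rw [h4]; norm_num; ring
    unfold errPoly at *
    nlinarith
  · obtain ⟨h1, h2⟩ := one_le_of_half_le he.le
    have hP := norm_cubic_le b 1 (1 / 2) (-1 / 6) e (by norm_num) (by norm_num [abs_div])
      (by norm_num [abs_div]) he.le
    have hn : ‖Complex.exp (Complex.I * (b * Real.log (1 + e) : ℝ))‖ = 1 := by
      rw [mul_comm]; exact Complex.norm_exp_ofReal_mul_I _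
    refine (norm_sub_le _ _).trans ?_
    rw [norm_mul, hn, mul_one]
    have hD := norm_add_le ((1 + e : ℝ) : ℂ)
      (Complex.I * b * ((1 : ℝ) * e + (1 / 2 : ℝ) * e ^ 2 + (-1 / 6 : ℝ) * e ^ 3)
          - (b : ℂ) ^ 2 * e ^ 2 / 2)
    have hab : ‖((1 + e : ℝ) : ℂ)‖ ≤ 1 + |e| := by
      rw [Complex.norm_real, Real.norm_eq_abs]
      exact (abs_add_le _ _).trans (by simp)
    unfold errPoly
    nlinarith

/-! ### Moments of sums of i.i.d. variables -/

section Moments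

variable {E : Type*} [MeasurableSpace E]

theorem integrable_pow_of_memLp {Ω : Type*} [MeasurableSpace Ω] {μ : Measure Ω}
    [IsFiniteMeasure μ] {f : Ω → ℝ} {m k : ℕ} (hf : MemLp f m μ) (hk : k ≤ m) :
    Integrable (fun x => f x ^ k) μ := by
  have h : MemLp f k μ := hf.mono_exponent (by exact_mod_cast hk)
  rcases Nat.eq_zero_or_pos k with rfl | h0
  · simp
  · have := h.integrable_norm_pow h0.ne'
    refine this.mono' (hf.1.pow k) (ae_of_all _ fun x => ?_)
    rw [norm_pow]

theorem memLp_sum_pi {G : Measure E} [IsProbabilityMeasure G] {Z : E → ℝ} {m : ℕ}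
    (hZ : MemLp Z m G) (n : ℕ) :
    MemLp (fun u : Fin n → E => ∑ i, Z (u i)) m (Measure.pi fun _ : Fin n => G) :=
  memLp_finsetSum _ fun i _ => hZ.comp_measurePreserving (measurePreserving_eval (fun _ => G) i)

/-- Binomial recursion for the moments of a sum of i.i.d. variables. -/
theorem integral_sum_pow_succ {G : Measure E} [IsProbabilityMeasure G] {Z : E → ℝ} {m : ℕ}
    (hZ : MemLp Z m G) (n k : ℕ) (hk : k ≤ m) :
    ∫ u : Fin (n + 1) → E, (∑ i, Z (u i)) ^ k ∂(Measure.pi fun _ => G)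
      = ∑ j ∈ Finset.range (k + 1), (∫ x, Z x ^ j ∂G)
          * (∫ u : Fin n → E, (∑ i, Z (u i)) ^ (k - j) ∂(Measure.pi fun _ => G))
          * (k.choose j : ℝ) := by
  have hmp := (measurePreserving_piFinSuccAbove (fun _ : Fin (n + 1) => G) 0).symm
  rw [← hmp.integral_comp (MeasurableEquiv.measurableEmbedding _)]
  have : ∀ z : E × (Fin n → E),
      (∑ i, Z (((MeasurableEquiv.piFinSuccAbove (fun _ : Fin (n + 1) => E) 0).symm z) i)) ^ k
        = ∑ j ∈ Finset.range (k + 1), Z z.1 ^ j * (∑ i, Z (z.2 i)) ^ (k - j)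
          * (k.choose j : ℝ) := by
    intro z
    rw [← add_pow]
    congr 1
    simp [MeasurableEquiv.piFinSuccAbove_symm_apply, Fin.insertNthEquiv, Fin.sum_univ_succ]
  simp_rw [this]
  rw [integral_finsetSum]
  · refine Finset.sum_congr rfl fun j _ => ?_
    rw [integral_mul_const, integral_prod_mul (fun x => Z x ^ j)
      (fun u : Fin n → E => (∑ i, Z (u i)) ^ (k - j))]
  · intro j hj
    have hj' : j ≤ k := Nat.lt_succ_iff.1 (Finset.mem_range.1 hj)
    exact (Integrable.mul_prod (integrable_pow_of_memLp hZ (hj'.trans hk))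
      (integrable_pow_of_memLp (memLp_sum_pi hZ n) ((Nat.sub_le _ _).trans hk))).mul_const _

theorem sum_second_moment {G : Measure E} [IsProbabilityMeasure G] {Z : E → ℝ}
    (hZ : MemLp Z (2 : ℕ) G) (h0 : ∫ x, Z x ∂G = 0) (n : ℕ) :
    ∫ u : Fin n → E, (∑ i, Z (u i)) ∂(Measure.pi fun _ => G) = 0 ∧
    ∫ u : Fin n → E, (∑ i, Z (u i)) ^ 2 ∂(Measure.pi fun _ => G) = n * ∫ x, Z x ^ 2 ∂G := by
  induction n with
  | zero => simp
  | succ n ih =>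
    obtain ⟨i1, i2⟩ := ih
    have r1 := integral_sum_pow_succ hZ n 1 (by norm_num)
    have r2 := integral_sum_pow_succ hZ n 2 (by norm_num)
    simp [Finset.sum_range_succ, i1, i2, h0] at r1 r2
    refine ⟨r1, ?_⟩
    rw [r2]; push_cast; ring

/-- `E[X²] E[X⁴] ≤ E[X⁶]`, `(E[X²])² ≤ E[X⁴]` and `(E[X³])² ≤ E[X⁶]`, by integrating pointwise
inequalities over the product space. -/
theorem moment_ineqs {G : Measure E} [IsProbabilityMeasure G] {Z : E → ℝ}
    (hZ : MemLp Z (6 : ℕ) G) :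
    (∫ x, Z x ^ 2 ∂G) * (∫ x, Z x ^ 4 ∂G) ≤ ∫ x, Z x ^ 6 ∂G ∧
    (∫ x, Z x ^ 2 ∂G) ^ 2 ≤ ∫ x, Z x ^ 4 ∂G ∧ (∫ x, Z x ^ 3 ∂G) ^ 2 ≤ ∫ x, Z x ^ 6 ∂G := by
  have hi : ∀ k ≤ 6, Integrable (fun x => Z x ^ k) G := fun k hk => integrable_pow_of_memLp hZ hk
  have hp : ∀ j ≤ 6, ∀ k ≤ 6, Integrable (fun z : E × E => Z z.1 ^ j * Z z.2 ^ k) (G.prod G) :=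
    fun j hj k hk => (hi j hj).mul_prod (hi k hk)
  have he : ∀ j k, ∫ z : E × E, Z z.1 ^ j * Z z.2 ^ k ∂(G.prod G)
      = (∫ x, Z x ^ j ∂G) * (∫ x, Z x ^ k ∂G) := fun j k =>
    integral_prod_mul (fun x => Z x ^ j) (fun x => Z x ^ k)
  have hone : ∫ x, Z x ^ 0 ∂G = 1 := by simp
  refine ⟨?_, ?_, ?_⟩
  · have : ∫ z : E × E, (Z z.1 ^ 2 * Z z.2 ^ 4 + Z z.1 ^ 4 * Z z.2 ^ 2) ∂(G.prod G)
        ≤ ∫ z : E × E, (Z z.1 ^ 6 * Z z.2 ^ 0 + Z z.1 ^ 0 * Z z.2 ^ 6) ∂(G.prod G) := by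
      refine integral_mono ((hp 2 (by norm_num) 4 (by norm_num)).add (hp 4 (by norm_num) 2
        (by norm_num))) ((hp 6 (by norm_num) 0 (by norm_num)).add (hp 0 (by norm_num) 6
        (by norm_num))) fun z => ?_
      simp only [pow_zero, mul_one, one_mul]
      have : 0 ≤ (Z z.1 ^ 2 - Z z.2 ^ 2) ^ 2 * (Z z.1 ^ 2 + Z z.2 ^ 2) := by positivity
      nlinarith
    rw [integral_add (hp 2 (by norm_num) 4 (by norm_num)) (hp 4 (by norm_num) 2 (by norm_num)),
      integral_add (hp 6 (by norm_num) 0 (by norm_num)) (hp 0 (by norm_num) 6 (by norm_num)),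
      he, he, he, he, hone] at this
    linarith
  · have : ∫ z : E × E, (Z z.1 ^ 2 * Z z.2 ^ 2 + Z z.1 ^ 2 * Z z.2 ^ 2) ∂(G.prod G)
        ≤ ∫ z : E × E, (Z z.1 ^ 4 * Z z.2 ^ 0 + Z z.1 ^ 0 * Z z.2 ^ 4) ∂(G.prod G) := by
      refine integral_mono ((hp 2 (by norm_num) 2 (by norm_num)).add (hp 2 (by norm_num) 2
        (by norm_num))) ((hp 4 (by norm_num) 0 (by norm_num)).add (hp 0 (by norm_num) 4
        (by norm_num))) fun z => ?_
      simp only [pow_zero, mul_one, one_mul]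
      have : 0 ≤ (Z z.1 ^ 2 - Z z.2 ^ 2) ^ 2 := by positivity
      nlinarith
    rw [integral_add (hp 2 (by norm_num) 2 (by norm_num)) (hp 2 (by norm_num) 2 (by norm_num)),
      integral_add (hp 4 (by norm_num) 0 (by norm_num)) (hp 0 (by norm_num) 4 (by norm_num)),
      he, he, he, hone] at this
    nlinarith
  · have : ∫ z : E × E, (Z z.1 ^ 3 * Z z.2 ^ 3 + Z z.1 ^ 3 * Z z.2 ^ 3) ∂(G.prod G)
        ≤ ∫ z : E × E, (Z z.1 ^ 6 * Z z.2 ^ 0 + Z z.1 ^ 0 * Z z.2 ^ 6) ∂(G.prod G) := by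
      refine integral_mono ((hp 3 (by norm_num) 3 (by norm_num)).add (hp 3 (by norm_num) 3
        (by norm_num))) ((hp 6 (by norm_num) 0 (by norm_num)).add (hp 0 (by norm_num) 6
        (by norm_num))) fun z => ?_
      simp only [pow_zero, mul_one, one_mul]
      have : 0 ≤ (Z z.1 ^ 3 - Z z.2 ^ 3) ^ 2 := by positivity
      nlinarith
    rw [integral_add (hp 3 (by norm_num) 3 (by norm_num)) (hp 3 (by norm_num) 3 (by norm_num)),
      integral_add (hp 6 (by norm_num) 0 (by norm_num)) (hp 0 (by norm_num) 6 (by norm_num)),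
      he, he, he, hone] at this
    nlinarith

/-- Third, fourth and sixth moments of a centred i.i.d. sum. -/
theorem sum_higher_moments {G : Measure E} [IsProbabilityMeasure G] {Z : E → ℝ}
    (hZ : MemLp Z (6 : ℕ) G) (h0 : ∫ x, Z x ∂G = 0) (n : ℕ) :
    ∫ u : Fin n → E, (∑ i, Z (u i)) ^ 3 ∂(Measure.pi fun _ => G) = n * ∫ x, Z x ^ 3 ∂G ∧
    ∫ u : Fin n → E, (∑ i, Z (u i)) ^ 4 ∂(Measure.pi fun _ => G)
      ≤ 3 * n ^ 2 * ∫ x, Z x ^ 4 ∂G ∧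
    ∫ u : Fin n → E, (∑ i, Z (u i)) ^ 6 ∂(Measure.pi fun _ => G)
      ≤ 15 * n ^ 3 * ∫ x, Z x ^ 6 ∂G := by
  obtain ⟨q1, q2, q3⟩ := moment_ineqs hZ
  have p2 : 0 ≤ ∫ x, Z x ^ 2 ∂G := integral_nonneg fun x => by positivity
  have p4 : 0 ≤ ∫ x, Z x ^ 4 ∂G := integral_nonneg fun x => by positivity
  have p6 : 0 ≤ ∫ x, Z x ^ 6 ∂G := integral_nonneg fun x => by positivity
  have hZ2 : MemLp Z (2 : ℕ) G := hZ.mono_exponent (by norm_num)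
  induction n with
  | zero => simp
  | succ n ih =>
    obtain ⟨i1, i2⟩ := sum_second_moment hZ2 h0 n
    obtain ⟨i3, i4, i6⟩ := ih
    have r3 := integral_sum_pow_succ hZ n 3 (by norm_num)
    have r4 := integral_sum_pow_succ hZ n 4 (by norm_num)
    have r6 := integral_sum_pow_succ hZ n 6 (by norm_num)
    simp [Finset.sum_range_succ, i1, i2, i3, h0] at r3 r4 r6
    norm_num [Nat.choose] at r3 r4 r6
    refine ⟨?_, ?_, ?_⟩
    · rw [r3]; push_cast; ring
    · rw [r4]; push_cast
      have hn : (0 : ℝ) ≤ n := Nat.cast_nonneg n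
      have := mul_le_mul_of_nonneg_left q2 hn
      nlinarith
    · rw [r6]; push_cast
      have hn : (0 : ℝ) ≤ n := Nat.cast_nonneg n
      have a1 := mul_le_mul_of_nonneg_left q1 hn
      have a2 := mul_le_mul_of_nonneg_left q1 (sq_nonneg (n : ℝ))
      have a3 := mul_le_mul_of_nonneg_left q3 hn
      have a4 := mul_le_mul_of_nonneg_left i4 p2
      have a5 := mul_nonneg hn p6
      have a6 := mul_nonneg (sq_nonneg (n : ℝ)) p6
      nlinarith

end Moments

/-! ### Characteristic function of one block -/

section Block

variable {E : Type*} [MeasurableSpace E]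

/-- The sample mean `N⁻¹ ∑ Z(uᵢ)`. -/
noncomputable def smean {E : Type*} (N : ℕ) (Z : E → ℝ) (u : Fin N → E) : ℝ :=
  (N : ℝ)⁻¹ * ∑ i, Z (u i)

/-- The size of the expansion error of one block of `N` auxiliary variables, at frequency `b`. -/
noncomputable def errN (b : ℝ) (N : ℕ) : ℝ :=
  |b| / N ^ 2 + (b ^ 2 + |b| ^ 3) / (N * √N) + 1 / N ^ 3

theorem memLp_smean {G : Measure E} [IsProbabilityMeasure G] {Z : E → ℝ} {m : ℕ}
    (hZ : MemLp Z m G) (N : ℕ) : MemLp (smean N Z) m (Measure.pi fun _ : Fin N => G) :=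
  (memLp_sum_pi hZ N).const_mul _

theorem integral_smean_pow {G : Measure E} {Z : E → ℝ} (N k : ℕ) :
    ∫ u, smean N Z u ^ k ∂(Measure.pi fun _ : Fin N => G)
      = ((N : ℝ)⁻¹) ^ k * ∫ u : Fin N → E, (∑ i, Z (u i)) ^ k ∂(Measure.pi fun _ => G) := by
  simp_rw [smean, mul_pow]
  rw [integral_const_mul]

variable {G : Measure E} [IsProbabilityMeasure G] {Z : E → ℝ}

theorem integral_smean (hZ : MemLp Z (2 : ℕ) G) (h0 : ∫ x, Z x ∂G = 0) (N : ℕ) :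
    ∫ u, smean N Z u ∂(Measure.pi fun _ : Fin N => G) = 0 := by
  have := integral_smean_pow (G := G) (Z := Z) N 1
  simp only [pow_one] at this
  rw [this, (sum_second_moment hZ h0 N).1, mul_zero]

theorem integral_smean_sq (hZ : MemLp Z (2 : ℕ) G) (h0 : ∫ x, Z x ∂G = 0) (N : ℕ) (hN : 0 < N) :
    ∫ u, smean N Z u ^ 2 ∂(Measure.pi fun _ : Fin N => G) = (∫ x, Z x ^ 2 ∂G) / N := by
  rw [integral_smean_pow, (sum_second_moment hZ h0 N).2]
  field_simp

theorem low_moments_le (hZ : MemLp Z (6 : ℕ) G) :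
    ∫ x, Z x ^ 2 ∂G ≤ 1 + ∫ x, Z x ^ 6 ∂G ∧ ∫ x, Z x ^ 4 ∂G ≤ 1 + ∫ x, Z x ^ 6 ∂G ∧
    |∫ x, Z x ^ 3 ∂G| ≤ 1 + ∫ x, Z x ^ 6 ∂G := by
  have hi : ∀ k ≤ 6, Integrable (fun x => Z x ^ k) G := fun k hk => integrable_pow_of_memLp hZ hk
  have h1 : ∫ x, (1 + Z x ^ 6) ∂G = 1 + ∫ x, Z x ^ 6 ∂G := by
    rw [integral_add (integrable_const _) (hi 6 le_rfl)]; simp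
  have hi1 : Integrable (fun x => 1 + Z x ^ 6) G := (integrable_const _).add (hi 6 le_rfl)
  rw [← h1]
  refine ⟨integral_mono (hi 2 (by norm_num)) hi1 fun x => ?_,
    integral_mono (hi 4 (by norm_num)) hi1 fun x => ?_, ?_⟩
  · have : 0 ≤ (Z x ^ 2 - 1) ^ 2 * (Z x ^ 2 + 2) := by positivity
    have : 0 ≤ Z x ^ 2 := by positivity
    simp only
    nlinarith
  · have : 0 ≤ (Z x ^ 2 - 1) ^ 2 * (Z x ^ 2 + 1) := by positivity
    have : 0 ≤ Z x ^ 2 := by positivity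
    simp only
    nlinarith
  · refine (abs_integral_le_integral_abs).trans
      (integral_mono (hi 3 (by norm_num)).abs hi1 fun x => ?_)
    simp only
    rw [abs_le]
    constructor <;> nlinarith [sq_nonneg (Z x ^ 3 - 1), sq_nonneg (Z x ^ 3 + 1)]

theorem integrable_errPoly (hZ : MemLp Z (6 : ℕ) G) (b : ℝ) :
    Integrable (fun x => errPoly b (Z x)) G := by
  have hi : ∀ k ≤ 6, Integrable (fun x => Z x ^ k) G := fun k hk => integrable_pow_of_memLp hZ hk
  unfold errPoly
  refine (((hi 4 (by norm_num)).const_mul _).add ?_).add (hi 6 le_rfl)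
  simp_rw [← abs_pow]
  exact (hi 3 (by norm_num)).abs.const_mul _

/-- The moments of order 3, 4 and 6 of `smean` are of order `N^{-3/2}`, `N⁻²` and `N⁻³`; the absolute
third moment is where `√N` enters. -/
theorem integral_errPoly_smean_le (hZ : MemLp Z (6 : ℕ) G) (h0 : ∫ x, Z x ∂G = 0) (N : ℕ)
    (hN : 0 < N) (b : ℝ) :
    ∫ u, errPoly b (smean N Z u) ∂(Measure.pi fun _ : Fin N => G)
      ≤ 15 * (1 + ∫ x, Z x ^ 6 ∂G) * errN b N := by
  have hS := memLp_smean hZ N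
  have hi : ∀ k ≤ 6, Integrable (fun x => smean N Z x ^ k) (Measure.pi fun _ : Fin N => G) :=
    fun k hk => integrable_pow_of_memLp hS hk
  have hZ2 : MemLp Z (2 : ℕ) G := hZ.mono_exponent (by norm_num)
  have hNr : (0 : ℝ) < N := by exact_mod_cast hN
  have hs : 0 < √(N : ℝ) := Real.sqrt_pos.2 hNr
  have hss : √(N : ℝ) * √(N : ℝ) = N := Real.mul_self_sqrt hNr.le
  obtain ⟨-, m4, m6⟩ := sum_higher_moments hZ h0 N
  obtain ⟨l2, l4, -⟩ := low_moments_le hZ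
  have e2 := integral_smean_sq hZ2 h0 N hN
  have p6 : 0 ≤ ∫ x, Z x ^ 6 ∂G := integral_nonneg fun x => by positivity
  have e4 : ∫ u, smean N Z u ^ 4 ∂(Measure.pi fun _ : Fin N => G)
      ≤ 3 * (1 + ∫ x, Z x ^ 6 ∂G) / N ^ 2 := by
    rw [integral_smean_pow]
    calc _ ≤ ((N : ℝ)⁻¹) ^ 4 * (3 * N ^ 2 * (1 + ∫ x, Z x ^ 6 ∂G)) := by
          gcongr
          exact m4.trans (by gcongr)
      _ = _ := by field_simp
  have e6 : ∫ u, smean N Z u ^ 6 ∂(Measure.pi fun _ : Fin N => G)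
      ≤ 15 * (1 + ∫ x, Z x ^ 6 ∂G) / N ^ 3 := by
    rw [integral_smean_pow]
    calc _ ≤ ((N : ℝ)⁻¹) ^ 6 * (15 * N ^ 3 * (1 + ∫ x, Z x ^ 6 ∂G)) := by
          gcongr
          exact m6.trans (by gcongr; linarith)
      _ = _ := by field_simp
  have hpt : ∀ u, errPoly b (smean N Z u) ≤ |b| * smean N Z u ^ 4
      + (b ^ 2 + |b| ^ 3) * (√N * smean N Z u ^ 4 + (√N)⁻¹ * smean N Z u ^ 2)
      + smean N Z u ^ 6 := by
    intro u
    unfold errPoly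
    have hb3 : 0 ≤ b ^ 2 + |b| ^ 3 := by positivity
    have key : |smean N Z u| ^ 3 ≤ √N * smean N Z u ^ 4 + (√N)⁻¹ * smean N Z u ^ 2 := by
      have a2 : smean N Z u ^ 2 = |smean N Z u| ^ 2 := (sq_abs _).symm
      have a4 : smean N Z u ^ 4 = |smean N Z u| ^ 4 := by
        rw [← abs_pow]; exact (abs_of_nonneg (by positivity)).symm
      rw [a2, a4]
      set e := |smean N Z u|
      have he : 0 ≤ e := abs_nonneg _
      have : √N * e ^ 4 + (√N)⁻¹ * e ^ 2 - e ^ 3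
          = (√N)⁻¹ * e ^ 2 * ((√N * e - 1 / 2) ^ 2 + 3 / 4) := by
        field_simp; ring
      have : 0 ≤ (√N)⁻¹ * e ^ 2 * ((√N * e - 1 / 2) ^ 2 + 3 / 4) := by positivity
      linarith
    gcongr
  have I4 := hi 4 (by norm_num)
  have I2 := hi 2 (by norm_num)
  have I6 := hi 6 le_rfl
  have J : Integrable (fun u => √(N : ℝ) * smean N Z u ^ 4 + (√N)⁻¹ * smean N Z u ^ 2)
      (Measure.pi fun _ : Fin N => G) := (I4.const_mul _).add (I2.const_mul _)
  have K4 : Integrable (fun u => |b| * smean N Z u ^ 4) (Measure.pi fun _ : Fin N => G) :=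
    I4.const_mul _
  have KJ : Integrable (fun u => (b ^ 2 + |b| ^ 3)
      * (√(N : ℝ) * smean N Z u ^ 4 + (√N)⁻¹ * smean N Z u ^ 2))
      (Measure.pi fun _ : Fin N => G) := J.const_mul _
  have KK : Integrable (fun u => |b| * smean N Z u ^ 4 + (b ^ 2 + |b| ^ 3)
      * (√(N : ℝ) * smean N Z u ^ 4 + (√N)⁻¹ * smean N Z u ^ 2))
      (Measure.pi fun _ : Fin N => G) := K4.add KJ
  calc _ ≤ ∫ u, (|b| * smean N Z u ^ 4
      + (b ^ 2 + |b| ^ 3) * (√N * smean N Z u ^ 4 + (√N)⁻¹ * smean N Z u ^ 2)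
      + smean N Z u ^ 6) ∂(Measure.pi fun _ : Fin N => G) :=
        integral_mono (integrable_errPoly hS b)
          (KK.add I6) hpt
    _ = |b| * (∫ u, smean N Z u ^ 4 ∂(Measure.pi fun _ : Fin N => G))
        + (b ^ 2 + |b| ^ 3) * (√N * (∫ u, smean N Z u ^ 4 ∂(Measure.pi fun _ : Fin N => G))
          + (√N)⁻¹ * (∫ u, smean N Z u ^ 2 ∂(Measure.pi fun _ : Fin N => G)))
        + ∫ u, smean N Z u ^ 6 ∂(Measure.pi fun _ : Fin N => G) := by
        rw [integral_add KK I6, integral_add K4 KJ, integral_const_mul, integral_const_mul,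
          integral_add (I4.const_mul _) (I2.const_mul _), integral_const_mul, integral_const_mul]
    _ ≤ |b| * (3 * (1 + ∫ x, Z x ^ 6 ∂G) / N ^ 2)
        + (b ^ 2 + |b| ^ 3) * (√N * (3 * (1 + ∫ x, Z x ^ 6 ∂G) / N ^ 2)
          + (√N)⁻¹ * ((1 + ∫ x, Z x ^ 6 ∂G) / N))
        + 15 * (1 + ∫ x, Z x ^ 6 ∂G) / N ^ 3 := by
        rw [e2]; gcongr
    _ = (1 + ∫ x, Z x ^ 6 ∂G) * (3 * (|b| / N ^ 2) + 4 * ((b ^ 2 + |b| ^ 3) / (N * √N))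
        + 15 * (1 / N ^ 3)) := by
        have h1 : √(N : ℝ) / N ^ 2 = 1 / (N * √N) := by
          rw [div_eq_div_iff (by positivity) (by positivity)]
          rw [show √(N : ℝ) * (N * √N) = (√N * √N) * N by ring, hss]; ring
        have h2 : (√(N : ℝ))⁻¹ / N = 1 / (N * √N) := by field_simp
        calc _ = (1 + ∫ x, Z x ^ 6 ∂G) * (3 * (|b| / N ^ 2)
                + (b ^ 2 + |b| ^ 3) * (3 * (√N / N ^ 2) + (√N)⁻¹ / N) + 15 * (1 / N ^ 3)) := by ring
          _ = _ := by rw [h1, h2]; ring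
    _ ≤ _ := by
        unfold errN
        have c1 : 0 ≤ |b| / N ^ 2 := by positivity
        have c2 : 0 ≤ (b ^ 2 + |b| ^ 3) / (N * √N) := by positivity
        have : 0 ≤ (1 + ∫ x, Z x ^ 6 ∂G) := by linarith
        nlinarith [mul_nonneg this c1, mul_nonneg this c2]

theorem integral_cubic_smean (hZ : MemLp Z (6 : ℕ) G) (h0 : ∫ x, Z x ∂G = 0) (N : ℕ)
    (hN : 0 < N) (d₁ d₂ d₃ : ℂ) :
    Integrable (fun u => 1 + d₁ * (smean N Z u : ℂ) + d₂ * ((smean N Z u ^ 2 : ℝ) : ℂ)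
      + d₃ * ((smean N Z u ^ 3 : ℝ) : ℂ)) (Measure.pi fun _ : Fin N => G) ∧
    ∫ u, (1 + d₁ * (smean N Z u : ℂ) + d₂ * ((smean N Z u ^ 2 : ℝ) : ℂ)
      + d₃ * ((smean N Z u ^ 3 : ℝ) : ℂ)) ∂(Measure.pi fun _ : Fin N => G)
      = 1 + d₂ * ((∫ x, Z x ^ 2 ∂G) / N : ℝ) + d₃ * ((∫ x, Z x ^ 3 ∂G) / N ^ 2 : ℝ) := by
  have hS := memLp_smean hZ N
  have hi : ∀ k ≤ 6, Integrable (fun x => ((smean N Z x ^ k : ℝ) : ℂ))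
      (Measure.pi fun _ : Fin N => G) :=
    fun k hk => (integrable_pow_of_memLp hS hk).ofReal
  have hZ2 : MemLp Z (2 : ℕ) G := hZ.mono_exponent (by norm_num)
  have i1 : Integrable (fun x => (smean N Z x : ℂ)) (Measure.pi fun _ : Fin N => G) := by
    simpa using hi 1 (by norm_num)
  have i2 := hi 2 (by norm_num)
  have i3 := hi 3 (by norm_num)
  have j0 : Integrable (fun _ : Fin N → E => (1 : ℂ)) (Measure.pi fun _ : Fin N => G) :=
    integrable_const _
  have k1 : Integrable (fun u => 1 + d₁ * (smean N Z u : ℂ)) (Measure.pi fun _ : Fin N => G) :=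
    j0.add (i1.const_mul _)
  have k2 : Integrable (fun u => 1 + d₁ * (smean N Z u : ℂ) + d₂ * ((smean N Z u ^ 2 : ℝ) : ℂ))
      (Measure.pi fun _ : Fin N => G) := k1.add (i2.const_mul _)
  refine ⟨k2.add (i3.const_mul _), ?_⟩
  rw [integral_add k2 (i3.const_mul _), integral_add k1 (i2.const_mul _),
    integral_add j0 (i1.const_mul _), integral_const_mul, integral_const_mul, integral_const_mul,
    integral_complex_ofReal, integral_complex_ofReal, integral_complex_ofReal, integral_smean hZ2 h0,
    integral_smean_sq hZ2 h0 N hN, integral_smean_pow, (sum_higher_moments hZ h0 N).1]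
  simp
  left
  field_simp

/-- Characteristic function of the log-likelihood estimate of one block. -/
theorem block_charFun (hZm : Measurable Z) (hZ : MemLp Z (6 : ℕ) G) (h0 : ∫ x, Z x ∂G = 0) (N : ℕ)
    (hN : 0 < N) (b : ℝ) :
    ‖∫ u, Complex.exp (Complex.I * (b * Real.log (1 + smean N Z u) : ℝ))
        ∂(Measure.pi fun _ : Fin N => G)
      - (1 + -((Complex.I * b + (b : ℂ) ^ 2) * ((∫ x, Z x ^ 2 ∂G) / (2 * N) : ℝ)))‖
      ≤ 4000 * (1 + ∫ x, Z x ^ 6 ∂G) * errN b N := by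
  obtain ⟨hintg, hval⟩ := integral_cubic_smean hZ h0 N hN (Complex.I * b)
    (-(Complex.I * b) / 2 - (b : ℂ) ^ 2 / 2) (Complex.I * b / 3)
  have hm : Measurable (smean N Z) := by unfold smean; fun_prop
  have hE : Integrable (fun u => Complex.exp (Complex.I * (b * Real.log (1 + smean N Z u) : ℝ)))
      (Measure.pi fun _ : Fin N => G) := by
    refine Integrable.of_bound (C := 1) (Measurable.aestronglyMeasurable (by fun_prop)) (ae_of_all _ fun u => ?_)
    rw [mul_comm, Complex.norm_exp_ofReal_mul_I]
  have hdiff : ‖∫ u, Complex.exp (Complex.I * (b * Real.log (1 + smean N Z u) : ℝ))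
        ∂(Measure.pi fun _ : Fin N => G) - (1 + (-(Complex.I * b) / 2 - (b : ℂ) ^ 2 / 2) *
          ((∫ x, Z x ^ 2 ∂G) / N : ℝ) + Complex.I * b / 3 * ((∫ x, Z x ^ 3 ∂G) / N ^ 2 : ℝ))‖
      ≤ 128 * ∫ u, errPoly b (smean N Z u) ∂(Measure.pi fun _ : Fin N => G) := by
    rw [← hval, ← integral_sub hE hintg, ← integral_const_mul]
    refine norm_integral_le_of_norm_le ((integrable_errPoly (memLp_smean hZ N) b).const_mul _)
      (ae_of_all _ fun u => ?_)
    refine (le_of_eq ?_).trans (norm_cexp_log_sub_le b (smean N Z u))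
    congr 2
    push_cast; ring
  have hI := integral_errPoly_smean_le hZ h0 N hN b
  obtain ⟨-, -, l3⟩ := low_moments_le hZ
  have p6 : 0 ≤ ∫ x, Z x ^ 6 ∂G := integral_nonneg fun x => by positivity
  have h3 : ‖Complex.I * b / 3 * ((∫ x, Z x ^ 3 ∂G) / N ^ 2 : ℝ)‖
      ≤ (1 + ∫ x, Z x ^ 6 ∂G) * (|b| / N ^ 2) := by
    rw [norm_mul, norm_div, norm_mul, Complex.norm_I, Complex.norm_real, Complex.norm_real,
      Real.norm_eq_abs, Real.norm_eq_abs, abs_div, one_mul, abs_of_nonneg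
      (by positivity : (0 : ℝ) ≤ (N : ℝ) ^ 2)]
    norm_num
    calc |b| / 3 * (|∫ x, Z x ^ 3 ∂G| / N ^ 2) ≤ |b| / 1 * ((1 + ∫ x, Z x ^ 6 ∂G) / N ^ 2) := by
          gcongr; norm_num
      _ = _ := by ring
  have hle : |b| / N ^ 2 ≤ errN b N := by
    unfold errN
    have : 0 ≤ (b ^ 2 + |b| ^ 3) / (N * √N) + 1 / N ^ 3 := by positivity
    linarith
  have hle' := mul_le_mul_of_nonneg_left hle (by linarith : 0 ≤ 1 + ∫ x, Z x ^ 6 ∂G)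
  have hErr : 0 ≤ (1 + ∫ x, Z x ^ 6 ∂G) * errN b N := by
    refine mul_nonneg (by linarith) ?_
    unfold errN; positivity
  refine (norm_sub_le_norm_sub_add_norm_sub _ _ _).trans
    ((add_le_add hdiff (d := ‖Complex.I * b / 3 * ((∫ x, Z x ^ 3 ∂G) / N ^ 2 : ℝ)‖)
      (le_of_eq ?_)).trans ?_)
  · congr 1; push_cast; field_simp; ring
  · linarith

/-- The same for the tilted law of the block. The first-order term is the same as in
`block_charFun`: tilting shifts the mean of the log-likelihood estimate from
`-γ²/(2N)` to `γ²/(2N)`, and it enters with the opposite sign. -/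
theorem block_charFun_tilt (hZm : Measurable Z) (hZ : MemLp Z (6 : ℕ) G) (h0 : ∫ x, Z x ∂G = 0)
    (N : ℕ) (hN : 0 < N) (b : ℝ) :
    ‖∫ u, ((1 + smean N Z u : ℝ) : ℂ)
        * Complex.exp (Complex.I * (-b * Real.log (1 + smean N Z u) : ℝ))
        ∂(Measure.pi fun _ : Fin N => G)
      - (1 + -((Complex.I * b + (b : ℂ) ^ 2) * ((∫ x, Z x ^ 2 ∂G) / (2 * N) : ℝ)))‖
      ≤ 4000 * (1 + ∫ x, Z x ^ 6 ∂G) * errN b N := by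
  obtain ⟨hintg, hval⟩ := integral_cubic_smean hZ h0 N hN (1 - Complex.I * b)
    (-(Complex.I * b) / 2 - (b : ℂ) ^ 2 / 2) (Complex.I * b / 6)
  have hm : Measurable (smean N Z) := by unfold smean; fun_prop
  have hE : Integrable (fun u => ((1 + smean N Z u : ℝ) : ℂ)
        * Complex.exp (Complex.I * (-b * Real.log (1 + smean N Z u) : ℝ)))
      (Measure.pi fun _ : Fin N => G) := by
    have h1 : Integrable (fun u => ((1 + smean N Z u : ℝ) : ℂ))
        (Measure.pi fun _ : Fin N => G) := by
      refine Integrable.ofReal ((integrable_const _).add ?_)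
      simpa using integrable_pow_of_memLp (memLp_smean hZ N) (k := 1) (by norm_num)
    refine h1.mul_bdd (c := 1) (Measurable.aestronglyMeasurable (by fun_prop)) (ae_of_all _ fun u => ?_)
    rw [mul_comm, Complex.norm_exp_ofReal_mul_I]
  have hdiff : ‖∫ u, ((1 + smean N Z u : ℝ) : ℂ)
        * Complex.exp (Complex.I * (-b * Real.log (1 + smean N Z u) : ℝ))
        ∂(Measure.pi fun _ : Fin N => G) - (1 + (-(Complex.I * b) / 2 - (b : ℂ) ^ 2 / 2) *
          ((∫ x, Z x ^ 2 ∂G) / N : ℝ) + Complex.I * b / 6 * ((∫ x, Z x ^ 3 ∂G) / N ^ 2 : ℝ))‖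
      ≤ 256 * ∫ u, errPoly b (smean N Z u) ∂(Measure.pi fun _ : Fin N => G) := by
    rw [← hval, ← integral_sub hE hintg, ← integral_const_mul]
    refine norm_integral_le_of_norm_le ((integrable_errPoly (memLp_smean hZ N) b).const_mul _)
      (ae_of_all _ fun u => ?_)
    have hneg : errPoly (-b) (smean N Z u) = errPoly b (smean N Z u) := by simp [errPoly]
    rw [← hneg]
    refine (le_of_eq ?_).trans (norm_tilt_cexp_log_sub_le (-b) (smean N Z u))
    congr 2
    push_cast; ring
  have hI := integral_errPoly_smean_le hZ h0 N hN b
  obtain ⟨-, -, l3⟩ := low_moments_le hZ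
  have p6 : 0 ≤ ∫ x, Z x ^ 6 ∂G := integral_nonneg fun x => by positivity
  have h3 : ‖Complex.I * b / 6 * ((∫ x, Z x ^ 3 ∂G) / N ^ 2 : ℝ)‖
      ≤ (1 + ∫ x, Z x ^ 6 ∂G) * (|b| / N ^ 2) := by
    rw [norm_mul, norm_div, norm_mul, Complex.norm_I, Complex.norm_real, Complex.norm_real,
      Real.norm_eq_abs, Real.norm_eq_abs, abs_div, one_mul, abs_of_nonneg
      (by positivity : (0 : ℝ) ≤ (N : ℝ) ^ 2)]
    norm_num
    calc |b| / 6 * (|∫ x, Z x ^ 3 ∂G| / N ^ 2) ≤ |b| / 1 * ((1 + ∫ x, Z x ^ 6 ∂G) / N ^ 2) := by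
          gcongr; norm_num
      _ = _ := by ring
  have hle : |b| / N ^ 2 ≤ errN b N := by
    unfold errN
    have : 0 ≤ (b ^ 2 + |b| ^ 3) / (N * √N) + 1 / N ^ 3 := by positivity
    linarith
  have hle' := mul_le_mul_of_nonneg_left hle (by linarith : 0 ≤ 1 + ∫ x, Z x ^ 6 ∂G)
  have hErr : 0 ≤ (1 + ∫ x, Z x ^ 6 ∂G) * errN b N := by
    refine mul_nonneg (by linarith) ?_
    unfold errN; positivity
  refine (norm_sub_le_norm_sub_add_norm_sub _ _ _).trans
    ((add_le_add hdiff (d := ‖Complex.I * b / 6 * ((∫ x, Z x ^ 3 ∂G) / N ^ 2 : ℝ)‖)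
      (le_of_eq ?_)).trans ?_)
  · congr 1; push_cast; field_simp; ring
  · linarith

end Block

/-! ### Products of block characteristic functions -/

/-- For `re x ≤ 0` the exponential has norm at most one, so the quadratic bound is global. -/
theorem norm_exp_sub_one_sub_le_of_re_nonpos {x : ℂ} (hx : x.re ≤ 0) :
    ‖Complex.exp x - (1 + x)‖ ≤ 3 * ‖x‖ ^ 2 := by
  rcases le_or_gt ‖x‖ 1 with h | h
  · have := Complex.norm_exp_sub_one_sub_id_le h
    rw [← sub_sub]
    nlinarith [sq_nonneg ‖x‖]
  · have h1 : ‖Complex.exp x‖ ≤ 1 := by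
      rw [Complex.norm_exp]; exact Real.exp_le_one_iff.2 hx
    have h2 : ‖1 + x‖ ≤ 1 + ‖x‖ := by simpa using norm_add_le (1 : ℂ) x
    have := norm_sub_le (Complex.exp x) (1 + x)
    nlinarith

theorem norm_prod_sub_prod_le {ι : Type*} (s : Finset ι) (z w : ι → ℂ) (hz : ∀ i, ‖z i‖ ≤ 1)
    (hw : ∀ i, ‖w i‖ ≤ 1) :
    ‖∏ i ∈ s, z i - ∏ i ∈ s, w i‖ ≤ ∑ i ∈ s, ‖z i - w i‖ := by
  classical
  induction s using Finset.induction_on with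
  | empty => simp
  | insert i s hi ih =>
    rw [Finset.prod_insert hi, Finset.prod_insert hi, Finset.sum_insert hi]
    have e : z i * ∏ j ∈ s, z j - w i * ∏ j ∈ s, w j
        = (z i - w i) * ∏ j ∈ s, z j + w i * (∏ j ∈ s, z j - ∏ j ∈ s, w j) := by ring
    have hp : ‖∏ j ∈ s, z j‖ ≤ 1 := by
      rw [norm_prod]; exact Finset.prod_le_one (fun _ _ => norm_nonneg _) fun j _ => hz j
    rw [e]
    refine (norm_add_le _ _).trans ?_
    rw [norm_mul, norm_mul]
    refine add_le_add ?_ ?_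
    · exact mul_le_of_le_one_right (norm_nonneg _) hp
    · exact (mul_le_of_le_one_left (norm_nonneg _) (hw i)).trans ih

theorem norm_prod_sub_exp_sum_le {ι : Type*} (s : Finset ι) (z x : ι → ℂ) (hz : ∀ i, ‖z i‖ ≤ 1)
    (hx : ∀ i, (x i).re ≤ 0) :
    ‖∏ i ∈ s, z i - Complex.exp (∑ i ∈ s, x i)‖
      ≤ ∑ i ∈ s, (‖z i - (1 + x i)‖ + 3 * ‖x i‖ ^ 2) := by
  rw [Complex.exp_sum]
  refine (norm_prod_sub_prod_le s z _ hz fun i => ?_).trans (Finset.sum_le_sum fun i _ => ?_)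
  · rw [Complex.norm_exp]; exact Real.exp_le_one_iff.2 (hx i)
  · refine (norm_sub_le_norm_sub_add_norm_sub _ (1 + x i) _).trans (add_le_add le_rfl ?_)
    rw [norm_sub_rev]
    exact norm_exp_sub_one_sub_le_of_re_nonpos (hx i)

/-- The rate, for one block of `N` auxiliary variables, of the approximation of the characteristic
function at frequencies of order `a`. -/
noncomputable def eta (a : ℝ) (N : ℕ) : ℝ := a / N ^ 2 + a ^ 2 / (N * √N) + 1 / N ^ 3

theorem eta_nonneg {a : ℝ} (ha : 0 ≤ a) (N : ℕ) : 0 ≤ eta a N := by unfold eta; positivity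

theorem errN_le {a : ℝ} (ha : 0 ≤ a) (ha1 : a ≤ 1) (s : ℝ) (N : ℕ) :
    errN (s * a) N ≤ (1 + |s| + s ^ 2 + |s| ^ 3) * eta a N := by
  unfold errN eta
  rw [abs_mul, abs_of_nonneg ha]
  have h3 : a ^ 3 ≤ a ^ 2 := pow_le_pow_of_le_one ha ha1 (by norm_num)
  have k1 : |s| * a / N ^ 2 = |s| * (a / N ^ 2) := by ring
  have k2 : ((s * a) ^ 2 + (|s| * a) ^ 3) / (N * √N)
      ≤ (s ^ 2 + |s| ^ 3) * (a ^ 2 / (N * √N)) := by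
    rw [← mul_div_assoc]
    gcongr
    have : (|s| * a) ^ 3 ≤ |s| ^ 3 * a ^ 2 := by rw [mul_pow]; gcongr
    nlinarith
  have c1 : 0 ≤ a / (N : ℝ) ^ 2 := by positivity
  have c2 : 0 ≤ a ^ 2 / ((N : ℝ) * √N) := by positivity
  have c3 : 0 ≤ 1 / (N : ℝ) ^ 3 := by positivity
  have s1 := abs_nonneg s
  have s2 := sq_nonneg s
  have s3 := pow_nonneg s1 3
  have m1 := mul_nonneg s2 c1
  have m2 := mul_nonneg s3 c1
  have m3 := mul_nonneg s1 c2
  have m4 := mul_nonneg s1 c3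
  have m5 := mul_nonneg s2 c3
  have m6 := mul_nonneg s3 c3
  rw [k1]
  nlinarith

section Blocks

variable {E : Type*} [MeasurableSpace E] {G : Measure E} [IsProbabilityMeasure G]

/-- A centred weight `Z = ϖ(y, ·; ϑ) - 1` at one observation: mean zero, at least `-1`, with finite
sixth moment under the law `G` of one auxiliary variable. -/
structure GoodWeight (G : Measure E) (Z : E → ℝ) : Prop where
  meas : Measurable Z
  memLp : MemLp Z (6 : ℕ) G
  mean : ∫ x, Z x ∂G = 0
  ge : ∀ x, -1 ≤ Z x

omit [IsProbabilityMeasure G] in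
theorem GoodWeight.one_add_smean_nonneg {Z : E → ℝ} (h : GoodWeight G Z) (N : ℕ) (u : Fin N → E) :
    0 ≤ 1 + smean N Z u := by
  have h1 : ∑ _i : Fin N, (-1 : ℝ) ≤ ∑ i, Z (u i) := Finset.sum_le_sum fun i _ => h.ge _
  simp only [Finset.sum_const, Finset.card_univ, Fintype.card_fin, nsmul_eq_mul] at h1
  unfold smean
  rcases Nat.eq_zero_or_pos N with rfl | hN
  · simp
  · have hN' : (0 : ℝ) < N := by exact_mod_cast hN
    have := mul_le_mul_of_nonneg_left h1 (inv_nonneg.2 hN'.le)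
    rw [← mul_assoc, inv_mul_cancel₀ hN'.ne'] at this
    linarith

omit [IsProbabilityMeasure G] in
theorem GoodWeight.measurable_smean {Z : E → ℝ} (h : GoodWeight G Z) (N : ℕ) :
    Measurable (smean N Z) := by
  have := h.meas
  unfold smean; fun_prop

theorem GoodWeight.integrable_one_add_smean {Z : E → ℝ} (h : GoodWeight G Z) (N : ℕ) :
    Integrable (fun u => 1 + smean N Z u) (Measure.pi fun _ : Fin N => G) := by
  refine (integrable_const _).add ?_
  simpa using integrable_pow_of_memLp (memLp_smean h.memLp N) (k := 1) (by norm_num)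

theorem GoodWeight.integral_one_add_smean {Z : E → ℝ} (h : GoodWeight G Z) (N : ℕ) :
    ∫ u, (1 + smean N Z u) ∂(Measure.pi fun _ : Fin N => G) = 1 := by
  have hi : Integrable (smean N Z) (Measure.pi fun _ : Fin N => G) := by
    simpa using integrable_pow_of_memLp (memLp_smean h.memLp N) (k := 1) (by norm_num)
  rw [integral_add (integrable_const _) hi, integral_smean (h.memLp.mono_exponent (by norm_num))
    h.mean]
  simp

/-- Characteristic function of `log (1 + smean)`. -/
noncomputable def blockPhi (G : Measure E) (N : ℕ) (Z : E → ℝ) (b : ℝ) : ℂ :=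
  ∫ u, Complex.exp (Complex.I * (b * Real.log (1 + smean N Z u) : ℝ)) ∂(Measure.pi fun _ : Fin N => G)

/-- Characteristic function of `-log (1 + smean)` under the law with density `1 + smean`. -/
noncomputable def blockPhiTilt (G : Measure E) (N : ℕ) (Z : E → ℝ) (b : ℝ) : ℂ :=
  ∫ u, ((1 + smean N Z u : ℝ) : ℂ) * Complex.exp (Complex.I * (-b * Real.log (1 + smean N Z u) : ℝ))
    ∂(Measure.pi fun _ : Fin N => G)

theorem norm_blockPhi_le (N : ℕ) (Z : E → ℝ) (b : ℝ) : ‖blockPhi G N Z b‖ ≤ 1 := by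
  refine (norm_integral_le_of_norm_le_const (C := 1) (ae_of_all _ fun u => ?_)).trans (by simp)
  rw [mul_comm, Complex.norm_exp_ofReal_mul_I]

theorem GoodWeight.norm_blockPhiTilt_le {Z : E → ℝ} (h : GoodWeight G Z) (N : ℕ) (b : ℝ) :
    ‖blockPhiTilt G N Z b‖ ≤ 1 := by
  refine (norm_integral_le_of_norm_le (h.integrable_one_add_smean N)
    (ae_of_all _ fun u => ?_)).trans (h.integral_one_add_smean N).le
  rw [norm_mul, mul_comm Complex.I, Complex.norm_exp_ofReal_mul_I, mul_one, Complex.norm_real,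
    Real.norm_eq_abs, abs_of_nonneg (h.one_add_smean_nonneg N u)]

/-- The common part of the comparison of a product of block characteristic functions with the
exponential of the sum of the leading terms. -/
theorem norm_prod_block_sub_exp_le {ι : Type*} [Fintype ι] {Z : ι → E → ℝ}
    (hZ : ∀ t, GoodWeight G (Z t)) {N : ℕ} (hN : 0 < N) (z : ι → ℂ) (hz : ∀ t, ‖z t‖ ≤ 1)
    {a : ℝ} (ha : 0 ≤ a) (ha1 : a ≤ 1) (s : ℝ)
    (happ : ∀ t, ‖z t - (1 + -((Complex.I * (s * a : ℝ) + ((s * a : ℝ) : ℂ) ^ 2)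
        * ((∫ x, Z t x ^ 2 ∂G) / (2 * N) : ℝ)))‖
      ≤ 4000 * (1 + ∫ x, Z t x ^ 6 ∂G) * errN (s * a) N) :
    ‖∏ t, z t - Complex.exp (-((Complex.I * (s * a : ℝ) + ((s * a : ℝ) : ℂ) ^ 2)
        * ((∑ t, ∫ x, Z t x ^ 2 ∂G) / (2 * N) : ℝ)))‖
      ≤ 4003 * (1 + |s| + s ^ 2 + |s| ^ 3 + s ^ 4) * eta a N * ∑ t, (1 + ∫ x, Z t x ^ 6 ∂G) := by
  have hN' : (0 : ℝ) < N := by exact_mod_cast hN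
  have hsum : Complex.exp (-((Complex.I * (s * a : ℝ) + ((s * a : ℝ) : ℂ) ^ 2)
        * ((∑ t, ∫ x, Z t x ^ 2 ∂G) / (2 * N) : ℝ)))
      = Complex.exp (∑ t, -((Complex.I * (s * a : ℝ) + ((s * a : ℝ) : ℂ) ^ 2)
        * ((∫ x, Z t x ^ 2 ∂G) / (2 * N) : ℝ))) := by
    rw [Finset.sum_neg_distrib, ← Finset.mul_sum, Finset.sum_div, Complex.ofReal_sum]
  rw [hsum]
  refine (norm_prod_sub_exp_sum_le Finset.univ z _ hz fun t => ?_).trans ?_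
  · have h2 : 0 ≤ ∫ x, Z t x ^ 2 ∂G := integral_nonneg fun x => by positivity
    have : 0 ≤ (s * a) ^ 2 * ((∫ x, Z t x ^ 2 ∂G) / (2 * N)) := by positivity
    simp only [Complex.neg_re, Complex.add_re, Complex.mul_re, Complex.I_re,
      Complex.I_im, Complex.ofReal_re, Complex.ofReal_im, ← Complex.ofReal_pow]
    linarith
  · rw [Finset.mul_sum]
    refine Finset.sum_le_sum fun t _ => ?_
    have h2 : 0 ≤ ∫ x, Z t x ^ 2 ∂G := integral_nonneg fun x => by positivity
    have h6 : 0 ≤ ∫ x, Z t x ^ 6 ∂G := integral_nonneg fun x => by positivity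
    have e0 := eta_nonneg ha N
    have hv : (∫ x, Z t x ^ 2 ∂G) ^ 2 ≤ 1 + ∫ x, Z t x ^ 6 ∂G :=
      (moment_ineqs (hZ t).memLp).2.1.trans (low_moments_le (hZ t).memLp).2.1
    have hx : ‖-((Complex.I * (s * a : ℝ) + ((s * a : ℝ) : ℂ) ^ 2)
        * ((∫ x, Z t x ^ 2 ∂G) / (2 * N) : ℝ))‖ ^ 2 
        ≤ (1 + ∫ x, Z t x ^ 6 ∂G) * ((|s| + s ^ 2) ^ 2 / 4 * eta a N) := by
      have hn : ‖Complex.I * (s * a : ℝ) + ((s * a : ℝ) : ℂ) ^ 2‖ ≤ (|s| + s ^ 2) * a := by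
        refine (norm_add_le _ _).trans ?_
        rw [norm_mul, norm_pow, Complex.norm_I, Complex.norm_real, Real.norm_eq_abs, abs_mul,
          abs_of_nonneg ha, mul_pow, sq_abs]
        have : a ^ 2 ≤ a := by nlinarith
        nlinarith [mul_le_mul_of_nonneg_left this (sq_nonneg s)]
      have ha2 : a ^ 2 / N ^ 2 ≤ eta a N := by
        unfold eta
        have i1 : a ^ 2 / (N : ℝ) ^ 2 ≤ a / N ^ 2 := by gcongr; nlinarith
        have i2 : 0 ≤ a ^ 2 / ((N : ℝ) * √N) + 1 / N ^ 3 := by positivity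
        linarith
      rw [norm_neg, norm_mul, mul_pow, Complex.norm_real, Real.norm_eq_abs, sq_abs]
      calc _ ≤ ((|s| + s ^ 2) * a) ^ 2 * ((∫ x, Z t x ^ 2 ∂G) / (2 * N)) ^ 2 := by gcongr
        _ = (∫ x, Z t x ^ 2 ∂G) ^ 2 * ((|s| + s ^ 2) ^ 2 / 4 * (a ^ 2 / N ^ 2)) := by
            field_simp; ring
        _ ≤ _ := by gcongr
    have hE := errN_le ha ha1 s N
    have s1 := abs_nonneg s
    have s2 := sq_nonneg s
    have s3 := pow_nonneg s1 3
    have hs2 : (|s| + s ^ 2) ^ 2 = s ^ 2 + 2 * |s| ^ 3 + s ^ 4 := by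
      rw [← sq_abs s, show s ^ 4 = |s| ^ 4 by rw [← abs_pow]; exact (abs_of_nonneg (by positivity)).symm]
      ring
    rw [hs2] at hx
    have s4 : 0 ≤ s ^ 4 := by positivity
    set A := 1 + ∫ x, Z t x ^ 6 ∂G with hA
    have hA0 : 0 ≤ A := by linarith
    calc _ ≤ 4000 * A * ((1 + |s| + s ^ 2 + |s| ^ 3) * eta a N)
          + 3 * (A * ((s ^ 2 + 2 * |s| ^ 3 + s ^ 4) / 4 * eta a N)) := by
          refine add_le_add ((happ t).trans ?_) (by linarith)
          gcongr
      _ = (4000 * (1 + |s| + s ^ 2 + |s| ^ 3) + 3 * (s ^ 2 + 2 * |s| ^ 3 + s ^ 4) / 4)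
          * (eta a N * A) := by ring
      _ ≤ (4003 * (1 + |s| + s ^ 2 + |s| ^ 3 + s ^ 4)) * (eta a N * A) := by
          have := mul_nonneg e0 hA0
          gcongr ?_ * _
          linarith
      _ = _ := by ring

/-- Gaussian approximation of the characteristic function of the log-likelihood ratio error for
fixed observations. -/
theorem norm_prod_blocks_sub_exp_le {ι : Type*} [Fintype ι] {Z Z' : ι → E → ℝ}
    (hZ : ∀ t, GoodWeight G (Z t)) (hZ' : ∀ t, GoodWeight G (Z' t)) {N : ℕ} (hN : 0 < N)
    {a : ℝ} (ha : 0 ≤ a) (ha1 : a ≤ 1) (s : ℝ) :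
    ‖(∏ t, blockPhiTilt G N (Z t) (s * a)) * (∏ t, blockPhi G N (Z' t) (s * a))
      - Complex.exp (-((Complex.I * (s * a : ℝ) + ((s * a : ℝ) : ℂ) ^ 2)
        * ((∑ t, (∫ x, Z t x ^ 2 ∂G + ∫ x, Z' t x ^ 2 ∂G)) / (2 * N) : ℝ)))‖
      ≤ 4003 * (1 + |s| + s ^ 2 + |s| ^ 3 + s ^ 4)
        * (eta a N * ∑ t, (2 + ∫ x, Z t x ^ 6 ∂G + ∫ x, Z' t x ^ 6 ∂G)) := by
  have h1 := norm_prod_block_sub_exp_le hZ hN (fun t => blockPhiTilt G N (Z t) (s * a))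
    (fun t => (hZ t).norm_blockPhiTilt_le N _) ha ha1 s
    (fun t => block_charFun_tilt (hZ t).meas (hZ t).memLp (hZ t).mean N hN _)
  have h2 := norm_prod_block_sub_exp_le hZ' hN (fun t => blockPhi G N (Z' t) (s * a))
    (fun t => norm_blockPhi_le N _ _) ha ha1 s
    (fun t => block_charFun (hZ' t).meas (hZ' t).memLp (hZ' t).mean N hN _)
  have hre : ∀ V : ℝ, 0 ≤ V → ‖Complex.exp (-((Complex.I * (s * a : ℝ) + ((s * a : ℝ) : ℂ) ^ 2)
        * (V / (2 * N) : ℝ)))‖ ≤ 1 := by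
    intro V hV
    rw [Complex.norm_exp, Real.exp_le_one_iff]
    have : 0 ≤ (s * a) ^ 2 * (V / (2 * N)) := by positivity
    simp only [Complex.neg_re, Complex.add_re, Complex.mul_re, Complex.I_re,
      Complex.I_im, Complex.ofReal_re, Complex.ofReal_im, ← Complex.ofReal_pow]
    linarith
  have hsplit : Complex.exp (-((Complex.I * (s * a : ℝ) + ((s * a : ℝ) : ℂ) ^ 2)
        * ((∑ t, (∫ x, Z t x ^ 2 ∂G + ∫ x, Z' t x ^ 2 ∂G)) / (2 * N) : ℝ)))
      = Complex.exp (-((Complex.I * (s * a : ℝ) + ((s * a : ℝ) : ℂ) ^ 2)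
        * ((∑ t, ∫ x, Z t x ^ 2 ∂G) / (2 * N) : ℝ)))
       * Complex.exp (-((Complex.I * (s * a : ℝ) + ((s * a : ℝ) : ℂ) ^ 2)
        * ((∑ t, ∫ x, Z' t x ^ 2 ∂G) / (2 * N) : ℝ))) := by
    rw [← Complex.exp_add, Finset.sum_add_distrib, add_div, Complex.ofReal_add]
    congr 1; ring
  rw [hsplit]
  set P1 := ∏ t, blockPhiTilt G N (Z t) (s * a)
  set P2 := ∏ t, blockPhi G N (Z' t) (s * a) with hP2
  set E1 := Complex.exp (-((Complex.I * (s * a : ℝ) + ((s * a : ℝ) : ℂ) ^ 2)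
        * ((∑ t, ∫ x, Z t x ^ 2 ∂G) / (2 * N) : ℝ)))
  set E2 := Complex.exp (-((Complex.I * (s * a : ℝ) + ((s * a : ℝ) : ℂ) ^ 2)
        * ((∑ t, ∫ x, Z' t x ^ 2 ∂G) / (2 * N) : ℝ)))
  have hE1 : ‖E1‖ ≤ 1 := hre _ (Finset.sum_nonneg fun t _ => integral_nonneg fun x => by positivity)
  have hP2' : ‖P2‖ ≤ 1 := by
    rw [hP2, norm_prod]
    exact Finset.prod_le_one (fun _ _ => norm_nonneg _) fun t _ => norm_blockPhi_le N _ _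
  have e : P1 * P2 - E1 * E2 = (P1 - E1) * P2 + E1 * (P2 - E2) := by ring
  rw [e]
  calc _ ≤ ‖P1 - E1‖ * ‖P2‖ + ‖E1‖ * ‖P2 - E2‖ := by
        refine (norm_add_le _ _).trans ?_; rw [norm_mul, norm_mul]
    _ ≤ ‖P1 - E1‖ + ‖P2 - E2‖ := add_le_add (mul_le_of_le_one_right (norm_nonneg _) hP2')
        (mul_le_of_le_one_left (norm_nonneg _) hE1)
    _ ≤ _ := (add_le_add h1 h2).trans_eq ?_
  rw [← mul_add, ← Finset.sum_add_distrib, mul_assoc]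
  congr 2
  refine Finset.sum_congr rfl fun t _ => by ring

end Blocks

/-! ### The tilted law of the arrays -/

section Product

variable {E : Type*} [MeasurableSpace E] {G : Measure E} [IsProbabilityMeasure G]
variable {ι : Type*} [Fintype ι]

/-- The blocks of an i.i.d. array are independent, with law the product of `N` copies of `G`. -/
theorem integral_prod_blocks {κ : Type*} [Fintype κ] {𝕜 : Type*} [RCLike 𝕜]
    (h : ι → (κ → E) → 𝕜) :
    ∫ u : ι × κ → E, ∏ t, h t (fun i => u (t, i)) ∂(Measure.pi fun _ => G)
      = ∏ t, ∫ x, h t x ∂(Measure.pi fun _ : κ => G) := by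
  have hmap := Measure.infinitePi_map_curry (ι := ι) (κ := κ) (fun _ _ => G)
  simp only [Measure.infinitePi_eq_pi] at hmap
  have hmp : MeasurePreserving (MeasurableEquiv.curry ι κ E) (Measure.pi fun _ : ι × κ => G)
      (Measure.pi fun _ : ι => Measure.pi fun _ : κ => G) := ⟨by fun_prop, hmap⟩
  rw [← integral_fintype_prod_eq_prod (𝕜 := 𝕜) h, ← hmp.integral_comp']
  rfl

theorem integrable_prod_blocks {κ : Type*} [Fintype κ]
    {h : ι → (κ → E) → ℝ} (hh : ∀ t, Integrable (h t) (Measure.pi fun _ : κ => G)) :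
    Integrable (fun u : ι × κ → E => ∏ t, h t (fun i => u (t, i))) (Measure.pi fun _ => G) := by
  have hmap := Measure.infinitePi_map_curry (ι := ι) (κ := κ) (fun _ _ => G)
  simp only [Measure.infinitePi_eq_pi] at hmap
  have hmp : MeasurePreserving (MeasurableEquiv.curry ι κ E) (Measure.pi fun _ : ι × κ => G)
      (Measure.pi fun _ : ι => Measure.pi fun _ : κ => G) := ⟨by fun_prop, hmap⟩
  have := Integrable.fintype_prod (𝕜 := ℝ) hh
  exact (hmp.integrable_comp_emb (MeasurableEquiv.measurableEmbedding _)).2 this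

/-- The likelihood ratio of the tilted law of the array, as a function of the array. -/
noncomputable def tiltDens (N : ℕ) (Z : ι → E → ℝ) (u : ι × Fin N → E) : ℝ :=
  ∏ t, (1 + smean N (Z t) (fun i => u (t, i)))

/-- The log-likelihood ratio error, as a function of the two arrays. -/
noncomputable def logRatio (N : ℕ) (Z Z' : ι → E → ℝ) (q : (ι × Fin N → E) × (ι × Fin N → E)) : ℝ :=
  ∑ t, (Real.log (1 + smean N (Z' t) (fun i => q.2 (t, i)))
    - Real.log (1 + smean N (Z t) (fun i => q.1 (t, i))))

/-- The joint law of the two arrays given the observations, the first one being tilted. -/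
noncomputable def tiltLaw (G : Measure E) (N : ℕ) (Z : ι → E → ℝ) :
    Measure ((ι × Fin N → E) × (ι × Fin N → E)) :=
  ((Measure.pi fun _ => G).prod (Measure.pi fun _ => G)).withDensity
    fun q => ENNReal.ofReal (tiltDens N Z q.1)

variable {Z Z' : ι → E → ℝ} (hZ : ∀ t, GoodWeight G (Z t)) (hZ' : ∀ t, GoodWeight G (Z' t))
  (N : ℕ)

include hZ

omit [IsProbabilityMeasure G] in
theorem tiltDens_nonneg (u : ι × Fin N → E) : 0 ≤ tiltDens N Z u :=
  Finset.prod_nonneg fun t _ => (hZ t).one_add_smean_nonneg N _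

omit [IsProbabilityMeasure G] in
theorem measurable_tiltDens : Measurable (tiltDens (ι := ι) N Z) := by
  have := fun t => (hZ t).measurable_smean N
  unfold tiltDens
  fun_prop

theorem integrable_tiltDens : Integrable (tiltDens N Z) (Measure.pi fun _ : ι × Fin N => G) :=
  integrable_prod_blocks fun t => (hZ t).integrable_one_add_smean N

theorem integral_tiltDens : ∫ u, tiltDens N Z u ∂(Measure.pi fun _ : ι × Fin N => G) = 1 := by
  unfold tiltDens
  rw [integral_prod_blocks (fun t x => 1 + smean N (Z t) x)]
  exact Finset.prod_eq_one fun t _ => (hZ t).integral_one_add_smean N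

omit [IsProbabilityMeasure G] in
theorem integral_tiltLaw {F : Type*} [NormedAddCommGroup F] [NormedSpace ℝ F]
    (g : (ι × Fin N → E) × (ι × Fin N → E) → F) :
    ∫ q, g q ∂(tiltLaw G N Z)
      = ∫ q, tiltDens N Z q.1 • g q
        ∂((Measure.pi fun _ : ι × Fin N => G).prod (Measure.pi fun _ => G)) := by
  have hm : Measurable fun q : (ι × Fin N → E) × (ι × Fin N → E) =>
      ENNReal.ofReal (tiltDens N Z q.1) :=
    ((measurable_tiltDens hZ N).comp measurable_fst).ennreal_ofReal
  rw [tiltLaw, integral_withDensity_eq_integral_toReal_smul hm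
    (ae_of_all _ fun _ => ENNReal.ofReal_lt_top)]
  simp_rw [ENNReal.toReal_ofReal (tiltDens_nonneg hZ N _)]

theorem isProbabilityMeasure_tiltLaw : IsProbabilityMeasure (tiltLaw G N Z) := by
  constructor
  have hi : Integrable (fun q : (ι × Fin N → E) × (ι × Fin N → E) => tiltDens N Z q.1)
      ((Measure.pi fun _ => G).prod (Measure.pi fun _ => G)) := (integrable_tiltDens hZ N).comp_fst _
  rw [tiltLaw, withDensity_apply _ MeasurableSet.univ, Measure.restrict_univ,
    ← ofReal_integral_eq_lintegral_ofReal hi (ae_of_all _ fun q => tiltDens_nonneg hZ N _),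
    integral_fun_fst (fun u => tiltDens N Z u), integral_tiltDens hZ N]
  simp

include hZ'

omit [IsProbabilityMeasure G] in
theorem measurable_logRatio : Measurable (logRatio N Z Z') := by
  have h1 := fun t => (hZ t).measurable_smean N
  have h2 := fun t => (hZ' t).measurable_smean N
  unfold logRatio
  fun_prop

theorem charFun_tiltLaw (a c s : ℝ) :
    charFun ((tiltLaw G N Z).map fun q => a * logRatio N Z Z' q + c) s
      = (∏ t, blockPhiTilt G N (Z t) (s * a)) * (∏ t, blockPhi G N (Z' t) (s * a))
        * Complex.exp (Complex.I * (s * c : ℝ)) := by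
  have hl := measurable_logRatio hZ hZ' N
  rw [charFun_apply_real, integral_map (by fun_prop)
    (Measurable.aestronglyMeasurable (by fun_prop)), integral_tiltLaw hZ N]
  have key : ∀ q : (ι × Fin N → E) × (ι × Fin N → E),
      tiltDens N Z q.1 • Complex.exp (s * ((a * logRatio N Z Z' q + c : ℝ) : ℂ) * Complex.I)
      = (∏ t, ((1 + smean N (Z t) (fun i => q.1 (t, i)) : ℝ) : ℂ)
          * Complex.exp (Complex.I
            * (-(s * a) * Real.log (1 + smean N (Z t) (fun i => q.1 (t, i))) : ℝ)))
        * (∏ t, Complex.exp (Complex.I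
            * ((s * a) * Real.log (1 + smean N (Z' t) (fun i => q.2 (t, i))) : ℝ)))
        * Complex.exp (Complex.I * (s * c : ℝ)) := by
    intro q
    have assoc : ∀ p x y z : ℂ, p * x * y * z = p * (x * y * z) := fun p x y z => by ring
    rw [Finset.prod_mul_distrib, ← Complex.exp_sum, ← Complex.exp_sum, assoc,
      ← Complex.exp_add, ← Complex.exp_add, tiltDens, Complex.real_smul, Complex.ofReal_prod,
      ← Finset.mul_sum, ← Finset.mul_sum, ← Complex.ofReal_sum, ← Complex.ofReal_sum,
      ← Finset.mul_sum, ← Finset.mul_sum, logRatio, Finset.sum_sub_distrib]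
    congr 2
    push_cast
    ring
  simp_rw [key]
  rw [integral_mul_const, integral_prod_mul
    (fun u : ι × Fin N → E => ∏ t, ((1 + smean N (Z t) (fun i => u (t, i)) : ℝ) : ℂ)
          * Complex.exp (Complex.I
            * (-(s * a) * Real.log (1 + smean N (Z t) (fun i => u (t, i))) : ℝ)))
    (fun u : ι × Fin N → E => ∏ t, Complex.exp (Complex.I
            * ((s * a) * Real.log (1 + smean N (Z' t) (fun i => u (t, i))) : ℝ)))]
  congr 2
  · exact integral_prod_blocks (G := G) (fun t x => ((1 + smean N (Z t) x : ℝ) : ℂ)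
          * Complex.exp (Complex.I * (-(s * a) * Real.log (1 + smean N (Z t) x) : ℝ)))
  · exact integral_prod_blocks (G := G) (fun t x =>
      Complex.exp (Complex.I * ((s * a) * Real.log (1 + smean N (Z' t) x) : ℝ)))

end Product

/-! ### Conditional Gaussian approximation -/

/-- A quantitative form of Lévy's continuity theorem, with all parameters other than the size of
the error uniform; it is what turns bounds holding for most observations into convergence in
probability. -/
theorem exists_delta_of_charFun_le (σ : ℝ) (hσ : 0 ≤ σ) (C : ℝ → ℝ)
    (f : BoundedContinuousFunction ℝ ℝ) {ε : ℝ} (hε : 0 < ε) :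
    ∃ δ : ℝ, 0 < δ ∧ ∀ (ν : Measure ℝ) [IsProbabilityMeasure ν] (a D q : ℝ), 0 ≤ a → a ≤ 1 →
      (∀ s : ℝ, ‖charFun ν s - Complex.exp (-(s ^ 2 * σ : ℝ) - (Complex.I * s + (s ^ 2 * a : ℝ)) * D)‖
        ≤ C s * q) → 0 ≤ q → q + D ^ 2 < δ →
      |∫ x, f x ∂ν - ∫ x, f x ∂(gaussianReal 0 (Real.toNNReal (2 * σ)))| < ε := by
  -- a counterexample for every `1 / (n + 1)` would contradict the qualitative continuity theorem
  by_contra! hcon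
  choose ν hν a D q ha ha1 hch hq hlt hge using fun n : ℕ =>
    hcon (1 / ((n : ℝ) + 1)) Nat.one_div_pos_of_nat
  have h0 := tendsto_one_div_add_atTop_nhds_zero_nat (𝕜 := ℝ)
  have hq0 : Tendsto q atTop (nhds 0) := squeeze_zero hq
    (fun n => by nlinarith [hlt n, sq_nonneg (D n)]) h0
  have hD0 : Tendsto D atTop (nhds 0) := by
    have : Tendsto (fun n => D n ^ 2) atTop (nhds 0) := squeeze_zero (fun n => sq_nonneg _)
      (fun n => by linarith [hlt n, hq n]) h0
    have h2 := (Real.continuous_sqrt.tendsto 0).comp this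
    rw [Real.sqrt_zero] at h2
    refine squeeze_zero_norm (fun n => ?_) h2
    rw [Function.comp, Real.sqrt_sq_eq_abs, Real.norm_eq_abs]
  have haD : Tendsto (fun n => a n * D n) atTop (nhds 0) := by
    refine squeeze_zero_norm (fun n => ?_) (tendsto_zero_iff_norm_tendsto_zero.1 hD0)
    rw [norm_mul, Real.norm_eq_abs, abs_of_nonneg (ha n)]
    exact mul_le_of_le_one_left (norm_nonneg _) (ha1 n)
  let ν' : ℕ → ProbabilityMeasure ℝ := fun n => ⟨ν n, hν n⟩
  let γ' : ProbabilityMeasure ℝ := ⟨gaussianReal 0 (Real.toNNReal (2 * σ)), inferInstance⟩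
  have hlim : Tendsto ν' atTop (nhds γ') := by
    refine ProbabilityMeasure.tendsto_iff_tendsto_charFun.2 fun s => ?_
    have hg : charFun (γ' : Measure ℝ) s = Complex.exp (-(s ^ 2 * σ : ℝ)) := by
      change charFun (gaussianReal 0 (Real.toNNReal (2 * σ))) s = _
      rw [charFun_gaussianReal, Real.coe_toNNReal _ (by positivity)]
      congr 1; push_cast; ring
    rw [hg]
    have hexp : Tendsto (fun n => Complex.exp (-(s ^ 2 * σ : ℝ)
        - (Complex.I * s + (s ^ 2 * a n : ℝ)) * D n)) atTop
        (nhds (Complex.exp (-(s ^ 2 * σ : ℝ)))) := by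
      refine (Complex.continuous_exp.tendsto _).comp ?_
      have h1 : Tendsto (fun n => (D n : ℂ)) atTop (nhds 0) := by
        exact Tendsto.comp (g := fun x : ℝ => (x : ℂ)) (Complex.continuous_ofReal.tendsto' 0 0 rfl) hD0
      have h2 : Tendsto (fun n => ((a n * D n : ℝ) : ℂ)) atTop (nhds 0) := by
        exact Tendsto.comp (g := fun x : ℝ => (x : ℂ)) (Complex.continuous_ofReal.tendsto' 0 0 rfl) haD
      have := ((h1.const_mul (Complex.I * s)).add (h2.const_mul ((s : ℂ) ^ 2))).const_sub
        (-((s ^ 2 * σ : ℝ) : ℂ))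
      simp only [mul_zero, add_zero, sub_zero] at this
      refine this.congr fun n => ?_
      push_cast; ring
    have hz : Tendsto (fun n => charFun (ν n) s - Complex.exp (-(s ^ 2 * σ : ℝ)
        - (Complex.I * s + (s ^ 2 * a n : ℝ)) * D n)) atTop (nhds 0) :=
      squeeze_zero_norm (fun n => hch n s) (by simpa using hq0.const_mul (C s))
    have := hz.add hexp
    simp only [sub_add_cancel, zero_add] at this
    exact this
  have hf := (ProbabilityMeasure.tendsto_iff_forall_integral_tendsto.1 hlim) f
  have := (tendsto_iff_dist_tendsto_zero.1 hf).eventually (gt_mem_nhds hε)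
  obtain ⟨n, hn⟩ := this.exists
  rw [Real.dist_eq] at hn
  exact absurd (hge n) (not_le.2 hn)

section

variable {E : Type*} [MeasurableSpace E] {G : Measure E} [IsProbabilityMeasure G]
variable {ι : Type*} [Fintype ι] {Z Z' : ι → E → ℝ}

/-- Deviation of the scaled sum of weight variances from its limiting value. -/
noncomputable def devD (G : Measure E) (N : ℕ) (Z Z' : ι → E → ℝ) (a σ : ℝ) : ℝ :=
  a * ((∑ t, (∫ x, Z t x ^ 2 ∂G + ∫ x, Z' t x ^ 2 ∂G)) / (2 * N)) - a⁻¹ * σ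

/-- Total approximation error for a given sequence of observations. -/
noncomputable def totalErr (G : Measure E) (N : ℕ) (Z Z' : ι → E → ℝ) (a : ℝ) : ℝ :=
  eta a N * ∑ t, (2 + ∫ x, Z t x ^ 6 ∂G + ∫ x, Z' t x ^ 6 ∂G)

/-- The characteristic function of `a R + a⁻¹ σ`: writing the accumulated variance as
`a⁻¹ (a⁻¹ σ + devD)`, the drift cancels the centring and leaves `-s² σ` plus terms in `devD`. -/
theorem charFun_tiltLaw_sub_le (hZ : ∀ t, GoodWeight G (Z t)) (hZ' : ∀ t, GoodWeight G (Z' t))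
    {N : ℕ} (hN : 0 < N) {a : ℝ} (ha : 0 < a) (ha1 : a ≤ 1) (σ s : ℝ) :
    ‖charFun ((tiltLaw G N Z).map fun q => a * logRatio N Z Z' q + a⁻¹ * σ) s
      - Complex.exp (-(s ^ 2 * σ : ℝ)
        - (Complex.I * s + (s ^ 2 * a : ℝ)) * (devD G N Z Z' a σ : ℝ))‖
      ≤ 4003 * (1 + |s| + s ^ 2 + |s| ^ 3 + s ^ 4) * totalErr G N Z Z' a := by
  rw [charFun_tiltLaw hZ hZ' N]
  refine le_trans (le_of_eq ?_) (norm_prod_blocks_sub_exp_le hZ hZ' hN ha.le ha1 s)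
  have he : Complex.exp (-(s ^ 2 * σ : ℝ)
        - (Complex.I * s + (s ^ 2 * a : ℝ)) * (devD G N Z Z' a σ : ℝ))
      = Complex.exp (-((Complex.I * (s * a : ℝ) + ((s * a : ℝ) : ℂ) ^ 2)
        * ((∑ t, (∫ x, Z t x ^ 2 ∂G + ∫ x, Z' t x ^ 2 ∂G)) / (2 * N) : ℝ)))
        * Complex.exp (Complex.I * (s * (a⁻¹ * σ) : ℝ)) := by
    rw [← Complex.exp_add, devD]
    congr 1
    have ha' : (a : ℂ) ≠ 0 := by exact_mod_cast ha.ne'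
    push_cast
    field_simp
    ring
  rw [he, ← sub_mul, norm_mul, mul_comm Complex.I ((s * (a⁻¹ * σ) : ℝ) : ℂ),
    Complex.norm_exp_ofReal_mul_I, mul_one]

/-- For every bounded continuous `f` there is one threshold for the errors below which the
conditional expectation of `f` is close to its Gaussian limit. -/
theorem exists_delta_tiltLaw (σ : ℝ) (hσ : 0 ≤ σ) (f : BoundedContinuousFunction ℝ ℝ) {ε : ℝ}
    (hε : 0 < ε) :
    ∃ δ : ℝ, 0 < δ ∧ ∀ (T N : ℕ) (Z Z' : Fin T → E → ℝ), (∀ t, GoodWeight G (Z t)) →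
      (∀ t, GoodWeight G (Z' t)) → 0 < N → ∀ a : ℝ, 0 < a → a ≤ 1 →
      totalErr G N Z Z' a + devD G N Z Z' a σ ^ 2 < δ →
      |∫ q, tiltDens N Z q.1 * f (a * logRatio N Z Z' q + a⁻¹ * σ)
          ∂((Measure.pi fun _ : Fin T × Fin N => G).prod (Measure.pi fun _ => G))
        - ∫ x, f x ∂(gaussianReal 0 (Real.toNNReal (2 * σ)))| < ε := by
  obtain ⟨δ, hδ, H⟩ := exists_delta_of_charFun_le σ hσ
    (fun s => 4003 * (1 + |s| + s ^ 2 + |s| ^ 3 + s ^ 4)) f hε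
  refine ⟨δ, hδ, fun T N Z Z' hZ hZ' hN a ha ha1 hlt => ?_⟩
  have hl := measurable_logRatio hZ hZ' N
  have hm : Measurable fun q => a * logRatio N Z Z' q + a⁻¹ * σ := by fun_prop
  have := isProbabilityMeasure_tiltLaw (G := G) hZ N
  have := Measure.isProbabilityMeasure_map (μ := tiltLaw G N Z) hm.aemeasurable
  have h := H ((tiltLaw G N Z).map fun q => a * logRatio N Z Z' q + a⁻¹ * σ) a
    (devD G N Z Z' a σ) (totalErr G N Z Z' a) ha.le ha1
    (fun s => charFun_tiltLaw_sub_le hZ hZ' hN ha ha1 σ s)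
    (mul_nonneg (eta_nonneg ha.le N) (Finset.sum_nonneg fun t _ => by
      have h1 : 0 ≤ ∫ x, Z t x ^ 6 ∂G := integral_nonneg fun x => by positivity
      have h2 : 0 ≤ ∫ x, Z' t x ^ 6 ∂G := integral_nonneg fun x => by positivity
      linarith)) hlt
  rw [integral_map hm.aemeasurable (f.continuous.measurable.aestronglyMeasurable),
    integral_tiltLaw hZ N] at h
  exact h

end

/-! ### Rates -/

theorem tendsto_natCast_rpow_of_neg {c : ℝ} (hc : c < 0) :
    Tendsto (fun T : ℕ => (T : ℝ) ^ c) atTop (nhds 0) := by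
  have := (tendsto_rpow_neg_atTop (neg_pos.2 hc)).comp
    (tendsto_natCast_atTop_atTop (R := ℝ))
  simpa [Function.comp_def] using this

section Rates

variable {α β : ℝ} (hα : 1 / 3 < α) (hβ : 0 < β) {N : ℕ → ℕ}
  (hN : ∀ T, N T = Nat.ceil (β * (T : ℝ) ^ α))

include hα hβ hN

omit hα in
theorem N_bounds {T : ℕ} (hT : 0 < T) :
    0 < (N T : ℝ) ∧ β * (T : ℝ) ^ α ≤ N T ∧ (N T : ℝ) < β * (T : ℝ) ^ α + 1 := by
  have hT' : (0 : ℝ) < T := by exact_mod_cast hT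
  have h0 : 0 < β * (T : ℝ) ^ α := by positivity
  have h1 : β * (T : ℝ) ^ α ≤ N T := by rw [hN]; exact Nat.le_ceil _
  refine ⟨h0.trans_le h1, h1, ?_⟩
  rw [hN]; exact Nat.ceil_lt_add_one h0.le

omit hα in
/-- The effect of rounding `β T^α` up to an integer. -/
theorem abs_ratio_sub_le {T : ℕ} (hT : 0 < T) :
    |(T : ℝ) ^ α / N T - β⁻¹| ≤ (β ^ 2)⁻¹ * (T : ℝ) ^ (-α) := by
  obtain ⟨h0, h1, h2⟩ := N_bounds hβ hN hT
  have hT' : (0 : ℝ) < T := by exact_mod_cast hT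
  have hx : 0 < (T : ℝ) ^ α := by positivity
  rw [Real.rpow_neg hT'.le]
  set x := (T : ℝ) ^ α
  have e : x / N T - β⁻¹ = -((N T - β * x) / (N T * β)) := by field_simp; ring
  rw [e, abs_neg, abs_of_nonneg (by apply div_nonneg; linarith; positivity), ← mul_inv,
    div_le_iff₀ (by positivity), inv_mul_eq_div, le_div_iff₀ (by positivity)]
  have : (N T - β * x) * (β ^ 2 * x) ≤ 1 * (β ^ 2 * x) := by gcongr; linarith
  nlinarith

theorem tendsto_ratio : Tendsto (fun T : ℕ => (T : ℝ) ^ α / N T) atTop (nhds β⁻¹) := by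
  have h := (tendsto_natCast_rpow_of_neg (c := -α) (by linarith)).const_mul ((β ^ 2)⁻¹)
  rw [mul_zero] at h
  have : Tendsto (fun T : ℕ => (T : ℝ) ^ α / N T - β⁻¹) atTop (nhds 0) := by
    refine squeeze_zero_norm' ?_ h
    filter_upwards [eventually_gt_atTop 0] with T hT using abs_ratio_sub_le hβ hN hT
  simpa using this.add_const β⁻¹

theorem tendsto_mul_eta :
    Tendsto (fun T : ℕ => T * eta ((T : ℝ) ^ ((α - 1) / 2)) (N T)) atTop (nhds 0) := by
  have hr := tendsto_ratio hα hβ hN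
  have hs := (Real.continuous_sqrt.tendsto β⁻¹).comp hr
  have h1 := (tendsto_natCast_rpow_of_neg (c := (1 - 3 * α) / 2) (by linarith)).mul (hr.pow 2)
  have h2 := (tendsto_natCast_rpow_of_neg (c := -α / 2) (by linarith)).mul (hr.mul hs)
  have h3 := (tendsto_natCast_rpow_of_neg (c := 1 - 3 * α) (by linarith)).mul (hr.pow 3)
  have := (h1.add h2).add h3
  simp only [zero_mul, add_zero] at this
  refine this.congr' ?_
  filter_upwards [eventually_gt_atTop 0] with T hT
  obtain ⟨h0, -, -⟩ := N_bounds hβ hN hT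
  have hT' : (0 : ℝ) < T := by exact_mod_cast hT
  simp only [Function.comp, eta]
  have e1 : (T : ℝ) ^ ((1 - 3 * α) / 2) * ((T : ℝ) ^ α) ^ 2 = T * (T : ℝ) ^ ((α - 1) / 2) := by
    rw [← Real.rpow_natCast, ← Real.rpow_mul hT'.le, ← Real.rpow_add hT', ← Real.rpow_one_add' hT'.le]
    · congr 1; push_cast; ring
    · linarith
  have e2 : (T : ℝ) ^ (-α / 2) * ((T : ℝ) ^ α * √((T : ℝ) ^ α))
      = T * ((T : ℝ) ^ ((α - 1) / 2)) ^ 2 := by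
    rw [Real.sqrt_eq_rpow, ← Real.rpow_mul hT'.le, ← Real.rpow_add hT', ← Real.rpow_add hT',
      ← Real.rpow_natCast, ← Real.rpow_mul hT'.le]
    nth_rewrite 2 [← Real.rpow_one (T : ℝ)]
    rw [← Real.rpow_add hT']
    congr 1; push_cast; ring
  have e3 : (T : ℝ) ^ (1 - 3 * α) * ((T : ℝ) ^ α) ^ 3 = T := by
    rw [← Real.rpow_natCast, ← Real.rpow_mul hT'.le, ← Real.rpow_add hT']
    nth_rewrite 2 [← Real.rpow_one (T : ℝ)]
    congr 1; push_cast; ring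
  rw [Real.sqrt_div (by positivity), div_pow, div_pow, div_mul_div_comm, ← mul_div_assoc,
    ← mul_div_assoc, ← mul_div_assoc, e1, e2, e3]
  ring

theorem tendsto_sq_mul_div :
    Tendsto (fun T : ℕ => ((T : ℝ) ^ ((α - 1) / 2)) ^ 2 * T / (N T : ℝ) ^ 2) atTop (nhds 0) := by
  have hr := tendsto_ratio hα hβ hN
  have h1 := (tendsto_natCast_rpow_of_neg (c := -α) (by linarith)).mul (hr.pow 2)
  rw [zero_mul] at h1
  refine h1.congr' ?_
  filter_upwards [eventually_gt_atTop 0] with T hT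
  have hT' : (0 : ℝ) < T := by exact_mod_cast hT
  have e1 : (T : ℝ) ^ (-α) * ((T : ℝ) ^ α) ^ 2 = ((T : ℝ) ^ ((α - 1) / 2)) ^ 2 * T := by
    rw [← Real.rpow_natCast, ← Real.rpow_mul hT'.le, ← Real.rpow_add hT', ← Real.rpow_natCast,
      ← Real.rpow_mul hT'.le]
    nth_rewrite 3 [← Real.rpow_one (T : ℝ)]
    rw [← Real.rpow_add hT']
    congr 1; push_cast; ring
  rw [div_pow, ← mul_div_assoc, e1]

/-- The centring `a⁻¹ γ²/β` is exact up to `o(1)`: this is where `α > 1/3` and the local Lipschitz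
behaviour of `γ` are needed. -/
theorem tendsto_centering {γ0 : ℝ} {gsq : ℕ → ℝ} {C : ℝ}
    (hg : ∀ᶠ T : ℕ in atTop, |gsq T - γ0| ≤ C / √T) :
    Tendsto (fun T : ℕ => (T : ℝ) ^ ((α - 1) / 2) * (T * (γ0 + gsq T) / (2 * N T))
      - ((T : ℝ) ^ ((α - 1) / 2))⁻¹ * (β⁻¹ * γ0)) atTop (nhds 0) := by
  have hr := tendsto_ratio hα hβ hN
  have h1 := (tendsto_natCast_rpow_of_neg (c := (1 - 3 * α) / 2) (by linarith)).const_mul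
    ((β ^ 2)⁻¹ * |γ0|)
  have h2 := ((tendsto_natCast_rpow_of_neg (c := -α / 2) (by linarith)).const_mul C).mul hr
  have h3 := h1.add h2
  simp only [mul_zero, zero_mul, add_zero] at h3
  refine squeeze_zero_norm' ?_ h3
  filter_upwards [eventually_gt_atTop 0, hg] with T hT hgT
  obtain ⟨h0, -, -⟩ := N_bounds hβ hN hT
  have hT' : (0 : ℝ) < T := by exact_mod_cast hT
  have hR := abs_ratio_sub_le hβ hN hT
  have ea : ((T : ℝ) ^ ((α - 1) / 2))⁻¹ = (T : ℝ) ^ ((1 - α) / 2) := by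
    rw [← Real.rpow_neg hT'.le]; congr 1; ring
  have e1 : (T : ℝ) ^ ((α - 1) / 2) * T = (T : ℝ) ^ ((1 - α) / 2) * (T : ℝ) ^ α := by
    nth_rewrite 2 [← Real.rpow_one (T : ℝ)]
    rw [← Real.rpow_add hT', ← Real.rpow_add hT']
    congr 1; ring
  have e2 : (T : ℝ) ^ ((1 - α) / 2) * (T : ℝ) ^ (-α) = (T : ℝ) ^ ((1 - 3 * α) / 2) := by
    rw [← Real.rpow_add hT']; congr 1; ring
  have e3 : (T : ℝ) ^ ((1 - α) / 2) / √T = (T : ℝ) ^ (-α / 2) := by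
    rw [Real.sqrt_eq_rpow, ← Real.rpow_sub hT']; congr 1; ring
  have hA : 0 < (T : ℝ) ^ ((1 - α) / 2) := by positivity
  have hX : 0 < (T : ℝ) ^ α := by positivity
  have hr0 : 0 ≤ (T : ℝ) ^ α / N T := by positivity
  have e : (T : ℝ) ^ ((α - 1) / 2) * (T * (γ0 + gsq T) / (2 * N T))
      - ((T : ℝ) ^ ((α - 1) / 2))⁻¹ * (β⁻¹ * γ0)
      = (T : ℝ) ^ ((1 - α) / 2) * (((T : ℝ) ^ α / N T - β⁻¹) * γ0)
        + (T : ℝ) ^ ((1 - α) / 2) * ((T : ℝ) ^ α / N T) * ((gsq T - γ0) / 2) := by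
    rw [ea]
    have : (T : ℝ) ^ ((α - 1) / 2) * (T * (γ0 + gsq T) / (2 * N T))
      = ((T : ℝ) ^ ((α - 1) / 2) * T) * ((γ0 + gsq T) / (2 * N T)) := by ring
    rw [this, e1]
    field_simp
    ring
  rw [e, ← e2, ← e3]
  have hC : 0 ≤ C / √T := (abs_nonneg _).trans hgT
  refine (norm_add_le _ _).trans (add_le_add ?_ ?_)
  · rw [norm_mul, norm_mul, Real.norm_eq_abs, Real.norm_eq_abs, Real.norm_eq_abs, abs_of_pos hA]
    calc _ ≤ (T : ℝ) ^ ((1 - α) / 2) * ((β ^ 2)⁻¹ * (T : ℝ) ^ (-α) * |γ0|) := by gcongr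
      _ = _ := by ring
  · rw [norm_mul, norm_mul, Real.norm_eq_abs, Real.norm_eq_abs, Real.norm_eq_abs, abs_of_pos hA,
      abs_of_nonneg hr0, abs_div, abs_two]
    calc _ ≤ (T : ℝ) ^ ((1 - α) / 2) * ((T : ℝ) ^ α / N T) * (C / √T) := by
          refine mul_le_mul_of_nonneg_left ?_ (mul_nonneg hA.le hr0)
          linarith [abs_nonneg (gsq T - γ0)]
      _ = _ := by ring

end Rates

/-! ### Averaging over the observations -/

section Family

variable {𝓨 E : Type*} [MeasurableSpace 𝓨] [MeasurableSpace E]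
  {μ : Measure 𝓨} [IsProbabilityMeasure μ] {G : Measure E} [IsProbabilityMeasure G]

/-- A normalised importance weight at a fixed parameter, with a finite ninth moment. -/
structure GoodFamily (μ : Measure 𝓨) (G : Measure E) (W : 𝓨 → E → ℝ) : Prop where
  meas : Measurable fun z : 𝓨 × E => W z.1 z.2
  nonneg : ∀ y x, 0 ≤ W y x
  mean : ∀ᵐ y ∂μ, ∫ x, W y x ∂G = 1
  mom : Integrable (fun z : 𝓨 × E => W z.1 z.2 ^ 9) (μ.prod G)

/-- The `k`-th conditional central moment of the weight given the observation. -/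
noncomputable def cmom (G : Measure E) (W : 𝓨 → E → ℝ) (k : ℕ) (y : 𝓨) : ℝ :=
  ∫ x, (W y x - 1) ^ k ∂G

theorem sub_one_pow_six_le {w : ℝ} (hw : 0 ≤ w) : (w - 1) ^ 6 ≤ 1 + w ^ 9 := by
  have h9 : 0 ≤ w ^ 9 := by positivity
  rcases le_total w 1 with h | h
  · have : |w - 1| ≤ 1 := by rw [abs_le]; constructor <;> linarith
    have h2 : (w - 1) ^ 6 = |w - 1| ^ 6 := by
      rw [← abs_pow]; exact (abs_of_nonneg (by positivity)).symm
    rw [h2]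
    linarith [pow_le_one₀ (n := 6) (abs_nonneg (w - 1)) this]
  · have h1 : (w - 1) ^ 6 ≤ w ^ 6 := pow_le_pow_left₀ (by linarith) (by linarith) 6
    have h2 : w ^ 6 ≤ w ^ 9 := pow_le_pow_right₀ h (by norm_num)
    linarith

namespace GoodFamily

variable {W W' : 𝓨 → E → ℝ}

omit [IsProbabilityMeasure μ] [IsProbabilityMeasure G] in
theorem meas_sub (h : GoodFamily μ G W) : Measurable fun z : 𝓨 × E => W z.1 z.2 - 1 :=
  h.meas.sub_const 1

theorem integrable_six (h : GoodFamily μ G W) :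
    Integrable (fun z : 𝓨 × E => (W z.1 z.2 - 1) ^ 6) (μ.prod G) := by
  refine ((integrable_const (1 : ℝ)).add h.mom).mono' (h.meas_sub.pow_const 6).aestronglyMeasurable
    (ae_of_all _ fun z => ?_)
  rw [Real.norm_eq_abs, abs_of_nonneg (by positivity)]
  exact sub_one_pow_six_le (h.nonneg _ _)

theorem ae_good (h : GoodFamily μ G W) : ∀ᵐ y ∂μ, GoodWeight G (fun x => W y x - 1) := by
  filter_upwards [h.mean, h.integrable_six.prod_right_ae] with y hy h6
  have hm : Measurable fun x => W y x - 1 := h.meas_sub.comp measurable_prodMk_left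
  have hL : MemLp (fun x => W y x - 1) (6 : ℕ) G := by
    refine (integrable_norm_rpow_iff hm.aestronglyMeasurable (by norm_num) (by simp)).1 ?_
    refine h6.congr (ae_of_all _ fun x => ?_)
    simp only [ENNReal.toReal_natCast, Real.rpow_natCast, Real.norm_eq_abs, ← abs_pow]
    exact (abs_of_nonneg (by positivity)).symm
  refine ⟨hm, hL, ?_, fun x => by linarith [h.nonneg y x]⟩
  have hi : Integrable (fun x => W y x) G := by
    have := (integrable_pow_of_memLp hL (k := 1) (by norm_num)).add (integrable_const (1 : ℝ))
    refine this.congr (ae_of_all _ fun x => by simp)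
  rw [integral_sub hi (integrable_const _), hy]; simp

omit [IsProbabilityMeasure μ] in
theorem stronglyMeasurable_cmom (h : GoodFamily μ G W) (k : ℕ) :
    StronglyMeasurable (cmom G W k) :=
  (h.meas_sub.pow_const k).stronglyMeasurable.integral_prod_right

theorem integrable_cmom_six (h : GoodFamily μ G W) : Integrable (cmom G W 6) μ :=
  h.integrable_six.integral_prod_left

theorem integral_cmom_six_le (h : GoodFamily μ G W) :
    ∫ y, cmom G W 6 y ∂μ ≤ 1 + ∫ z, W z.1 z.2 ^ 9 ∂(μ.prod G) := by
  unfold cmom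
  rw [← integral_prod (fun z : 𝓨 × E => (W z.1 z.2 - 1) ^ 6) h.integrable_six]
  have : ∫ z : 𝓨 × E, (1 + W z.1 z.2 ^ 9) ∂(μ.prod G) = 1 + ∫ z, W z.1 z.2 ^ 9 ∂(μ.prod G) := by
    rw [integral_add (integrable_const _) h.mom]; simp
  rw [← this]
  exact integral_mono h.integrable_six ((integrable_const _).add h.mom)
    fun z => sub_one_pow_six_le (h.nonneg _ _)

omit [MeasurableSpace 𝓨] [IsProbabilityMeasure G] in
theorem cmom_six_nonneg (W : 𝓨 → E → ℝ) (y : 𝓨) : 0 ≤ cmom G W 6 y :=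
  integral_nonneg fun x => by positivity

theorem ae_cmom_two_sq_le (h : GoodFamily μ G W) :
    ∀ᵐ y ∂μ, cmom G W 2 y ^ 2 ≤ 1 + cmom G W 6 y := by
  filter_upwards [h.ae_good] with y hy
  exact (moment_ineqs hy.memLp).2.1.trans (low_moments_le hy.memLp).2.1

theorem integrable_cmom_two_sq (h : GoodFamily μ G W) : Integrable (fun y => cmom G W 2 y ^ 2) μ := by
  refine ((integrable_const (1 : ℝ)).add h.integrable_cmom_six).mono'
    ((h.stronglyMeasurable_cmom 2).pow 2).aestronglyMeasurable ?_
  filter_upwards [h.ae_cmom_two_sq_le] with y hy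
  rwa [Real.norm_eq_abs, abs_of_nonneg (by positivity)]

theorem memLp_cmom_two (h : GoodFamily μ G W) : MemLp (cmom G W 2) (2 : ℕ) μ := by
  exact_mod_cast (memLp_two_iff_integrable_sq
    (h.stronglyMeasurable_cmom 2).aestronglyMeasurable).2 h.integrable_cmom_two_sq

theorem integral_cmom_two (h : GoodFamily μ G W) :
    ∫ y, cmom G W 2 y ∂μ = ∫ z, (W z.1 z.2 - 1) ^ 2 ∂(μ.prod G) := by
  have hi : Integrable (fun z : 𝓨 × E => (W z.1 z.2 - 1) ^ 2) (μ.prod G) := by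
    refine ((integrable_const (1 : ℝ)).add h.integrable_six).mono'
      (h.meas_sub.pow_const 2).aestronglyMeasurable (ae_of_all _ fun z => ?_)
    rw [Real.norm_eq_abs, abs_of_nonneg (by positivity)]
    change (W z.1 z.2 - 1) ^ 2 ≤ 1 + (W z.1 z.2 - 1) ^ 6
    set x := (W z.1 z.2 - 1) ^ 2 with hx
    have h6 : (W z.1 z.2 - 1) ^ 6 = x ^ 3 := by rw [hx]; ring
    have hx0 : 0 ≤ x := by positivity
    rw [h6]
    nlinarith [mul_nonneg hx0 (sq_nonneg (x - 1))]
  unfold cmom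
  rw [← integral_prod (fun z : 𝓨 × E => (W z.1 z.2 - 1) ^ 2) hi]

end GoodFamily

open GoodFamily in
/-- Markov's inequality for the approximation errors: the observations for which they are not
small have small probability. -/
theorem measure_bad_le {W W' : 𝓨 → E → ℝ} (h : GoodFamily μ G W) (h' : GoodFamily μ G W')
    (T N : ℕ) (hN : 0 < N) {a : ℝ} (ha : 0 ≤ a) (σ : ℝ) {δ : ℝ} (hδ : 0 < δ) (K : ℝ)
    (hK : 4 + ∫ z, W z.1 z.2 ^ 9 ∂(μ.prod G) + ∫ z, W' z.1 z.2 ^ 9 ∂(μ.prod G) ≤ K) :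
    (Measure.pi fun _ : Fin T => μ) {y | ¬ ((∀ t, GoodWeight G (fun x => W (y t) x - 1)) ∧
        (∀ t, GoodWeight G (fun x => W' (y t) x - 1)) ∧
        totalErr G N (fun t x => W (y t) x - 1) (fun t x => W' (y t) x - 1) a
          + devD G N (fun t x => W (y t) x - 1) (fun t x => W' (y t) x - 1) a σ ^ 2 < δ)}
      ≤ ENNReal.ofReal (δ⁻¹ * ((T * eta a N) * K + a ^ 2 * T / N ^ 2 * K
        + 2 * (a * (T * (∫ z, (W z.1 z.2 - 1) ^ 2 ∂(μ.prod G)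
          + ∫ z, (W' z.1 z.2 - 1) ^ 2 ∂(μ.prod G)) / (2 * N)) - a⁻¹ * σ) ^ 2)) := by
  have hN' : (0 : ℝ) < N := by exact_mod_cast hN
  set gbar := ∫ z, (W z.1 z.2 - 1) ^ 2 ∂(μ.prod G) + ∫ z, (W' z.1 z.2 - 1) ^ 2 ∂(μ.prod G) with hgb
  set κ := a * (T * gbar / (2 * N)) - a⁻¹ * σ with hκ
  set Pr := Measure.pi fun _ : Fin T => μ with hP
  let c : 𝓨 → ℝ := fun y => cmom G W 2 y + cmom G W' 2 y - gbar
  let m : 𝓨 → ℝ := fun y => 2 + cmom G W 6 y + cmom G W' 6 y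
  have hev : ∀ t : Fin T, MeasurePreserving (fun y : Fin T → 𝓨 => y t) Pr μ :=
    fun t => measurePreserving_eval (fun _ => μ) t
  have hmi : Integrable m μ := ((integrable_const _).add h.integrable_cmom_six).add
    h'.integrable_cmom_six
  have hm0 : ∀ y, 0 ≤ m y := fun y => by
    have := cmom_six_nonneg (G := G) W y
    have := cmom_six_nonneg (G := G) W' y
    positivity
  have hmint : ∫ y, m y ∂μ ≤ K := by
    have i1 : Integrable (fun y => 2 + cmom G W 6 y) μ :=
      (integrable_const _).add h.integrable_cmom_six
    have e : ∫ y, m y ∂μ = 2 + ∫ y, cmom G W 6 y ∂μ + ∫ y, cmom G W' 6 y ∂μ := by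
      change ∫ y, (2 + cmom G W 6 y + cmom G W' 6 y) ∂μ = _
      rw [integral_add i1 h'.integrable_cmom_six,
        integral_add (integrable_const _) h.integrable_cmom_six]
      simp
    linarith [h.integral_cmom_six_le, h'.integral_cmom_six_le]
  have hvL : MemLp (fun y => cmom G W 2 y + cmom G W' 2 y) (2 : ℕ) μ :=
    h.memLp_cmom_two.add h'.memLp_cmom_two
  have hcL : MemLp c (2 : ℕ) μ := hvL.sub (memLp_const gbar)
  have hvi : Integrable (fun y => cmom G W 2 y + cmom G W' 2 y) μ := by
    simpa using integrable_pow_of_memLp hvL (k := 1) (by norm_num)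
  have hvint : ∫ y, (cmom G W 2 y + cmom G W' 2 y) ∂μ = gbar := by
    rw [integral_add, h.integral_cmom_two, h'.integral_cmom_two]
    · simpa using integrable_pow_of_memLp h.memLp_cmom_two (k := 1) (by norm_num)
    · simpa using integrable_pow_of_memLp h'.memLp_cmom_two (k := 1) (by norm_num)
  have hc0 : ∫ y, c y ∂μ = 0 := by
    change ∫ y, (cmom G W 2 y + cmom G W' 2 y - gbar) ∂μ = 0
    rw [integral_sub hvi (integrable_const _), hvint]; simp
  have hc2 : ∫ y, c y ^ 2 ∂μ ≤ 2 * K := by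
    have i2 := integrable_pow_of_memLp hvL (k := 2) le_rfl
    have i1 : Integrable
        (fun y => 2 * gbar * (cmom G W 2 y + cmom G W' 2 y) - gbar ^ 2) μ :=
      (hvi.const_mul _).sub (integrable_const _)
    have e : ∫ y, c y ^ 2 ∂μ = ∫ y, (cmom G W 2 y + cmom G W' 2 y) ^ 2 ∂μ - gbar ^ 2 := by
      have : ∀ y, c y ^ 2 = (cmom G W 2 y + cmom G W' 2 y) ^ 2
          - (2 * gbar * (cmom G W 2 y + cmom G W' 2 y) - gbar ^ 2) := fun y => by
        simp only [c]; ring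
      simp_rw [this]
      rw [integral_sub i2 i1,
        integral_sub (hvi.const_mul _) (integrable_const _), integral_const_mul, hvint]
      simp; ring
    have l : ∫ y, (cmom G W 2 y + cmom G W' 2 y) ^ 2 ∂μ ≤ ∫ y, 2 * m y ∂μ := by
      refine integral_mono_ae i2 (hmi.const_mul 2) ?_
      filter_upwards [h.ae_cmom_two_sq_le, h'.ae_cmom_two_sq_le] with y h1 h2
      simp only [m]
      nlinarith [sq_nonneg (cmom G W 2 y - cmom G W' 2 y)]
    rw [integral_const_mul] at l
    nlinarith [sq_nonneg gbar]
  -- `H` dominates the error, as `devD` is a centred sum plus the deterministic bias `κ`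
  let H : (Fin T → 𝓨) → ℝ := fun y => eta a N * ∑ t, m (y t)
    + 2 * (a / (2 * N)) ^ 2 * (∑ t, c (y t)) ^ 2 + 2 * κ ^ 2
  have hi1 : ∀ t : Fin T, Integrable (fun y : Fin T → 𝓨 => m (y t)) Pr :=
    fun t => (hev t).integrable_comp_of_integrable hmi
  have hi2 : Integrable (fun y : Fin T → 𝓨 => (∑ t, c (y t)) ^ 2) Pr :=
    integrable_pow_of_memLp (memLp_sum_pi hcL T) le_rfl
  have hia := (integrable_finsetSum Finset.univ fun t _ => hi1 t).const_mul (eta a N)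
  have hib := hi2.const_mul (2 * (a / (2 * N)) ^ 2)
  have hiab : Integrable (fun y : Fin T → 𝓨 => eta a N * ∑ t, m (y t)
      + 2 * (a / (2 * N)) ^ 2 * (∑ t, c (y t)) ^ 2) Pr := hia.add hib
  have hHi : Integrable H Pr := hiab.add (integrable_const _)
  have hη := eta_nonneg ha N
  have hH0 : ∀ y, 0 ≤ H y := fun y => by
    have : 0 ≤ ∑ t, m (y t) := Finset.sum_nonneg fun t _ => hm0 _
    positivity
  have hHint : ∫ y, H y ∂Pr ≤ (T * eta a N) * K + a ^ 2 * T / N ^ 2 * K + 2 * κ ^ 2 := by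
    have e : ∫ y, H y ∂Pr = eta a N * (T * ∫ y, m y ∂μ)
        + 2 * (a / (2 * N)) ^ 2 * (T * ∫ y, c y ^ 2 ∂μ) + 2 * κ ^ 2 := by
      change ∫ y, (eta a N * ∑ t, m (y t) + 2 * (a / (2 * N)) ^ 2 * (∑ t, c (y t)) ^ 2
        + 2 * κ ^ 2) ∂Pr = _
      rw [integral_add hiab (integrable_const _), integral_add hia hib,
        integral_const_mul, integral_const_mul, (sum_second_moment hcL hc0 T).2,
        integral_finsetSum _ fun t _ => hi1 t]
      have : ∀ t : Fin T, ∫ y : Fin T → 𝓨, m (y t) ∂Pr = ∫ y, m y ∂μ := fun t => by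
        rw [← (hev t).map_eq, integral_map (hev t).aemeasurable]
        rw [(hev t).map_eq]; exact hmi.1
      simp [this]
    rw [e]
    have k1 : eta a N * (T * ∫ y, m y ∂μ) ≤ eta a N * (T * K) := by gcongr
    have k2 : 2 * (a / (2 * N)) ^ 2 * (T * ∫ y, c y ^ 2 ∂μ)
        ≤ 2 * (a / (2 * N)) ^ 2 * (T * (2 * K)) := by gcongr
    have k3 : 2 * (a / (2 * N)) ^ 2 * (T * (2 * K)) = a ^ 2 * T / N ^ 2 * K := by
      field_simp
    linarith
  have hgood : ∀ᵐ y ∂Pr, (∀ t, GoodWeight G (fun x => W (y t) x - 1)) ∧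
      (∀ t, GoodWeight G (fun x => W' (y t) x - 1)) := by
    have g1 : ∀ᵐ y ∂Pr, ∀ t, GoodWeight G (fun x => W (y t) x - 1) :=
      ae_all_iff.2 fun t => (hev t).quasiMeasurePreserving.ae h.ae_good
    have g2 : ∀ᵐ y ∂Pr, ∀ t, GoodWeight G (fun x => W' (y t) x - 1) :=
      ae_all_iff.2 fun t => (hev t).quasiMeasurePreserving.ae h'.ae_good
    filter_upwards [g1, g2] with y h1 h2 using ⟨h1, h2⟩
  have hle : ∀ y : Fin T → 𝓨,
      totalErr G N (fun t x => W (y t) x - 1) (fun t x => W' (y t) x - 1) a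
        + devD G N (fun t x => W (y t) x - 1) (fun t x => W' (y t) x - 1) a σ ^ 2 ≤ H y := by
    intro y
    have e1 : totalErr G N (fun t x => W (y t) x - 1) (fun t x => W' (y t) x - 1) a
        = eta a N * ∑ t, m (y t) := rfl
    have e2 : devD G N (fun t x => W (y t) x - 1) (fun t x => W' (y t) x - 1) a σ
        = a / (2 * N) * (∑ t, c (y t)) + κ := by
      have : ∑ t, (∫ x, (W (y t) x - 1) ^ 2 ∂G + ∫ x, (W' (y t) x - 1) ^ 2 ∂G)
          = ∑ t, c (y t) + T * gbar := by
        simp only [c, cmom, Finset.sum_sub_distrib]; simp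
      rw [devD, this, hκ]; ring
    rw [e1, e2]
    simp only [H]
    nlinarith [sq_nonneg (a / (2 * N) * (∑ t, c (y t)) - κ)]
  have hsub : Pr {y | ¬ ((∀ t, GoodWeight G (fun x => W (y t) x - 1)) ∧
        (∀ t, GoodWeight G (fun x => W' (y t) x - 1)) ∧
        totalErr G N (fun t x => W (y t) x - 1) (fun t x => W' (y t) x - 1) a
          + devD G N (fun t x => W (y t) x - 1) (fun t x => W' (y t) x - 1) a σ ^ 2 < δ)}
      ≤ Pr {y | δ ≤ H y} := by
    refine measure_mono_ae ?_
    filter_upwards [hgood] with y hy hbad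
    by_contra hlt
    exact hbad ⟨hy.1, hy.2, (hle y).trans_lt (not_le.1 hlt)⟩
  refine hsub.trans ?_
  have hmk := mul_meas_ge_le_integral_of_nonneg (ae_of_all _ hH0) hHi δ
  rw [← ofReal_measureReal]
  refine ENNReal.ofReal_le_ofReal ?_
  rw [← div_eq_inv_mul, le_div_iff₀ hδ, mul_comm]
  exact hmk.trans hHint

end Family

/-! ### Conditional expectations under a tilt -/

section Transfer

variable {Ω A B : Type*} [MeasurableSpace Ω] [MeasurableSpace A] [MeasurableSpace B]
  {P : Measure Ω} {ν : Measure A} [IsProbabilityMeasure ν] {ρ : Measure B} [IsProbabilityMeasure ρ]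
  {X : Ω → A} {V : Ω → B} (hX : Measurable X) (hV : Measurable V)
  (hlaw : P.map (fun ω => (X ω, V ω)) = ν.prod ρ)
  {D : A × B → ℝ} (hD : Measurable D) (hD0 : ∀ z, 0 ≤ D z)
  (hD1 : ∀ᵐ x ∂ν, ∫⁻ v, ENNReal.ofReal (D (x, v)) ∂ρ = 1)

include hD hD0 hD1 in
omit [IsProbabilityMeasure ρ] in
theorem integrable_density [SFinite ρ] : Integrable D (ν.prod ρ) := by
  refine ⟨hD.aestronglyMeasurable, ?_⟩
  rw [hasFiniteIntegral_iff_ofReal (ae_of_all _ hD0), lintegral_prod _ (by fun_prop),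
    lintegral_congr_ae hD1]
  simp

include hX hV hlaw hD in
omit [IsProbabilityMeasure ν] [IsProbabilityMeasure ρ] in
/-- Tilting by a function of `(X, V)` tilts the joint law of `(X, V)`. -/
theorem map_tilt : (P.withDensity fun ω => ENNReal.ofReal (D (X ω, V ω))).map
      (fun ω => (X ω, V ω)) = (ν.prod ρ).withDensity fun z => ENNReal.ofReal (D z) := by
  have hJ : Measurable fun ω => (X ω, V ω) := hX.prodMk hV
  ext s hs
  rw [Measure.map_apply hJ hs, withDensity_apply _ (hJ hs), withDensity_apply _ hs, ← hlaw,
    setLIntegral_map hs (by fun_prop) hJ]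

include hX hV hlaw hD hD1 in
/-- A tilt with conditional mass one does not change the law of the first variable. -/
theorem map_tilt_fst :
    (P.withDensity fun ω => ENNReal.ofReal (D (X ω, V ω))).map X = ν := by
  have hJ : Measurable fun ω => (X ω, V ω) := hX.prodMk hV
  have h := congrArg (fun m : Measure (A × B) => m.map Prod.fst) (map_tilt hX hV hlaw hD)
  simp only [Measure.map_map measurable_fst hJ] at h
  refine h.trans ?_
  ext s hs
  rw [Measure.map_apply measurable_fst hs, withDensity_apply _ (measurable_fst hs),
    ← Set.prod_univ, ← Measure.prod_restrict, Measure.restrict_univ,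
    lintegral_prod _ (by fun_prop), lintegral_congr_ae (ae_restrict_of_ae hD1)]
  simp

include hX hV hlaw hD hD0 hD1 in
/-- Bayes' formula: under the tilted measure, the conditional expectation given `X` is the integral
of the tilted integrand over the law of `V`. -/
theorem condExp_tilt {g : A × B → ℝ} (hg : Measurable g) {C : ℝ} (hgC : ∀ z, ‖g z‖ ≤ C) :
    (fun ω => ∫ v, D (X ω, v) * g (X ω, v) ∂ρ)
      =ᵐ[P.withDensity fun ω => ENNReal.ofReal (D (X ω, V ω))]
        (P.withDensity fun ω => ENNReal.ofReal (D (X ω, V ω)))[fun ω => g (X ω, V ω) |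
          MeasurableSpace.comap X inferInstance] := by
  have hJ : Measurable fun ω => (X ω, V ω) := hX.prodMk hV
  have hmap := map_tilt hX hV hlaw hD
  have hfst := map_tilt_fst hX hV hlaw hD hD1
  set Q := P.withDensity fun ω => ENNReal.ofReal (D (X ω, V ω)) with hQ
  have hprob : IsProbabilityMeasure Q := by
    have : IsProbabilityMeasure (Q.map X) := by rw [hfst]; infer_instance
    exact Measure.isProbabilityMeasure_of_map X
  have hi : Integrable (fun z => D z * g z) (ν.prod ρ) :=
    (integrable_density hD hD0 hD1).mul_bdd hg.aestronglyMeasurable (ae_of_all _ hgC)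
  have hFi : Integrable (fun x => ∫ v, D (x, v) * g (x, v) ∂ρ) ν := hi.integral_prod_left
  have hFm : StronglyMeasurable (fun x => ∫ v, D (x, v) * g (x, v) ∂ρ) :=
    (hD.mul hg).stronglyMeasurable.integral_prod_right
  have hFiQ : Integrable (fun ω => ∫ v, D (X ω, v) * g (X ω, v) ∂ρ) Q := by
    have : Integrable (fun x => ∫ v, D (x, v) * g (x, v) ∂ρ) (Q.map X) := by rwa [hfst]
    exact this.comp_measurable hX
  refine ae_eq_condExp_of_forall_setIntegral_eq hX.comap_le ?_ (fun s _ _ => hFiQ.integrableOn)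
    ?_ ?_
  · exact Integrable.of_bound (hg.comp hJ).aestronglyMeasurable C (ae_of_all _ fun ω => hgC _)
  · rintro _ ⟨s, hs, rfl⟩ -
    have e1 : ∫ ω in X ⁻¹' s, (∫ v, D (X ω, v) * g (X ω, v) ∂ρ) ∂Q
        = ∫ x in s, (∫ v, D (x, v) * g (x, v) ∂ρ) ∂ν := by
      rw [← hfst, setIntegral_map hs hFm.aestronglyMeasurable hX.aemeasurable]
    have e2 : ∫ ω in X ⁻¹' s, g (X ω, V ω) ∂Q
        = ∫ z in s ×ˢ Set.univ, g z ∂(Q.map fun ω => (X ω, V ω)) := by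
      rw [setIntegral_map (hs.prod MeasurableSet.univ) hg.aestronglyMeasurable hJ.aemeasurable]
      congr 2
      ext ω; simp
    rw [e1, e2, hmap, setIntegral_withDensity_eq_setIntegral_toReal_smul (by fun_prop)
      (by simp) _ (hs.prod MeasurableSet.univ)]
    have e3 : ∀ z : A × B, (ENNReal.ofReal (D z)).toReal • g z = D z * g z := fun z => by
      rw [ENNReal.toReal_ofReal (hD0 z), smul_eq_mul]
    simp_rw [e3]
    rw [setIntegral_prod _ hi.integrableOn]
    simp
  · exact (hFm.comp_measurable (comap_measurable X)).aestronglyMeasurable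

include hX hV hlaw hD hD0 hD1 in
/-- A conditional expectation under the tilted measure is far from `c` with probability at most
that of the values of `X` at which the corresponding integral is far from `c`. -/
theorem measure_condExp_far_le {g : A × B → ℝ} (hg : Measurable g) {C : ℝ} (hgC : ∀ z, ‖g z‖ ≤ C)
    {c ε : ℝ} {S : Set A} (hS : ∀ x, x ∉ S → |∫ v, D (x, v) * g (x, v) ∂ρ - c| < ε) :
    (P.withDensity fun ω => ENNReal.ofReal (D (X ω, V ω)))
      {ω | ε ≤ dist (((P.withDensity fun ω => ENNReal.ofReal (D (X ω, V ω)))[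
        fun ω => g (X ω, V ω) | MeasurableSpace.comap X inferInstance]) ω) c} ≤ ν S := by
  have hc := condExp_tilt hX hV hlaw hD hD0 hD1 hg hgC
  have hfst := map_tilt_fst hX hV hlaw hD hD1
  set Q := P.withDensity fun ω => ENNReal.ofReal (D (X ω, V ω)) with hQ
  calc _ ≤ Q (X ⁻¹' S) := by
        refine measure_mono_ae ?_
        filter_upwards [hc] with ω hω hfar
        by_contra hn
        have h1 : ε ≤ dist _ c := hfar
        rw [← hω, Real.dist_eq] at h1
        exact absurd (hS _ hn) (not_lt.2 h1)
    _ ≤ Q.map X S := Measure.le_map_apply hX.aemeasurable S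
    _ = ν S := by rw [hfst]

end Transfer

/-! ### The conditional law of the log-likelihood ratio error -/

section Conditional

variable {Ω 𝓨 E : Type*} [MeasurableSpace Ω] [MeasurableSpace 𝓨] [MeasurableSpace E]
  {P : Measure Ω} {μ : Measure 𝓨} [IsProbabilityMeasure μ] {G : Measure E} [IsProbabilityMeasure G]

omit [MeasurableSpace E] in
theorem one_add_smean_sub_one {N : ℕ} (hN : 0 < N) (w : E → ℝ) (u : Fin N → E) :
    1 + smean N (fun x => w x - 1) u = (N : ℝ)⁻¹ * ∑ i, w (u i) := by
  have hN' : (N : ℝ) ≠ 0 := by exact_mod_cast hN.ne'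
  simp only [smean, Finset.sum_sub_distrib]
  simp only [Finset.sum_const, Finset.card_univ, Fintype.card_fin, nsmul_eq_mul, mul_one]
  field_simp
  ring

omit [IsProbabilityMeasure μ] [IsProbabilityMeasure G] in
theorem GoodFamily.measurable_mean {W : 𝓨 → E → ℝ} (h : GoodFamily μ G W) {T N : ℕ} (t : Fin T) :
    Measurable fun z : (Fin T → 𝓨) × (Fin T × Fin N → E) =>
      (N : ℝ)⁻¹ * ∑ i, W (z.1 t) (z.2 (t, i)) := by
  refine Measurable.const_mul (Finset.measurable_sum _ fun i _ => ?_) _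
  have hp : Measurable fun z : (Fin T → 𝓨) × (Fin T × Fin N → E) => (z.1 t, z.2 (t, i)) := by
    fun_prop
  exact h.meas.comp hp

/-- The tilting density has conditional mass one given almost every sequence of observations. -/
theorem ae_lintegral_density {W : 𝓨 → E → ℝ} (h : GoodFamily μ G W) (T : ℕ) {N : ℕ} (hN : 0 < N) :
    ∀ᵐ y ∂(Measure.pi fun _ : Fin T => μ),
      ∫⁻ v, ENNReal.ofReal (∏ t : Fin T, ((N : ℝ)⁻¹ * ∑ i, W (y t) (v.1 (t, i))))
        ∂((Measure.pi fun _ : Fin T × Fin N => G).prod (Measure.pi fun _ : Fin T × Fin N => G))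
        = 1 := by
  have hg : ∀ᵐ y ∂(Measure.pi fun _ : Fin T => μ), ∀ t, GoodWeight G (fun x => W (y t) x - 1) :=
    ae_all_iff.2 fun t =>
      (measurePreserving_eval (fun _ => μ) t).quasiMeasurePreserving.ae h.ae_good
  filter_upwards [hg] with y hy
  have e : ∀ u : Fin T × Fin N → E, ∏ t : Fin T, ((N : ℝ)⁻¹ * ∑ i, W (y t) (u (t, i)))
      = tiltDens N (fun t x => W (y t) x - 1) u := fun u =>
    Finset.prod_congr rfl fun t _ => (one_add_smean_sub_one hN _ _).symm
  simp_rw [e]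
  have hi := (integrable_tiltDens hy N).comp_fst
    (Measure.pi fun _ : Fin T × Fin N => G)
  rw [← ofReal_integral_eq_lintegral_ofReal hi (ae_of_all _ fun q => tiltDens_nonneg hy N _),
    integral_fun_fst (fun u => tiltDens N (fun t x => W (y t) x - 1) u), integral_tiltDens hy N]
  simp

/-- The finite-`T` form of the theorem: the probability that the conditional expectation of `f` is
far from its Gaussian value is bounded by explicit rates. -/
theorem exists_delta_condExp (σ : ℝ) (hσ : 0 ≤ σ) (f : BoundedContinuousFunction ℝ ℝ) {ε : ℝ}
    (hε : 0 < ε) :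
    ∃ δ : ℝ, 0 < δ ∧ ∀ (T N : ℕ) (W W' : 𝓨 → E → ℝ), GoodFamily μ G W → GoodFamily μ G W' →
      0 < N → ∀ a : ℝ, 0 < a → a ≤ 1 → ∀ K : ℝ,
      4 + ∫ z, W z.1 z.2 ^ 9 ∂(μ.prod G) + ∫ z, W' z.1 z.2 ^ 9 ∂(μ.prod G) ≤ K →
      ∀ (X : Ω → Fin T → 𝓨) (V : Ω → (Fin T × Fin N → E) × (Fin T × Fin N → E)),
      Measurable X → Measurable V →
      P.map (fun ω => (X ω, V ω)) = (Measure.pi fun _ : Fin T => μ).prod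
        ((Measure.pi fun _ : Fin T × Fin N => G).prod (Measure.pi fun _ : Fin T × Fin N => G)) →
      ∀ Q : Measure Ω, Q = (P.withDensity fun ω => ENNReal.ofReal
        (∏ t : Fin T, ((N : ℝ)⁻¹ * ∑ i, W (X ω t) ((V ω).1 (t, i))))) →
      Q {ω | ε ≤ dist ((Q[fun ω => f (a * (∑ t : Fin T,
            (Real.log ((N : ℝ)⁻¹ * ∑ i, W' (X ω t) ((V ω).2 (t, i)))
              - Real.log ((N : ℝ)⁻¹ * ∑ i, W (X ω t) ((V ω).1 (t, i)))))
            + a⁻¹ * σ) | MeasurableSpace.comap X inferInstance]) ω)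
          (∫ x, f x ∂(gaussianReal 0 (Real.toNNReal (2 * σ))))}
        ≤ ENNReal.ofReal (δ⁻¹ * ((T * eta a N) * K + a ^ 2 * T / N ^ 2 * K
          + 2 * (a * (T * (∫ z, (W z.1 z.2 - 1) ^ 2 ∂(μ.prod G)
            + ∫ z, (W' z.1 z.2 - 1) ^ 2 ∂(μ.prod G)) / (2 * N)) - a⁻¹ * σ) ^ 2)) := by
  obtain ⟨δ, hδ, H⟩ := exists_delta_tiltLaw (G := G) σ hσ f hε
  refine ⟨δ, hδ, fun T N W W' h h' hN a ha ha1 K hK X V hX hV hlaw Q hQ => ?_⟩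
  refine le_trans ?_ (measure_bad_le h h' T N hN ha.le σ hδ K hK)
  let D : (Fin T → 𝓨) × ((Fin T × Fin N → E) × (Fin T × Fin N → E)) → ℝ := fun z =>
    ∏ t : Fin T, ((N : ℝ)⁻¹ * ∑ i, W (z.1 t) (z.2.1 (t, i)))
  let g : (Fin T → 𝓨) × ((Fin T × Fin N → E) × (Fin T × Fin N → E)) → ℝ := fun z =>
    f (a * (∑ t : Fin T, (Real.log ((N : ℝ)⁻¹ * ∑ i, W' (z.1 t) (z.2.2 (t, i)))
      - Real.log ((N : ℝ)⁻¹ * ∑ i, W (z.1 t) (z.2.1 (t, i))))) + a⁻¹ * σ)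
  have hm1 : ∀ t, Measurable fun z : (Fin T → 𝓨) × ((Fin T × Fin N → E) × (Fin T × Fin N → E)) =>
      (N : ℝ)⁻¹ * ∑ i, W (z.1 t) (z.2.1 (t, i)) := fun t =>
    (h.measurable_mean t).comp (measurable_fst.prodMk (measurable_fst.comp measurable_snd))
  have hm2 : ∀ t, Measurable fun z : (Fin T → 𝓨) × ((Fin T × Fin N → E) × (Fin T × Fin N → E)) =>
      (N : ℝ)⁻¹ * ∑ i, W' (z.1 t) (z.2.2 (t, i)) := fun t =>
    (h'.measurable_mean t).comp (measurable_fst.prodMk (measurable_snd.comp measurable_snd))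
  have hD : Measurable D := Finset.measurable_prod _ fun t _ => hm1 t
  have hD0 : ∀ z, 0 ≤ D z := fun z => Finset.prod_nonneg fun t _ =>
    mul_nonneg (by positivity) (Finset.sum_nonneg fun i _ => h.nonneg _ _)
  have hg : Measurable g := f.continuous.measurable.comp
    (((Finset.measurable_sum _ fun t _ => (hm2 t).log.sub (hm1 t).log).const_mul a).add_const _)
  rw [hQ]
  refine measure_condExp_far_le (D := D) (g := g) (C := ‖f‖) hX hV hlaw hD hD0
    (ae_lintegral_density h T hN) hg (fun z => f.norm_coe_le_norm _) fun y hy => ?_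
  simp only [Set.mem_ofPred_eq, not_not] at hy
  have := H T N _ _ hy.1 hy.2.1 hN a ha ha1 hy.2.2
  simpa only [D, g, tiltDens, logRatio, one_add_smean_sub_one hN] using this

end Conditional

/-! ### Convergence along the local parameters -/

instance (p : ℕ) : IsProbabilityMeasure (stdGaussianPi p) := by
  unfold stdGaussianPi; infer_instance

/-- If `γ` is differentiable at `θ`, the increments of `γ²` along `θ + ξ/√T` are of order `1/√T`. -/
theorem exists_sq_sub_le {d : ℕ} {gamma : (Fin d → ℝ) → ℝ} {θ : Fin d → ℝ}
    (hg : DifferentiableAt ℝ gamma θ) (ξ : Fin d → ℝ)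
    (hθ : Tendsto (fun T : ℕ => θ + (√T)⁻¹ • ξ) atTop (nhds θ)) :
    ∃ C, ∀ᶠ T : ℕ in atTop, |gamma (θ + (√T)⁻¹ • ξ) ^ 2 - gamma θ ^ 2| ≤ C / √T := by
  have hd : DifferentiableAt ℝ (fun x => gamma x ^ 2) θ := hg.pow 2
  obtain ⟨C, hC⟩ := hd.hasFDerivAt.isBigO_sub.bound
  refine ⟨C * ‖ξ‖, ?_⟩
  filter_upwards [hθ.eventually hC] with T hT
  rw [Real.norm_eq_abs, add_sub_cancel_left, norm_smul, norm_inv, Real.norm_eq_abs,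
    abs_of_nonneg (Real.sqrt_nonneg _)] at hT
  calc _ ≤ _ := hT
    _ = _ := by ring

theorem tendsto_local_param {d : ℕ} (θ ξ : Fin d → ℝ) :
    Tendsto (fun T : ℕ => θ + (√T)⁻¹ • ξ) atTop (nhds θ) := by
  have h1 : Tendsto (fun T : ℕ => (√(T : ℝ))⁻¹) atTop (nhds 0) :=
    (Real.tendsto_sqrt_atTop.comp tendsto_natCast_atTop_atTop).inv_tendsto_atTop
  simpa using tendsto_const_nhds.add (h1.smul_const ξ)

/-- A normalised weight is not almost surely zero, so its ninth moment is positive. -/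
theorem GoodFamily.integral_pow_pos {𝓨 E : Type*} [MeasurableSpace 𝓨] [MeasurableSpace E]
    {μ : Measure 𝓨} [IsProbabilityMeasure μ] {G : Measure E} [IsProbabilityMeasure G]
    {W : 𝓨 → E → ℝ} (h : GoodFamily μ G W) : 0 < ∫ z, W z.1 z.2 ^ 9 ∂(μ.prod G) := by
  have h0 : ∀ z : 𝓨 × E, 0 ≤ W z.1 z.2 ^ 9 := fun z => pow_nonneg (h.nonneg _ _) 9
  refine lt_of_le_of_ne (integral_nonneg h0) fun he => ?_
  have h1 := (integral_eq_zero_iff_of_nonneg h0 h.mom).1 he.symm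
  have h2 := Measure.ae_ae_of_ae_prod h1
  obtain ⟨y, hy1, hy2⟩ := (h.mean.and h2).exists
  have h3 : ∫ x, W y x ∂G = 0 := by
    refine integral_eq_zero_of_ae ?_
    filter_upwards [hy2] with x hx
    simpa using hx
  linarith

/-- Theorem 2 of the paper: conditional CLT for the pseudo-marginal
loglikelihood-ratio error.  In the parametric importance-sampling random effects setup,
fix `θ ∈ Θ` and `ξ ∈ ℝ^d`, let `N_T = ⌈β T^α⌉` with `1/3 < α ≤ 1`, `β > 0`.  Assume the
stated continuity/differentiability conditions of `ϑ ↦ ϖ(y,u;ϑ)`, `ϑ ↦ E[ϖ⁹]`, `ϑ ↦ γ(ϑ)`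
at `θ` and the moment bounds `E[ϖ(Y₁,U₁₁;θ)⁹] + E[γ(Y₁;θ)⁴] < ∞`.  With the array `U^T`
distributed according to the `θ`-tilted measure `P̃^θ_T` (obtained by tilting the base
measure, under which `U^T` and `U'^T` are independent i.i.d. standard Gaussian arrays
independent of the `Y`'s, by `∏_t Ŵ^T_t(θ; U^T_t)`), `U'^T` an independent i.i.d. standard
Gaussian array, and
`R_T = Σ_t [log Ŵ^T_t(θ + ξ/√T; U'^T_t) − log Ŵ^T_t(θ; U^T_t)]`, one has
`T^{(α−1)/2} R_T + T^{(1−α)/2} β⁻¹ γ(θ)² | 𝒴^T ⇒ N(0, 2β⁻¹γ(θ)²)` under `P̃^θ_T`: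
for every bounded continuous `f`, the `P̃^θ_T`-conditional expectation given `𝒴^T`
converges in `P̃^θ_T`-probability to `∫ f dN(0, 2β⁻¹γ(θ)²)`. -/
theorem stmt2
    {Ω : Type*} [MeasurableSpace Ω] (P : Measure Ω) [IsProbabilityMeasure P]
    {𝓨 : Type*} [MeasurableSpace 𝓨] (μ : Measure 𝓨) [IsProbabilityMeasure μ]
    (p d : ℕ) (Θset : Set (Fin d → ℝ)) (hΘopen : IsOpen Θset)
    (θ : Fin d → ℝ) (hθ : θ ∈ Θset) (ξ : Fin d → ℝ)
    (α β : ℝ) (hα : 1 / 3 < α) (hα1 : α ≤ 1) (hβ : 0 < β)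
    (N : ℕ → ℕ) (hN : ∀ T, N T = Nat.ceil (β * (T : ℝ) ^ α))
    (Y : ℕ → Ω → 𝓨) (hYmeas : ∀ t, Measurable (Y t))
    (U U' : (T : ℕ) → Fin T → Fin (N T) → Ω → Fin p → ℝ)
    (hUmeas : ∀ T t i, Measurable (U T t i))
    (hU'meas : ∀ T t i, Measurable (U' T t i))
    (ϖ : 𝓨 → (Fin p → ℝ) → (Fin d → ℝ) → ℝ)
    (hϖmeas : ∀ ϑ, Measurable fun yu : 𝓨 × (Fin p → ℝ) => ϖ yu.1 yu.2 ϑ)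
    (hϖnonneg : ∀ y u ϑ, 0 ≤ ϖ y u ϑ)
    (hϖmean : ∀ ϑ ∈ Θset, ∀ᵐ y ∂μ, (∫ u, ϖ y u ϑ ∂(stdGaussianPi p)) = 1)
    (hlaw : ∀ T, Measure.map
        (fun ω => ((fun t : Fin T => Y ↑t ω),
          ((fun ti : Fin T × Fin (N T) => U T ti.1 ti.2 ω),
            fun ti : Fin T × Fin (N T) => U' T ti.1 ti.2 ω))) P
      = (Measure.pi fun _ : Fin T => μ).prod
          ((Measure.pi fun _ : Fin T × Fin (N T) => stdGaussianPi p).prod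
            (Measure.pi fun _ : Fin T × Fin (N T) => stdGaussianPi p)))
    -- regularity at θ
    (hϖcont : ∀ y u, ContinuousAt (ϖ y u) θ)
    (hcont9 : ContinuousAt
      (fun ϑ => ∫ yu : 𝓨 × (Fin p → ℝ), ϖ yu.1 yu.2 ϑ ^ 9 ∂(μ.prod (stdGaussianPi p))) θ)
    (gamma : (Fin d → ℝ) → ℝ)
    (hgamma : ∀ ϑ, gamma ϑ = Real.sqrt
      (∫ yu : 𝓨 × (Fin p → ℝ), (ϖ yu.1 yu.2 ϑ - 1) ^ 2 ∂(μ.prod (stdGaussianPi p))))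
    (hgammadiff : ContDiffAt ℝ 1 gamma θ)
    (hmom9 : Integrable (fun yu : 𝓨 × (Fin p → ℝ) => ϖ yu.1 yu.2 θ ^ 9)
      (μ.prod (stdGaussianPi p)))
    (hmomγ4 : Integrable (fun y => (∫ u, (ϖ y u θ - 1) ^ 2 ∂(stdGaussianPi p)) ^ 2) μ)
    -- the θ-tilted measure and the loglikelihood-ratio error
    (Ptilde : ℕ → Measure Ω)
    (hPtilde : ∀ T, Ptilde T = P.withDensity fun ω =>
      ENNReal.ofReal (∏ t : Fin T,
        ((N T : ℝ)⁻¹ * ∑ i : Fin (N T), ϖ (Y ↑t ω) (U T t i ω) θ)))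
    (R : ℕ → Ω → ℝ)
    (hR : ∀ (T : ℕ) (ω : Ω), R T ω = ∑ t : Fin T,
      (Real.log ((N T : ℝ)⁻¹ * ∑ i : Fin (N T),
          ϖ (Y ↑t ω) (U' T t i ω) (θ + (Real.sqrt T)⁻¹ • ξ))
        - Real.log ((N T : ℝ)⁻¹ * ∑ i : Fin (N T), ϖ (Y ↑t ω) (U T t i ω) θ)))
    (𝒴 : ℕ → MeasurableSpace Ω)
    (h𝒴 : ∀ T, 𝒴 T = ⨆ t : Fin T, MeasurableSpace.comap (Y ↑t) inferInstance) :
    ∀ f : BoundedContinuousFunction ℝ ℝ, ∀ ε : ℝ, 0 < ε →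
      Tendsto (fun T => Ptilde T {ω | ε ≤
        dist (((Ptilde T)[(fun ω' => f ((T : ℝ) ^ ((α - 1) / 2) * R T ω'
            + (T : ℝ) ^ ((1 - α) / 2) * β⁻¹ * gamma θ ^ 2)) | 𝒴 T]) ω)
          (∫ x, f x ∂(gaussianReal 0 (Real.toNNReal (2 * β⁻¹ * gamma θ ^ 2))))})
        atTop (nhds 0) := by
  intro f ε hε
  set G := stdGaussianPi p with hG
  have hθT := tendsto_local_param θ ξ
  have hsq : ∀ ϑ, gamma ϑ ^ 2
      = ∫ yu : 𝓨 × (Fin p → ℝ), (ϖ yu.1 yu.2 ϑ - 1) ^ 2 ∂(μ.prod G) := fun ϑ => by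
    rw [hgamma, Real.sq_sqrt (integral_nonneg fun z => by positivity)]
  have h : GoodFamily μ G (fun y u => ϖ y u θ) :=
    ⟨hϖmeas θ, fun y u => hϖnonneg y u θ, hϖmean θ hθ, hmom9⟩
  set m0 := ∫ yu : 𝓨 × (Fin p → ℝ), ϖ yu.1 yu.2 θ ^ 9 ∂(μ.prod G) with hm0
  have hpos : 0 < m0 := h.integral_pow_pos
  -- the integral of a non-integrable function is `0` by convention, so positivity of the ninth
  -- moment near `θ` gives integrability there, and continuity gives a uniform bound
  have hev : ∀ᶠ T : ℕ in atTop,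
      GoodFamily μ G (fun y u => ϖ y u (θ + (√T)⁻¹ • ξ)) ∧
      ∫ yu : 𝓨 × (Fin p → ℝ), ϖ yu.1 yu.2 (θ + (√T)⁻¹ • ξ) ^ 9 ∂(μ.prod G) ≤ m0 + 1 := by
    have hc := hcont9.tendsto.comp hθT
    filter_upwards [hc.eventually (lt_mem_nhds hpos),
      hc.eventually (gt_mem_nhds (lt_add_one m0)),
      hθT.eventually (hΘopen.mem_nhds hθ)] with T h1 h2 h3
    exact ⟨⟨hϖmeas _, fun y u => hϖnonneg y u _, hϖmean _ h3,
      not_imp_comm.1 integral_undef h1.ne'⟩, h2.le⟩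
  obtain ⟨C, hC⟩ := exists_sq_sub_le (hgammadiff.differentiableAt (by norm_num)) ξ hθT
  set σ := β⁻¹ * gamma θ ^ 2 with hσ
  have hσ0 : 0 ≤ σ := by positivity
  obtain ⟨δ, hδ, H⟩ := exists_delta_condExp (Ω := Ω) (P := P) (μ := μ) (G := G) σ hσ0 f hε
  set K := 4 + m0 + (m0 + 1) with hK
  have hlim : Tendsto (fun T : ℕ => ENNReal.ofReal (δ⁻¹ *
      ((T * eta ((T : ℝ) ^ ((α - 1) / 2)) (N T)) * K
        + ((T : ℝ) ^ ((α - 1) / 2)) ^ 2 * T / N T ^ 2 * K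
        + 2 * ((T : ℝ) ^ ((α - 1) / 2) * (T * (gamma θ ^ 2 + gamma (θ + (√T)⁻¹ • ξ) ^ 2) / (2 * N T))
          - ((T : ℝ) ^ ((α - 1) / 2))⁻¹ * σ) ^ 2))) atTop (nhds 0) := by
    have l := ((((tendsto_mul_eta hα hβ hN).mul_const K).add
      ((tendsto_sq_mul_div hα hβ hN).mul_const K)).add
      (((tendsto_centering hα hβ hN hC).pow 2).const_mul 2)).const_mul δ⁻¹
    simpa using ENNReal.tendsto_ofReal l
  refine tendsto_of_tendsto_of_tendsto_of_le_of_le' tendsto_const_nhds hlim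
    (Eventually.of_forall fun _ => zero_le) ?_
  filter_upwards [hev, eventually_gt_atTop 0] with T hT hT0
  obtain ⟨hN0, -, -⟩ := N_bounds hβ hN hT0
  have hTr : (1 : ℝ) ≤ T := by exact_mod_cast hT0
  have hTp : (0 : ℝ) < T := by linarith
  set X : Ω → Fin T → 𝓨 := fun ω t => Y ↑t ω with hX
  have hXm : Measurable X := measurable_pi_lambda _ fun t => hYmeas _
  have h𝒴T : 𝒴 T = MeasurableSpace.comap X inferInstance := by
    simp only [h𝒴, MeasurableSpace.pi, MeasurableSpace.comap_iSup, MeasurableSpace.comap_comp]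
    rfl
  have main := H T (N T) _ _ h hT.1 (by exact_mod_cast hN0) ((T : ℝ) ^ ((α - 1) / 2))
    (by positivity) (Real.rpow_le_one_of_one_le_of_nonpos hTr (by linarith)) K
    (by rw [hK]; linarith [hT.2]) X
    (fun ω => ((fun ti : Fin T × Fin (N T) => U T ti.1 ti.2 ω),
            fun ti : Fin T × Fin (N T) => U' T ti.1 ti.2 ω)) hXm
    ((measurable_pi_lambda _ fun ti => hUmeas _ _ _).prodMk
      (measurable_pi_lambda _ fun ti => hU'meas _ _ _)) (hlaw T) (Ptilde T) (hPtilde T)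
  rw [← hsq, ← hsq] at main
  have ea : (T : ℝ) ^ ((1 - α) / 2) = ((T : ℝ) ^ ((α - 1) / 2))⁻¹ := by
    rw [← Real.rpow_neg hTp.le]; congr 1; ring
  have e2 : 2 * β⁻¹ * gamma θ ^ 2 = 2 * σ := by rw [hσ]; ring
  have e1 : ∀ ω, (T : ℝ) ^ ((α - 1) / 2) * R T ω + (T : ℝ) ^ ((1 - α) / 2) * β⁻¹ * gamma θ ^ 2
      = (T : ℝ) ^ ((α - 1) / 2) * R T ω + ((T : ℝ) ^ ((α - 1) / 2))⁻¹ * σ := fun ω => by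
    rw [ea, hσ]; ring
  simp_rw [e1, e2, h𝒴T, hR]
  exact main
end

section
/- Let κ > 0, let ν_κ = N(−κ²/2, κ²) be the Gaussian law on ℝ with mean −κ²/2 and variance κ², and set ϱ_U(κ) = ∫ min(1, e^w) ν_κ(dw). Then for every r ∈ [0, ∞), ∫ min(1, r e^w) ν_κ(dw) ≥ min(1, r) · ϱ_U(κ). Consequently, if π is a probability measure on a measurable space Θ, q a Markov kernel on Θ, and r_EX : Θ × Θ → [0,∞) measurable, then the average acceptance probabilities satisfy ϱ_U(κ) ∫∫ π(dθ) q(θ, dθ') min(1, r_EX(θ,θ')) ≤ ∫∫ π(dθ) q(θ, dθ') ∫ min(1, r_EX(θ,θ') e^w) ν_κ(dw). -/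
/-!
For `a, b ≥ 0` one has `min 1 a * min 1 b ≤ min 1 (a * b)`, since the left side is at most `1 * 1`
and at most `a * b`. With `a = r` and `b = exp w`, integrating over `w` gives the first inequality;
with `r = rEX θ θ'`, integrating further over `θ'` and `θ` gives the second. All integrands are
measurable with values in `[0, 1]`, so they are integrable for probability measures and the
monotonicity of the Bochner integral applies.
-/

open MeasureTheory ProbabilityTheory
open scoped ENNReal

lemma min_one_mul_min_one_le {a b : ℝ} (ha : 0 ≤ a) (hb : 0 ≤ b) :
    min 1 a * min 1 b ≤ min 1 (a * b) := by
  have hb' : 0 ≤ min 1 b := le_min zero_le_one hb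
  refine le_min (mul_le_one₀ (min_le_left _ _) hb' (min_le_left _ _)) ?_
  exact mul_le_mul (min_le_right _ _) (min_le_right _ _) hb' ha

lemma integrable_of_mem_unitInterval {α : Type*} [MeasurableSpace α] (μ : Measure α)
    [IsProbabilityMeasure μ] {f : α → ℝ} (hf : StronglyMeasurable f) (h0 : ∀ x, 0 ≤ f x)
    (h1 : ∀ x, f x ≤ 1) : Integrable f μ := by
  refine Integrable.of_bound hf.aestronglyMeasurable 1 (ae_of_all _ fun x => ?_)
  rw [Real.norm_of_nonneg (h0 x)]
  exact h1 x

lemma integral_le_one_of_le_one {α : Type*} [MeasurableSpace α] (μ : Measure α)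
    [IsProbabilityMeasure μ] {f : α → ℝ} (hf : StronglyMeasurable f) (h0 : ∀ x, 0 ≤ f x)
    (h1 : ∀ x, f x ≤ 1) : ∫ x, f x ∂μ ≤ 1 := by
  have h := integral_mono (integrable_of_mem_unitInterval μ hf h0 h1) (integrable_const (1 : ℝ)) h1
  simpa using h

/-- The iterated integral against a probability measure and a Markov kernel preserves an inequality
`c * f ≤ g` between measurable functions with values in `[0, 1]`. -/
lemma mul_integral_kernel_le {Θ : Type*} [MeasurableSpace Θ] (π : Measure Θ)
    [IsProbabilityMeasure π] (Q : Kernel Θ Θ) [IsMarkovKernel Q] {f g : Θ → Θ → ℝ} {c : ℝ}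
    (hf : StronglyMeasurable (Function.uncurry f)) (hf0 : ∀ x y, 0 ≤ f x y)
    (hf1 : ∀ x y, f x y ≤ 1)
    (hg : StronglyMeasurable (Function.uncurry g)) (hg0 : ∀ x y, 0 ≤ g x y)
    (hg1 : ∀ x y, g x y ≤ 1) (hfg : ∀ x y, c * f x y ≤ g x y) :
    c * ∫ x, (∫ y, f x y ∂(Q x)) ∂π ≤ ∫ x, (∫ y, g x y ∂(Q x)) ∂π := by
  have slice_meas {h : Θ → Θ → ℝ} (hh : StronglyMeasurable (Function.uncurry h)) (x : Θ) :
      StronglyMeasurable (h x) := hh.comp_measurable measurable_prodMk_left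
  have integrable_inner {h : Θ → Θ → ℝ} (hh : StronglyMeasurable (Function.uncurry h))
      (h0 : ∀ x y, 0 ≤ h x y) (h1 : ∀ x y, h x y ≤ 1) :
      Integrable (fun x => ∫ y, h x y ∂(Q x)) π :=
    integrable_of_mem_unitInterval π hh.integral_kernel_prod_right
      (fun x => integral_nonneg (h0 x))
      (fun x => integral_le_one_of_le_one (Q x) (slice_meas hh x) (h0 x) (h1 x))
  rw [← integral_const_mul]
  refine integral_mono ((integrable_inner hf hf0 hf1).const_mul c)
    (integrable_inner hg hg0 hg1) fun x => ?_
  simp only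
  rw [← integral_const_mul]
  exact integral_mono
    ((integrable_of_mem_unitInterval (Q x) (slice_meas hf x) (hf0 x) (hf1 x)).const_mul c)
    (integrable_of_mem_unitInterval (Q x) (slice_meas hg x) (hg0 x) (hg1 x)) (hfg x)

/-- Let `κ > 0`, `ν_κ = N(−κ²/2, κ²)` and
`ϱ_U(κ) = ∫ min(1, e^w) ν_κ(dw)`.  Then for every `r ≥ 0`,
`∫ min(1, r e^w) ν_κ(dw) ≥ min(1, r) ϱ_U(κ)`.  Consequently, for any probability
measure `π` on `Θ`, any Markov kernel `q` on `Θ` and any measurable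
`r_EX : Θ × Θ → [0,∞)`, the average acceptance probabilities satisfy
`ϱ_U(κ) ∫∫ π(dθ) q(θ,dθ') min(1, r_EX(θ,θ'))
  ≤ ∫∫ π(dθ) q(θ,dθ') ∫ min(1, r_EX(θ,θ') e^w) ν_κ(dw)`. -/
theorem stmt7 (κ : ℝ) (hκ : 0 < κ)
    (νκ : Measure ℝ) (hνκ : νκ = gaussianReal (-(κ ^ 2) / 2) (Real.toNNReal (κ ^ 2)))
    (ϱU : ℝ) (hϱU : ϱU = ∫ w, min 1 (Real.exp w) ∂νκ) :
    (∀ r : ℝ, 0 ≤ r → min 1 r * ϱU ≤ ∫ w, min 1 (r * Real.exp w) ∂νκ) ∧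
      ∀ (Θ : Type) (_ : MeasurableSpace Θ) (π : Measure Θ), IsProbabilityMeasure π →
        ∀ q : Θ → Measure Θ, Measurable q → (∀ θ, IsProbabilityMeasure (q θ)) →
        ∀ rEX : Θ → Θ → ℝ, Measurable (Function.uncurry rEX) → (∀ θ θ', 0 ≤ rEX θ θ') →
          ϱU * ∫ θ, (∫ θ', min 1 (rEX θ θ') ∂(q θ)) ∂π
            ≤ ∫ θ, (∫ θ', (∫ w, min 1 (rEX θ θ' * Real.exp w) ∂νκ) ∂(q θ)) ∂π := by
  have : IsProbabilityMeasure νκ := by rw [hνκ]; infer_instance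
  have hmeas (r : ℝ) : StronglyMeasurable fun w : ℝ => min 1 (r * Real.exp w) :=
    Measurable.stronglyMeasurable (by fun_prop)
  have hnonneg (r : ℝ) (hr : 0 ≤ r) (w : ℝ) : 0 ≤ min 1 (r * Real.exp w) :=
    le_min zero_le_one (mul_nonneg hr (Real.exp_pos w).le)
  have hle (r w : ℝ) : min 1 (r * Real.exp w) ≤ 1 := min_le_left _ _
  have hint (r : ℝ) (hr : 0 ≤ r) : Integrable (fun w => min 1 (r * Real.exp w)) νκ :=
    integrable_of_mem_unitInterval νκ (hmeas r) (hnonneg r hr) (hle r)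
  have key (r : ℝ) (hr : 0 ≤ r) : min 1 r * ϱU ≤ ∫ w, min 1 (r * Real.exp w) ∂νκ := by
    rw [hϱU, ← integral_const_mul]
    have hone : Integrable (fun w => min 1 (Real.exp w)) νκ := by
      simpa using hint 1 zero_le_one
    exact integral_mono (hone.const_mul _) (hint r hr)
      fun w => min_one_mul_min_one_le hr (Real.exp_pos w).le
  refine ⟨key, fun Θ _ π _ q hq hqp rEX hr hr0 => ?_⟩
  let Q : Kernel Θ Θ := ⟨q, hq⟩
  have : IsMarkovKernel Q := ⟨hqp⟩
  refine mul_integral_kernel_le π Q (f := fun θ θ' => min 1 (rEX θ θ'))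
    (g := fun θ θ' => ∫ w, min 1 (rEX θ θ' * Real.exp w) ∂νκ)
    (measurable_const.min hr).stronglyMeasurable
    (fun θ θ' => le_min zero_le_one (hr0 θ θ')) (fun _ _ => min_le_left _ _) ?_
    (fun θ θ' => integral_nonneg (hnonneg _ (hr0 θ θ')))
    (fun θ θ' => integral_le_one_of_le_one νκ (hmeas _) (hnonneg _ (hr0 θ θ')) (hle _))
    (fun θ θ' => by simpa only [mul_comm ϱU] using key _ (hr0 θ θ'))
  have hjoint : StronglyMeasurable fun z : (Θ × Θ) × ℝ =>
      min 1 (Function.uncurry rEX z.1 * Real.exp z.2) :=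
    Measurable.stronglyMeasurable (by fun_prop)
  exact hjoint.integral_prod_right'
end

section
/- For every κ > 0, ∫_ℝ min(1, e^w) φ(w; −κ²/2, κ²) dw = 2 Φ(−κ/2), where φ(·; m, σ²) is the density of N(m, σ²) and Φ is the standard normal cumulative distribution function. -/
open MeasureTheory ProbabilityTheory
open scoped ENNReal

/-!
Let `p` be the density of `N(-κ²/2, κ²)`. The relation between mean and variance gives the
detailed-balance identity `e^w p(w) = p(-w)`, so the integrand is the even function
`w ↦ p |w|` (`min_one_exp_mul_gaussianPDFReal`). The integral is therefore twice the mass that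
`N(-κ²/2, κ²)` gives to `[0, ∞)`. Since that measure is the law of `-κ X - κ²/2` for a standard
normal `X`, this mass is `P(X ≤ -κ/2)`.
-/

lemma exp_mul_gaussianPDFReal {κ : ℝ} (hκ : 0 < κ) (w : ℝ) :
    Real.exp w * gaussianPDFReal (-(κ ^ 2) / 2) (Real.toNNReal (κ ^ 2)) w
      = gaussianPDFReal (-(κ ^ 2) / 2) (Real.toNNReal (κ ^ 2)) (-w) := by
  simp only [gaussianPDFReal, Real.coe_toNNReal _ (sq_nonneg κ)]
  rw [mul_left_comm, ← Real.exp_add]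
  congr 2
  field_simp
  ring

lemma min_one_exp_mul_gaussianPDFReal {κ : ℝ} (hκ : 0 < κ) (w : ℝ) :
    min 1 (Real.exp w) * gaussianPDFReal (-(κ ^ 2) / 2) (Real.toNNReal (κ ^ 2)) w
      = gaussianPDFReal (-(κ ^ 2) / 2) (Real.toNNReal (κ ^ 2)) |w| := by
  rcases le_total 0 w with h | h
  · rw [min_eq_left (Real.one_le_exp h), one_mul, abs_of_nonneg h]
  · rw [min_eq_right (Real.exp_le_one_iff.mpr h), exp_mul_gaussianPDFReal hκ, abs_of_nonpos h]

lemma gaussianReal_Ici_zero {κ : ℝ} (hκ : 0 < κ) :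
    gaussianReal (-(κ ^ 2) / 2) (Real.toNNReal (κ ^ 2)) (Set.Ici 0)
      = gaussianReal 0 1 (Set.Iic (-(κ / 2))) := by
  have hmap : gaussianReal (-(κ ^ 2) / 2) (Real.toNNReal (κ ^ 2))
      = ((gaussianReal 0 1).map (fun x ↦ -κ * x)).map (fun x ↦ x + -(κ ^ 2) / 2) := by
    rw [gaussianReal_map_const_mul, gaussianReal_map_add_const]
    congr 1
    · ring
    · ext
      simp [Real.coe_toNNReal _ (sq_nonneg κ)]
  rw [hmap, Measure.map_map (by fun_prop) (by fun_prop),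
    Measure.map_apply (by fun_prop) measurableSet_Ici]
  congr 1
  ext x
  simp only [Set.mem_preimage, Set.mem_Ici, Set.mem_Iic, Function.comp]
  rw [show -κ * x + -(κ ^ 2) / 2 = κ * (-(κ / 2) - x) by ring, mul_nonneg_iff_of_pos_left hκ,
    sub_nonneg]

/-- For every `κ > 0`,
`∫ min(1, e^w) φ(w; −κ²/2, κ²) dw = 2 Φ(−κ/2)`, where `φ(·; m, σ²)` is the density of
`N(m, σ²)` and `Φ` is the standard normal cumulative distribution function. -/
theorem stmt8 (κ : ℝ) (hκ : 0 < κ) :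
    ∫ w, min 1 (Real.exp w) * gaussianPDFReal (-(κ ^ 2) / 2) (Real.toNNReal (κ ^ 2)) w
      = 2 * (gaussianReal 0 1 (Set.Iic (-(κ / 2)))).toReal := by
  have hv : Real.toNNReal (κ ^ 2) ≠ 0 := (Real.toNNReal_pos.mpr (by positivity)).ne'
  simp_rw [min_one_exp_mul_gaussianPDFReal hκ]
  rw [integral_comp_abs, ← integral_Ici_eq_integral_Ioi, ← gaussianReal_Ici_zero hκ,
    gaussianReal_apply_eq_integral _ hv, ENNReal.toReal_ofReal
      (integral_nonneg fun x ↦ gaussianPDFReal_nonneg _ _ x)]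
end

section
/- In the importance-sampling random effects setup, for each T put ε_{N_T}(Y_t) = N_T^{−1/2} Σ_{i=1}^{N_T} (ϖ(Y_t, U^T_{t,i}) − 1) and let k ≥ 2 be an integer. (i) If there exists δ > 0 with E[ϖ(Y₁, U^T_{1,1})^{k+δ}] < ∞, then T^{−1} Σ_{t=1}^T ε_{N_T}(Y_t)^k − E[ε_{N_T}(Y₁)^k] → 0 in probability as T → ∞. (ii) If E[ϖ(Y₁, U^T_{1,1})^{2k}] < ∞, then for every λ > 0, T^{−(1+λ)/2} Σ_{t=1}^T ε_{N_T}(Y_t)^k − T^{(1−λ)/2} E[ε_{N_T}(Y₁)^k] → 0 in probability as T → ∞. -/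
/-!
The theorem follows from two moment bounds for sums of independent centred variables, with
constants depending only on the exponent.

* Marcinkiewicz–Zygmund, `r ≥ 2`: `E|n^{-1/2} ∑ X_i|^r ≤ C_r max_i E|X_i|^r`.
* von Bahr–Esseen, `1 ≤ q ≤ 2`: `E|∑_{t ≤ T} W_t|^q ≤ C_q T max_t E|W_t|^q`.

Both come from a pointwise estimate
`|a + b|^r ≤ (1 + c)|a|^r + r sign(a)|a|^{r-1} b + D|b|^r`, applied with `a` a partial sum and `b`
the next summand: the linear term integrates to zero by independence, which gives the bound
`(1 + c)^n n D max_i E|X_i|^r` by induction (`integral_abs_sum_rpow_le`). For `r ≤ 2` one may take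
`c = 0`; for `r ≥ 2` one takes `c` of order `1/n` and `D` of order `n^{r/2-1}`, and
`(1 + K/n)^n ≤ e^K`.

Conditionally on `Y_t = y`, the error is a normalized sum of i.i.d. centred variables, so a moment of
`ϖ` of order `k q ≥ 2` bounds `E|ε_{N_T}(Y₁)|^{kq}` uniformly in `T`
(`exists_moment_bound_normErr`). The pairs `(Y_t, (U_{t,i})_i)` are i.i.d. for fixed `T`
(`iIndepFun_pairs_and_map`), so the second bound applies to `W_t = ε_{N_T}(Y_t)^k - E[ε_{N_T}(Y₁)^k]`
and shows that `c_T ∑ W_t → 0` in `L^q` whenever `c_T^q T → 0`. Part (i) is the case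
`c_T = T^{-1}`, `q = min(2, 1 + δ/k)`, and part (ii) the case `c_T = T^{-(1+λ)/2}`, `q = 2`.
-/

open MeasureTheory ProbabilityTheory Filter
open scoped ENNReal

/-! ### Pointwise inequalities for `|a + b| ^ r` -/

/-- Second-order Taylor bound, obtained from the tangent inequality
`(1 + x) ^ r ≤ 1 + r x (1 + x) ^ (r - 1)`. -/
lemma one_add_rpow_le {r x : ℝ} (hr : 1 ≤ r) (hx : |x| < 1) :
    (1 + x) ^ r ≤ 1 + r * x + r ^ 2 * 2 ^ r * x ^ 2 := by
  obtain ⟨h1, h2⟩ := abs_lt.mp hx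
  have hy : 0 < 1 + x := by linarith
  -- Bernoulli's inequality at the point `(1 + x)⁻¹`, multiplied by `(1 + x) ^ r`.
  have htan : (1 + x) ^ r ≤ 1 + r * x * (1 + x) ^ (r - 1) := by
    have h := one_add_mul_self_le_rpow_one_add (s := (1 + x)⁻¹ - 1)
      (by have := inv_pos.mpr hy; linarith) hr
    have hyr : 0 < (1 + x) ^ r := Real.rpow_pos_of_pos hy r
    rw [add_sub_cancel, Real.inv_rpow hy.le] at h
    have h' := mul_le_mul_of_nonneg_left h hyr.le
    rw [mul_inv_cancel₀ hyr.ne'] at h'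
    have e : (1 + x) ^ r * (1 + r * ((1 + x)⁻¹ - 1))
        = (1 + x) ^ r - r * x * (1 + x) ^ (r - 1) := by
      rw [Real.rpow_sub_one hy.ne']
      field_simp
      ring
    linarith
  have hlip : x * ((1 + x) ^ (r - 1) - 1) ≤ r * 2 ^ r * x ^ 2 := by
    have h2r : (1 : ℝ) ≤ 2 ^ r := Real.one_le_rpow (by norm_num) (by linarith)
    rcases le_total 0 x with h0 | h0
    · have ha : (1 + x) ^ (r - 1) ≤ (1 + x) ^ r :=
        Real.rpow_le_rpow_of_exponent_le (by linarith) (by linarith)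
      have hb : (1 + x) ^ r ≤ 2 ^ r := Real.rpow_le_rpow hy.le (by linarith) (by linarith)
      have hc : (1 + x) ^ (r - 1) - 1 ≤ r * x * 2 ^ r := by
        have : r * x * (1 + x) ^ (r - 1) ≤ r * x * 2 ^ r :=
          mul_le_mul_of_nonneg_left (ha.trans hb) (by positivity)
        linarith
      nlinarith [mul_le_mul_of_nonneg_left hc h0]
    · have ha : (1 + x) ^ r ≤ (1 + x) ^ (r - 1) :=
        Real.rpow_le_rpow_of_exponent_ge hy (by linarith) (by linarith)
      have hb := one_add_mul_self_le_rpow_one_add h1.le hr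
      have hc : r * x ≤ (1 + x) ^ (r - 1) - 1 := by linarith
      have hd := mul_le_mul_of_nonpos_left hc h0
      have : r * x ^ 2 * 1 ≤ r * x ^ 2 * 2 ^ r := mul_le_mul_of_nonneg_left h2r (by positivity)
      nlinarith
  nlinarith [mul_le_mul_of_nonneg_left hlip (by linarith : 0 ≤ r)]

/-- A constant `K_r` large enough for all the second-order bounds on `|a + b| ^ r` below. -/
noncomputable def taylorConst (r : ℝ) : ℝ := 2 ^ r + r + r ^ 2 * 2 ^ r

lemma taylorConst_nonneg {r : ℝ} (hr : 1 ≤ r) : 0 ≤ taylorConst r := by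
  unfold taylorConst; positivity

/-- Reduction of a bound on `|a + b| ^ r` to a bound on `x ^ 2` for `x = b / a`, `|x| < 1`. The
term linear in `b` is written with the quotient `|a| ^ r / a = sign a * |a| ^ (r - 1)`, which
has the correct value `0` at `a = 0`. -/
lemma abs_add_rpow_le {r c D : ℝ} (hr : 1 ≤ r) (hc : 0 ≤ c)
    (hD : taylorConst r ≤ D)
    (hx : ∀ x : ℝ, |x| < 1 → taylorConst r * x ^ 2 ≤ c + D * |x| ^ r) (a b : ℝ) :
    |a + b| ^ r ≤ (1 + c) * |a| ^ r + r * (|a| ^ r / a * b) + D * |b| ^ r := by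
  have har : 0 ≤ |a| ^ r := by positivity
  have hbr : 0 ≤ |b| ^ r := by positivity
  rcases le_or_gt |a| |b| with hab | hab
  · have h1 : |a + b| ^ r ≤ 2 ^ r * |b| ^ r := by
      rw [← Real.mul_rpow (by norm_num) (abs_nonneg b)]
      exact Real.rpow_le_rpow (abs_nonneg _) ((abs_add_le a b).trans (by linarith)) (by linarith)
    have h2 : |(|a| ^ r / a * b)| ≤ |b| ^ r := by
      rcases eq_or_ne a 0 with rfl | ha
      · simpa using hbr
      have ha' : 0 < |a| := abs_pos.mpr ha
      have hb' : 0 < |b| := ha'.trans_le hab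
      rw [abs_mul, abs_div, abs_of_nonneg har, ← Real.rpow_sub_one ha'.ne']
      calc |a| ^ (r - 1) * |b| ≤ |b| ^ (r - 1) * |b| := by
            gcongr
        _ = |b| ^ r := by
            rw [Real.rpow_sub_one hb'.ne']; field_simp
    have h3 := neg_le_of_abs_le h2
    have h4 : taylorConst r * |b| ^ r ≤ D * |b| ^ r := by gcongr
    have h5 : (2 ^ r + r) * |b| ^ r ≤ taylorConst r * |b| ^ r := by
      refine mul_le_mul_of_nonneg_right ?_ hbr
      unfold taylorConst
      have : 0 ≤ r ^ 2 * (2 : ℝ) ^ r := by positivity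
      linarith
    nlinarith [mul_nonneg hc har]
  · have ha' : 0 < |a| := (abs_nonneg b).trans_lt hab
    have ha : a ≠ 0 := abs_pos.mp ha'
    set x := b / a with hxdef
    have hx1 : |x| < 1 := by rw [hxdef, abs_div, div_lt_one ha']; exact hab
    have hb : b = a * x := by rw [hxdef]; field_simp
    have h0 : 0 ≤ 1 + x := by linarith [(abs_lt.mp hx1).1]
    have e1 : |a + b| ^ r = |a| ^ r * (1 + x) ^ r := by
      rw [hb, ← mul_one_add, abs_mul, abs_of_nonneg h0, Real.mul_rpow ha'.le h0]
    have e2 : |a| ^ r / a * b = |a| ^ r * x := by rw [hxdef]; field_simp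
    have e3 : |b| ^ r = |a| ^ r * |x| ^ r := by
      rw [hb, abs_mul, Real.mul_rpow ha'.le (abs_nonneg x)]
    have h1 := one_add_rpow_le hr hx1
    have h2 := hx x hx1
    have h3 : r ^ 2 * 2 ^ r * x ^ 2 ≤ taylorConst r * x ^ 2 := by
      unfold taylorConst
      gcongr
      have : 0 ≤ (2 : ℝ) ^ r := by positivity
      linarith
    rw [e1, e2, e3]
    nlinarith [mul_le_mul_of_nonneg_left (h1.trans (by linarith :
      1 + r * x + r ^ 2 * 2 ^ r * x ^ 2 ≤ 1 + r * x + (c + D * |x| ^ r))) har]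

/-- The pointwise inequality behind the von Bahr–Esseen moment bound. -/
lemma abs_add_rpow_le_of_le_two {r : ℝ} (hr : 1 ≤ r) (hr2 : r ≤ 2) (a b : ℝ) :
    |a + b| ^ r ≤ (1 + 0) * |a| ^ r + r * (|a| ^ r / a * b) + taylorConst r * |b| ^ r := by
  refine abs_add_rpow_le hr le_rfl le_rfl (fun x hx => ?_) a b
  rw [zero_add]
  refine mul_le_mul_of_nonneg_left ?_ (taylorConst_nonneg hr)
  rcases eq_or_ne x 0 with rfl | h0
  · rw [abs_zero, Real.zero_rpow (by linarith)]; norm_num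
  rw [← sq_abs, ← Real.rpow_natCast]
  exact Real.rpow_le_rpow_of_exponent_ge (abs_pos.mpr h0) hx.le (by exact_mod_cast hr2)

/-- The pointwise inequality behind the Marcinkiewicz–Zygmund moment bound for a sum of `n`
terms: the quadratic remainder `|a| ^ (r - 2) * b ^ 2` is at most `|a| ^ r / n` if
`b ^ 2 ≤ a ^ 2 / n`, and at most `n ^ (r / 2 - 1) * |b| ^ r` otherwise. -/
lemma abs_add_rpow_le_of_two_le {r n : ℝ} (hr : 2 ≤ r) (hn : 1 ≤ n) (a b : ℝ) :
    |a + b| ^ r ≤ (1 + taylorConst r / n) * |a| ^ r + r * (|a| ^ r / a * b)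
      + taylorConst r * n ^ (r / 2 - 1) * |b| ^ r := by
  have hK := taylorConst_nonneg (by linarith : 1 ≤ r)
  have hn0 : 0 < n := by linarith
  refine abs_add_rpow_le (by linarith) (by positivity) ?_ (fun x hx => ?_) a b
  · exact le_mul_of_one_le_right hK (Real.one_le_rpow hn (by linarith))
  rcases le_total (x ^ 2) (1 / n) with h | h
  · have : taylorConst r * x ^ 2 ≤ taylorConst r * (1 / n) := by gcongr
    have h2 : 0 ≤ taylorConst r * n ^ (r / 2 - 1) * |x| ^ r := by positivity
    rw [mul_one_div] at this
    linarith
  · have hx0 : 0 < x ^ 2 := lt_of_lt_of_le (by positivity) h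
    have h1 : 1 ≤ n * x ^ 2 := by rwa [div_le_iff₀' hn0] at h
    have h2 : x ^ 2 ≤ n ^ (r / 2 - 1) * |x| ^ r := by
      have e : |x| ^ r = (x ^ 2) ^ (r / 2 - 1) * x ^ 2 := by
        rw [Real.rpow_sub_one hx0.ne', div_mul_cancel₀ _ hx0.ne', ← sq_abs, ← Real.rpow_natCast,
          ← Real.rpow_mul (abs_nonneg x)]
        congr 1; push_cast; ring
      rw [e, ← mul_assoc, ← Real.mul_rpow hn0.le hx0.le]
      exact le_mul_of_one_le_left hx0.le (Real.one_le_rpow h1 (by linarith))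
    have h3 : 0 ≤ taylorConst r / n := by positivity
    have := mul_le_mul_of_nonneg_left h2 hK
    rw [← mul_assoc] at this
    linarith

/-! ### Moment bounds for sums of independent centred variables -/

lemma integrable_abs_rpow {Ω : Type*} [MeasurableSpace Ω] {P : Measure Ω} {f : Ω → ℝ} {r : ℝ}
    (hr : 0 < r) (hf : MemLp f (ENNReal.ofReal r) P) : Integrable (fun ω => |f ω| ^ r) P := by
  have := hf.integrable_norm_rpow (by simpa using hr) (by simp)
  simpa [ENNReal.toReal_ofReal hr.le] using this

lemma memLp_of_integrable_abs_rpow {Ω : Type*} [MeasurableSpace Ω] {P : Measure Ω} {f : Ω → ℝ}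
    {r : ℝ} (hr : 0 < r) (hm : AEStronglyMeasurable f P)
    (hf : Integrable (fun ω => |f ω| ^ r) P) : MemLp f (ENNReal.ofReal r) P := by
  rw [← integrable_norm_rpow_iff hm (by simpa using hr) (by simp)]
  simpa [ENNReal.toReal_ofReal hr.le] using hf

/-- A pointwise inequality for `|a + b| ^ r` yields a moment bound for sums of independent
centred variables: adding one summand `X j` to the partial sum `S`, the linear term has mean
`E[|S| ^ r / S] * E[X j] = 0`. -/
lemma integral_abs_sum_rpow_le {Ω : Type*} [MeasurableSpace Ω] {P : Measure Ω}
    [IsProbabilityMeasure P] {ι : Type*} {X : ι → Ω → ℝ} {r c D m : ℝ} (hr : 1 ≤ r) (hc : 0 ≤ c)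
    (hD : 0 ≤ D)
    (hpt : ∀ a b : ℝ, |a + b| ^ r ≤ (1 + c) * |a| ^ r + r * (|a| ^ r / a * b) + D * |b| ^ r)
    (hXm : ∀ i, Measurable (X i)) (hXi : iIndepFun X P)
    (hXL : ∀ i, MemLp (X i) (ENNReal.ofReal r) P) (hX0 : ∀ i, ∫ ω, X i ω ∂P = 0)
    (hX : ∀ i, ∫ ω, |X i ω| ^ r ∂P ≤ m) (hm : 0 ≤ m) (s : Finset ι) :
    ∫ ω, |∑ i ∈ s, X i ω| ^ r ∂P ≤ (1 + c) ^ s.card * s.card * (D * m) := by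
  classical
  have hr0 : 0 < r := by linarith
  induction s using Finset.induction_on with
  | empty => simp [Real.zero_rpow hr0.ne']
  | insert j s hj ih =>
    have hSm : Measurable (fun ω => ∑ i ∈ s, X i ω) := Finset.measurable_fun_sum _ fun i _ => hXm i
    have hSL : MemLp (fun ω => ∑ i ∈ s, X i ω) (ENNReal.ofReal r) P :=
      memLp_finsetSum _ fun i _ => hXL i
    have hSi := integrable_abs_rpow hr0 hSL
    have hZi := integrable_abs_rpow hr0 (hXL j)
    have hZ : Integrable (X j) P := (hXL j).integrable (by simpa using hr)
    have hψm : Measurable (fun a : ℝ => |a| ^ r / a) := by fun_prop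
    have hind : IndepFun (fun ω => |∑ i ∈ s, X i ω| ^ r / ∑ i ∈ s, X i ω) (X j) P := by
      have h := hXi.indepFun_finsetSum_of_notMem hXm hj
      have h2 := h.comp hψm measurable_id
      simpa [Function.comp_def] using h2
    have hψi : Integrable (fun ω => |∑ i ∈ s, X i ω| ^ r / ∑ i ∈ s, X i ω) P := by
      refine ((integrable_const 1).add hSi).mono' (hψm.comp hSm).aestronglyMeasurable
        (ae_of_all _ fun ω => ?_)
      simp only [Pi.add_apply, Real.norm_eq_abs]
      generalize ∑ i ∈ s, X i ω = a
      rw [abs_div, abs_of_nonneg (by positivity : 0 ≤ |a| ^ r)]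
      rcases eq_or_ne a 0 with rfl | ha
      · simp [Real.zero_rpow hr0.ne']
      have ha' := abs_pos.mpr ha
      have := Real.rpow_nonneg ha'.le r
      rcases le_total |a| 1 with h1 | h1
      · rw [← Real.rpow_sub_one ha'.ne']
        linarith [Real.rpow_le_one ha'.le h1 (by linarith : 0 ≤ r - 1)]
      · linarith [div_le_self this h1]
    have hcross : Integrable
        (fun ω => |∑ i ∈ s, X i ω| ^ r / (∑ i ∈ s, X i ω) * X j ω) P :=
      hind.integrable_mul hψi hZ
    have hmain : Integrable (fun ω => (1 + c) * |∑ i ∈ s, X i ω| ^ r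
        + r * (|∑ i ∈ s, X i ω| ^ r / (∑ i ∈ s, X i ω) * X j ω)) P :=
      (hSi.const_mul _).add (hcross.const_mul _)
    have hcross0 : ∫ ω, |∑ i ∈ s, X i ω| ^ r / (∑ i ∈ s, X i ω) * X j ω ∂P = 0 := by
      rw [hind.integral_fun_mul_eq_mul_integral hψi.aestronglyMeasurable
        hZ.aestronglyMeasurable, hX0, mul_zero]
    have hstep : ∫ ω, |∑ i ∈ insert j s, X i ω| ^ r ∂P
        ≤ (1 + c) * ∫ ω, |∑ i ∈ s, X i ω| ^ r ∂P + D * ∫ ω, |X j ω| ^ r ∂P := by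
      have hle : ∫ ω, |∑ i ∈ insert j s, X i ω| ^ r ∂P
          ≤ ∫ ω, ((1 + c) * |∑ i ∈ s, X i ω| ^ r
            + r * (|∑ i ∈ s, X i ω| ^ r / (∑ i ∈ s, X i ω) * X j ω) + D * |X j ω| ^ r) ∂P := by
        refine integral_mono (integrable_abs_rpow hr0 (memLp_finsetSum _ fun i _ => hXL i))
          (hmain.add (hZi.const_mul _)) fun ω => ?_
        simp only [Finset.sum_insert hj]
        rw [add_comm (X j ω)]
        exact hpt _ _
      refine hle.trans_eq ?_
      rw [integral_add hmain (hZi.const_mul _),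
        integral_add (hSi.const_mul _) (hcross.const_mul _), integral_const_mul,
        integral_const_mul, integral_const_mul, hcross0]
      ring
    rw [Finset.card_insert_of_notMem hj]
    have h1 : (1 : ℝ) ≤ (1 + c) ^ (s.card + 1) := one_le_pow₀ (by linarith)
    have h2 : D * ∫ ω, |X j ω| ^ r ∂P ≤ D * m := mul_le_mul_of_nonneg_left (hX j) hD
    have h3 : D * m ≤ (1 + c) ^ (s.card + 1) * (D * m) :=
      le_mul_of_one_le_left (by positivity) h1
    have h4 := mul_le_mul_of_nonneg_left ih (by linarith : 0 ≤ 1 + c)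
    calc _ ≤ _ := hstep
      _ ≤ (1 + c) * ((1 + c) ^ s.card * s.card * (D * m)) + (1 + c) ^ (s.card + 1) * (D * m) := by
          linarith
      _ = _ := by push_cast; ring

/-- Marcinkiewicz–Zygmund bound for normalized sums: the constant does not depend on `n`. -/
lemma integral_abs_normalized_sum_rpow_le {Ω : Type*} [MeasurableSpace Ω] {P : Measure Ω}
    [IsProbabilityMeasure P] {n : ℕ} {X : Fin n → Ω → ℝ} {r m : ℝ} (hr : 2 ≤ r)
    (hXm : ∀ i, Measurable (X i)) (hXi : iIndepFun X P)
    (hXL : ∀ i, MemLp (X i) (ENNReal.ofReal r) P) (hX0 : ∀ i, ∫ ω, X i ω ∂P = 0)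
    (hX : ∀ i, ∫ ω, |X i ω| ^ r ∂P ≤ m) (hm : 0 ≤ m) :
    ∫ ω, |(Real.sqrt n)⁻¹ * ∑ i, X i ω| ^ r ∂P
      ≤ Real.exp (taylorConst r) * taylorConst r * m := by
  have hr0 : 0 < r := by linarith
  have hK := taylorConst_nonneg (by linarith : 1 ≤ r)
  rcases Nat.eq_zero_or_pos n with rfl | hn
  · simp [Real.zero_rpow hr0.ne']
    positivity
  have hn' : (0 : ℝ) < n := by exact_mod_cast hn
  have hn1 : (1 : ℝ) ≤ n := by exact_mod_cast hn
  have h := integral_abs_sum_rpow_le (by linarith) (by positivity) (by positivity)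
    (abs_add_rpow_le_of_two_le hr hn1) hXm hXi hXL hX0 hX hm Finset.univ
  have e : ∀ ω, |(Real.sqrt n)⁻¹ * ∑ i, X i ω| ^ r
      = ((n : ℝ) ^ (r / 2))⁻¹ * |∑ i, X i ω| ^ r := by
    intro ω
    rw [abs_mul, abs_of_nonneg (by positivity), Real.mul_rpow (by positivity) (abs_nonneg _),
      Real.inv_rpow (by positivity), Real.sqrt_eq_rpow, ← Real.rpow_mul hn'.le]
    congr 3; ring
  simp_rw [e]
  rw [integral_const_mul, inv_mul_le_iff₀ (by positivity)]
  refine h.trans ?_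
  rw [Finset.card_univ, Fintype.card_fin, Real.rpow_sub_one hn'.ne']
  have hexp : (1 + taylorConst r / n) ^ n ≤ Real.exp (taylorConst r) := by
    calc (1 + taylorConst r / n) ^ n ≤ Real.exp (taylorConst r / n) ^ n := by
          gcongr
          rw [add_comm]; exact Real.add_one_le_exp _
      _ = _ := by rw [← Real.exp_nat_mul]; congr 1; field_simp
  calc _ = (1 + taylorConst r / n) ^ n * (taylorConst r * m * (n : ℝ) ^ (r / 2)) := by
        field_simp
    _ ≤ Real.exp (taylorConst r) * (taylorConst r * m * (n : ℝ) ^ (r / 2)) := by gcongr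
    _ = _ := by ring

/-! ### The weak law for triangular arrays -/

/-- Weak law for rowwise independent centred arrays with bounded moments of order `q ∈ [1, 2]`:
by the von Bahr–Esseen bound `E|∑ W_t| ^ q ≤ K_q T M`, the scaled sum converges to `0` in
`L^q`. -/
lemma tendstoInMeasure_sum {Ω : Type*} [MeasurableSpace Ω] {P : Measure Ω}
    [IsProbabilityMeasure P] {q M : ℝ} (hq : 1 ≤ q) (hq2 : q ≤ 2)
    {W : (T : ℕ) → Fin T → Ω → ℝ} (hWm : ∀ T t, Measurable (W T t))
    (hWi : ∀ T, iIndepFun (W T) P) (hWL : ∀ T t, MemLp (W T t) (ENNReal.ofReal q) P)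
    (hW0 : ∀ T t, ∫ ω, W T t ω ∂P = 0) (hW : ∀ T t, ∫ ω, |W T t ω| ^ q ∂P ≤ M) (hM : 0 ≤ M)
    {c : ℕ → ℝ} (hc0 : ∀ T, 0 ≤ c T)
    (hc : Tendsto (fun T : ℕ => c T ^ q * T) atTop (nhds 0)) :
    TendstoInMeasure P (fun T ω => c T * ∑ t, W T t ω) atTop (fun _ => 0) := by
  have hq0 : 0 < q := by linarith
  have hL : ∀ T, MemLp (fun ω => c T * ∑ t, W T t ω) (ENNReal.ofReal q) P := fun T =>
    (memLp_finsetSum _ fun t _ => hWL T t).const_mul _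
  refine tendstoInMeasure_of_tendsto_eLpNorm (p := ENNReal.ofReal q) (by simpa using hq0)
    (fun T => (hL T).aestronglyMeasurable) aestronglyMeasurable_const ?_
  have hbound : ∀ T, eLpNorm ((fun ω => c T * ∑ t, W T t ω) - fun _ => (0 : ℝ))
      (ENNReal.ofReal q) P ≤ ENNReal.ofReal ((c T ^ q * T * (taylorConst q * M)) ^ q⁻¹) := by
    intro T
    have h := integral_abs_sum_rpow_le hq le_rfl (taylorConst_nonneg hq)
      (abs_add_rpow_le_of_le_two hq hq2) (hWm T) (hWi T) (hWL T) (hW0 T) (hW T) hM Finset.univ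
    have e0 : ((fun ω => c T * ∑ t, W T t ω) - fun _ => (0 : ℝ))
      = fun ω => c T * ∑ t, W T t ω := by ext; simp
    rw [e0, (hL T).eLpNorm_eq_integral_rpow_norm (by simpa using hq0) (by simp),
      ENNReal.toReal_ofReal hq0.le]
    refine ENNReal.ofReal_le_ofReal (Real.rpow_le_rpow
      (integral_nonneg fun ω => by positivity) ?_ (by positivity))
    have e : ∀ ω, ‖c T * ∑ t, W T t ω‖ ^ q = c T ^ q * |∑ t, W T t ω| ^ q := by
      intro ω
      rw [Real.norm_eq_abs, abs_mul, abs_of_nonneg (hc0 T),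
        Real.mul_rpow (hc0 T) (abs_nonneg _)]
    simp_rw [e]
    rw [integral_const_mul, mul_assoc]
    refine mul_le_mul_of_nonneg_left (h.trans_eq ?_) (Real.rpow_nonneg (hc0 T) q)
    simp
  refine tendsto_of_tendsto_of_tendsto_of_le_of_le tendsto_const_nhds ?_ (fun _ => zero_le)
    hbound
  have h1 : Tendsto (fun T : ℕ => (c T ^ q * T * (taylorConst q * M)) ^ q⁻¹) atTop (nhds 0) := by
    have := (hc.mul_const (taylorConst q * M)).rpow_const (p := q⁻¹) (Or.inr (by positivity))
    rwa [zero_mul, Real.zero_rpow (by positivity)] at this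
  simpa using ENNReal.tendsto_ofReal h1

/-! ### Moments of the normalized importance-sampling error -/

instance isProbabilityMeasure_stdGaussianPi (p : ℕ) :
    IsProbabilityMeasure (stdGaussianPi p) := by
  unfold stdGaussianPi; infer_instance

/-- The normalized importance-sampling error `ε_n` as a function of one observation `z.1` and the
`n` draws `z.2` attached to it; it is `0` for `n = 0`. -/
noncomputable def normErr {𝓨 𝓤 : Type*} (ϖ : 𝓨 → 𝓤 → ℝ) (n : ℕ) (z : 𝓨 × (Fin n → 𝓤)) : ℝ :=
  (Real.sqrt n)⁻¹ * ∑ i : Fin n, (ϖ z.1 (z.2 i) - 1)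

lemma measurable_normErr {𝓨 𝓤 : Type*} [MeasurableSpace 𝓨] [MeasurableSpace 𝓤]
    {ϖ : 𝓨 → 𝓤 → ℝ} (hϖ : Measurable (Function.uncurry ϖ)) (n : ℕ) :
    Measurable (normErr ϖ n) := by
  unfold normErr
  refine (Finset.measurable_fun_sum _ fun i _ => ?_).const_mul _
  have h : Measurable fun z : 𝓨 × (Fin n → 𝓤) => (z.1, z.2 i) := by fun_prop
  exact (hϖ.comp h).sub_const 1

/-- The error `ε_n` has a moment of order `r` bounded uniformly in `n` if `ϖ` has a moment of
order `r ≥ 2`. The Marcinkiewicz–Zygmund bound applies conditionally on `y`, since the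
draws are then i.i.d. and `ϖ y · - 1` is centred; its right-hand side is integrated over `y`. -/
lemma exists_moment_bound_normErr {𝓨 𝓤 : Type*} [MeasurableSpace 𝓨] [MeasurableSpace 𝓤]
    (μ : Measure 𝓨) [IsProbabilityMeasure μ] (γ : Measure 𝓤) [IsProbabilityMeasure γ]
    {ϖ : 𝓨 → 𝓤 → ℝ} (hϖ : Measurable (Function.uncurry ϖ)) (hϖ0 : ∀ y u, 0 ≤ ϖ y u)
    (hmean : ∀ᵐ y ∂μ, ∫ u, ϖ y u ∂γ = 1) {r : ℝ} (hr : 2 ≤ r)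
    (hint : Integrable (fun z : 𝓨 × 𝓤 => ϖ z.1 z.2 ^ r) (μ.prod γ)) :
    ∃ M : ℝ, 0 ≤ M ∧ ∀ n : ℕ,
      Integrable (fun z => |normErr ϖ n z| ^ r) (μ.prod (Measure.pi fun _ : Fin n => γ)) ∧
      ∫ z, |normErr ϖ n z| ^ r ∂(μ.prod (Measure.pi fun _ : Fin n => γ)) ≤ M := by
  have hr0 : 0 < r := by linarith
  have hK := taylorConst_nonneg (by linarith : 1 ≤ r)
  have hcenter : Integrable (fun z : 𝓨 × 𝓤 => |ϖ z.1 z.2 - 1| ^ r) (μ.prod γ) := by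
    refine integrable_abs_rpow hr0 (MemLp.sub ?_ (memLp_const 1))
    refine memLp_of_integrable_abs_rpow hr0 hϖ.aestronglyMeasurable ?_
    simpa only [abs_of_nonneg (hϖ0 _ _)] using hint
  set C := Real.exp (taylorConst r) * taylorConst r with hC
  have hC0 : 0 ≤ C := by positivity
  set m : 𝓨 → ℝ := fun y => ∫ u, |ϖ y u - 1| ^ r ∂γ with hm
  have hm0 : ∀ y, 0 ≤ m y := fun y => integral_nonneg fun u => by positivity
  have hmi : Integrable m μ := hcenter.integral_prod_left
  refine ⟨∫ y, C * m y ∂μ, integral_nonneg fun y => mul_nonneg hC0 (hm0 y), fun n => ?_⟩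
  have hϖy : ∀ y, Measurable (ϖ y) := fun y => hϖ.comp measurable_prodMk_left
  have hsec : ∀ᵐ y ∂μ, Integrable (fun u => |normErr ϖ n (y, u)| ^ r)
        (Measure.pi fun _ : Fin n => γ) ∧
      ∫ u, |normErr ϖ n (y, u)| ^ r ∂(Measure.pi fun _ : Fin n => γ) ≤ C * m y := by
    filter_upwards [hmean, hcenter.prod_right_ae] with y hy1 hyi
    have hL1 : MemLp (fun u => ϖ y u - 1) (ENNReal.ofReal r) γ :=
      memLp_of_integrable_abs_rpow hr0 ((hϖy y).sub_const 1).aestronglyMeasurable hyi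
    have hmp : ∀ i : Fin n, MeasurePreserving (Function.eval i)
        (Measure.pi fun _ : Fin n => γ) γ := fun i => measurePreserving_eval _ i
    have hL : ∀ i : Fin n, MemLp (fun u : Fin n → 𝓤 => ϖ y (u i) - 1) (ENNReal.ofReal r)
        (Measure.pi fun _ : Fin n => γ) := fun i => hL1.comp_measurePreserving (hmp i)
    -- A non-integrable function would have Bochner integral `0`, not `1`.
    have hint1 : Integrable (ϖ y) γ := by
      by_contra h
      rw [integral_undef h] at hy1
      exact zero_ne_one hy1
    refine ⟨integrable_abs_rpow hr0 ((memLp_finsetSum _ fun i _ => hL i).const_mul _), ?_⟩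
    refine integral_abs_normalized_sum_rpow_le (X := fun i (u : Fin n → 𝓤) => ϖ y (u i) - 1) hr
      (fun i => ((hϖy y).comp (measurable_pi_apply i)).sub_const 1)
      (iIndepFun_pi (X := fun _ u => ϖ y u - 1)
        fun i => ((hϖy y).sub_const 1).aemeasurable) hL (fun i => ?_) (fun i => ?_) (hm0 y)
    · rw [integral_comp_eval (μ := fun _ : Fin n => γ) (f := fun u => ϖ y u - 1)
        ((hϖy y).sub_const 1).aestronglyMeasurable, integral_sub hint1 (integrable_const 1), hy1]
      simp
    · rw [integral_comp_eval (μ := fun _ : Fin n => γ) (f := fun u => |ϖ y u - 1| ^ r)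
        hyi.aestronglyMeasurable]
  have hmeas : AEStronglyMeasurable (fun z => |normErr ϖ n z| ^ r)
      (μ.prod (Measure.pi fun _ : Fin n => γ)) := by
    have := measurable_normErr hϖ n
    exact Measurable.aestronglyMeasurable (by fun_prop)
  have habs : ∀ z, ‖|normErr ϖ n z| ^ r‖ = |normErr ϖ n z| ^ r := fun z =>
    Real.norm_of_nonneg (by positivity)
  have hI : Integrable (fun z => |normErr ϖ n z| ^ r)
      (μ.prod (Measure.pi fun _ : Fin n => γ)) := by
    refine (integrable_prod_iff hmeas).mpr ⟨hsec.mono fun y hy => hy.1, ?_⟩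
    refine (hmi.const_mul C).mono' hmeas.norm.integral_prod_right' ?_
    filter_upwards [hsec] with y hy
    simp_rw [habs]
    rw [Real.norm_of_nonneg (integral_nonneg fun u => by positivity)]
    exact hy.2
  refine ⟨hI, ?_⟩
  rw [integral_prod _ hI]
  exact integral_mono_ae hI.integral_prod_left (hmi.const_mul C) (hsec.mono fun y hy => hy.2)

/-- Passage from a moment of order `k q` of `e` to a moment of order `q` of the centred power
`e ^ k - E[e ^ k]`, with a bound depending only on that of the former. -/
lemma exists_centered_power_bound {q M : ℝ} (hq : 1 ≤ q) (hM : 0 ≤ M) (k : ℕ) :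
    ∃ M' : ℝ, 0 ≤ M' ∧ ∀ (Ω : Type*) [MeasurableSpace Ω] (Q : Measure Ω) [IsProbabilityMeasure Q]
      (e : Ω → ℝ), Measurable e → Integrable (fun z => |e z| ^ (k * q)) Q →
      ∫ z, |e z| ^ (k * q) ∂Q ≤ M →
      MemLp (fun z => e z ^ k - ∫ z, e z ^ k ∂Q) (ENNReal.ofReal q) Q ∧
      ∫ z, (e z ^ k - ∫ z, e z ^ k ∂Q) ∂Q = 0 ∧
      ∫ z, |e z ^ k - ∫ z, e z ^ k ∂Q| ^ q ∂Q ≤ M' := by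
  have hq0 : 0 < q := by linarith
  refine ⟨2 ^ q * (M + (1 + M) ^ q), by positivity, fun Ω _ Q _ e hem hei heM => ?_⟩
  have epow : ∀ z, |e z ^ k| ^ q = |e z| ^ (k * q) := fun z => by
    rw [abs_pow, ← Real.rpow_natCast, ← Real.rpow_mul (abs_nonneg _)]
  simp_rw [← epow] at hei heM
  have hL : MemLp (fun z => e z ^ k) (ENNReal.ofReal q) Q :=
    memLp_of_integrable_abs_rpow hq0 (hem.pow_const k).aestronglyMeasurable hei
  have hi : Integrable (fun z => e z ^ k) Q := hL.integrable (by simpa using hq)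
  have hL' : MemLp (fun z => e z ^ k - ∫ z, e z ^ k ∂Q) (ENNReal.ofReal q) Q :=
    hL.sub (memLp_const _)
  refine ⟨hL', by rw [integral_sub hi (integrable_const _)]; simp, ?_⟩
  set E := ∫ z, e z ^ k ∂Q with hE
  have hEle : |E| ≤ 1 + M := by
    calc |E| ≤ ∫ z, |e z ^ k| ∂Q := abs_integral_le_integral_abs
      _ ≤ ∫ z, (1 + |e z ^ k| ^ q) ∂Q := by
          refine integral_mono hi.abs ((integrable_const _).add hei) fun z => ?_
          simp only
          generalize e z ^ k = a
          have : 0 ≤ |a| ^ q := by positivity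
          rcases le_total |a| 1 with h | h
          · linarith
          · linarith [Real.self_le_rpow_of_one_le h hq]
      _ = 1 + ∫ z, |e z ^ k| ^ q ∂Q := by
          rw [integral_add (integrable_const _) hei]; simp
      _ ≤ 1 + M := by linarith
  have hpt : ∀ a : ℝ, |a - E| ^ q ≤ 2 ^ q * (|a| ^ q + (1 + M) ^ q) := by
    intro a
    have h1 : |a - E| ≤ 2 * max |a| (1 + M) := by
      have := abs_sub a E
      linarith [le_max_left |a| (1 + M), le_max_right |a| (1 + M)]
    calc |a - E| ^ q ≤ (2 * max |a| (1 + M)) ^ q := by gcongr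
      _ = 2 ^ q * (max |a| (1 + M)) ^ q := Real.mul_rpow (by norm_num) (by positivity)
      _ ≤ _ := by
          gcongr
          have h1 : 0 ≤ |a| ^ q := by positivity
          have h2 : 0 ≤ (1 + M) ^ q := by positivity
          rcases max_choice |a| (1 + M) with h | h <;> rw [h] <;> linarith
  calc _ ≤ ∫ z, 2 ^ q * (|e z ^ k| ^ q + (1 + M) ^ q) ∂Q :=
        integral_mono (integrable_abs_rpow hq0 hL')
          ((hei.add (integrable_const _)).const_mul _) fun z => hpt _
    _ = 2 ^ q * (∫ z, |e z ^ k| ^ q ∂Q + (1 + M) ^ q) := by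
        rw [integral_const_mul, integral_add hei (integrable_const _)]; simp
    _ ≤ _ := by gcongr

/-! ### Rearranging the joint law into i.i.d. pairs -/

/-- If all the `Y_t` and `U_{t,i}` have product law, then grouping them by `t` gives the product
of `T` copies of `μ ⊗ γ^{⊗n}`. -/
lemma map_pairs_eq_pi {Ω 𝓨 𝓤 : Type*} [MeasurableSpace Ω] [MeasurableSpace 𝓨]
    [MeasurableSpace 𝓤] {P : Measure Ω} (μ : Measure 𝓨) [IsProbabilityMeasure μ]
    (γ : Measure 𝓤) [IsProbabilityMeasure γ] {T n : ℕ} {Y : Fin T → Ω → 𝓨}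
    {U : Fin T → Fin n → Ω → 𝓤} (hY : ∀ t, Measurable (Y t)) (hU : ∀ t i, Measurable (U t i))
    (hlaw : P.map (fun ω => ((fun t => Y t ω), fun ti : Fin T × Fin n => U ti.1 ti.2 ω))
      = (Measure.pi fun _ : Fin T => μ).prod (Measure.pi fun _ : Fin T × Fin n => γ)) :
    P.map (fun ω t => (Y t ω, fun i => U t i ω))
      = Measure.pi fun _ : Fin T => μ.prod (Measure.pi fun _ : Fin n => γ) := by
  have hcurry : MeasurePreserving (MeasurableEquiv.curry (Fin T) (Fin n) 𝓤).symm
      (Measure.pi fun _ : Fin T => Measure.pi fun _ : Fin n => γ)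
      (Measure.pi fun _ : Fin T × Fin n => γ) := by
    refine ⟨MeasurableEquiv.measurable _, (Measure.pi_eq fun s hs => ?_).symm⟩
    rw [MeasurableEquiv.map_apply]
    have : (MeasurableEquiv.curry (Fin T) (Fin n) 𝓤).symm ⁻¹' (Set.univ.pi s)
        = Set.univ.pi fun t => Set.univ.pi fun i => s (t, i) := by
      ext u
      simp [Set.mem_pi, MeasurableEquiv.curry, Function.uncurry]
    rw [this, Measure.pi_pi]
    simp_rw [Measure.pi_pi]
    rw [Fintype.prod_prod_type]
  have hmp := ((MeasurePreserving.id (Measure.pi fun _ : Fin T => μ)).prod hcurry).comp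
    (measurePreserving_arrowProdEquivProdArrow 𝓨 (Fin n → 𝓤) (Fin T) (fun _ => μ)
      (fun _ => Measure.pi fun _ : Fin n => γ))
  have hV : Measurable fun ω t => (Y t ω, fun i => U t i ω) := by fun_prop
  set Φ : (Fin T → 𝓨 × (Fin n → 𝓤)) → (Fin T → 𝓨) × (Fin T × Fin n → 𝓤) :=
    fun v => (fun t => (v t).1, fun ti => (v ti.1).2 ti.2) with hΦ
  have hΦmp : MeasurePreserving Φ
      (Measure.pi fun _ : Fin T => μ.prod (Measure.pi fun _ : Fin n => γ))
      ((Measure.pi fun _ : Fin T => μ).prod (Measure.pi fun _ : Fin T × Fin n => γ)) := hmp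
  set Ψ : (Fin T → 𝓨) × (Fin T × Fin n → 𝓤) → (Fin T → 𝓨 × (Fin n → 𝓤)) :=
    fun w t => (w.1 t, fun i => w.2 (t, i)) with hΨ
  have hΨm : Measurable Ψ := by
    simp only [hΨ]
    fun_prop
  have h1 : P.map (fun ω t => (Y t ω, fun i => U t i ω))
      = (P.map (fun ω => ((fun t => Y t ω), fun ti : Fin T × Fin n => U ti.1 ti.2 ω))).map Ψ := by
    rw [Measure.map_map hΨm (by fun_prop)]
    rfl
  rw [h1, hlaw, ← hΦmp.map_eq, Measure.map_map hΨm hΦmp.measurable]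
  have : Ψ ∘ Φ = id := rfl
  rw [this, Measure.map_id]

/-- The pairs `(Y_t, (U_{t,i})_i)` are i.i.d. with law `μ ⊗ γ^{⊗n}`. -/
lemma iIndepFun_pairs_and_map {Ω 𝓨 𝓤 : Type*} [MeasurableSpace Ω] [MeasurableSpace 𝓨]
    [MeasurableSpace 𝓤] {P : Measure Ω} [IsProbabilityMeasure P]
    (μ : Measure 𝓨) [IsProbabilityMeasure μ]
    (γ : Measure 𝓤) [IsProbabilityMeasure γ] {T n : ℕ} {Y : Fin T → Ω → 𝓨}
    {U : Fin T → Fin n → Ω → 𝓤} (hY : ∀ t, Measurable (Y t)) (hU : ∀ t i, Measurable (U t i))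
    (hlaw : P.map (fun ω => ((fun t => Y t ω), fun ti : Fin T × Fin n => U ti.1 ti.2 ω))
      = (Measure.pi fun _ : Fin T => μ).prod (Measure.pi fun _ : Fin T × Fin n => γ)) :
    iIndepFun (fun t ω => (Y t ω, fun i => U t i ω)) P ∧
      ∀ t, MeasurePreserving (fun ω => (Y t ω, fun i => U t i ω)) P
        (μ.prod (Measure.pi fun _ : Fin n => γ)) := by
  have h := map_pairs_eq_pi μ γ hY hU hlaw
  have hVm : ∀ t, Measurable fun ω => (Y t ω, fun i => U t i ω) := fun t => by fun_prop
  have hmp : ∀ t, MeasurePreserving (fun ω => (Y t ω, fun i => U t i ω)) P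
        (μ.prod (Measure.pi fun _ : Fin n => γ)) := fun t =>
    (measurePreserving_eval (fun _ : Fin T => μ.prod (Measure.pi fun _ : Fin n => γ)) t).comp
      (⟨by fun_prop, h⟩ : MeasurePreserving (fun ω t => (Y t ω, fun i => U t i ω)) P _)
  refine ⟨?_, hmp⟩
  rw [iIndepFun_iff_map_fun_eq_pi_map fun t => (hVm t).aemeasurable, h]
  simp_rw [(hmp _).map_eq]

lemma integral_comp_measurePreserving {Ω Z : Type*} [MeasurableSpace Ω] [MeasurableSpace Z]
    {P : Measure Ω} {ν : Measure Z} {f : Ω → Z} (hf : MeasurePreserving f P ν) {g : Z → ℝ}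
    (hg : Measurable g) : ∫ ω, g (f ω) ∂P = ∫ z, g z ∂ν := by
  rw [← hf.map_eq, integral_map hf.aemeasurable hg.aestronglyMeasurable]

/-- The centred powers `ε_{N_T}(Y_t)^k - E[ε_{N_T}(Y₁)^k]`, summed over `t` and scaled by `c T`,
vanish in probability as soon as `ϖ` has a moment of order `k q ≥ 2` for some `q ∈ [1, 2]` with
`c(T)^q T → 0`. Both parts of the theorem are instances. -/
lemma tendstoInMeasure_centered_sum {Ω 𝓨 𝓤 : Type*} [MeasurableSpace Ω] [MeasurableSpace 𝓨]
    [MeasurableSpace 𝓤] {P : Measure Ω} [IsProbabilityMeasure P]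
    (μ : Measure 𝓨) [IsProbabilityMeasure μ]
    (γ : Measure 𝓤) [IsProbabilityMeasure γ] {N : ℕ → ℕ}
    {Y : ℕ → Ω → 𝓨} (hY : ∀ t, Measurable (Y t))
    {U : (T : ℕ) → Fin T → Fin (N T) → Ω → 𝓤} (hU : ∀ T t i, Measurable (U T t i))
    (hlaw : ∀ T, P.map
        (fun ω => ((fun t : Fin T => Y t ω), fun ti : Fin T × Fin (N T) => U T ti.1 ti.2 ω))
      = (Measure.pi fun _ : Fin T => μ).prod (Measure.pi fun _ : Fin T × Fin (N T) => γ))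
    {ϖ : 𝓨 → 𝓤 → ℝ} (hϖ : Measurable (Function.uncurry ϖ)) (hϖ0 : ∀ y u, 0 ≤ ϖ y u)
    (hmean : ∀ᵐ y ∂μ, ∫ u, ϖ y u ∂γ = 1) {k : ℕ} {q : ℝ} (hq : 1 ≤ q) (hq2 : q ≤ 2)
    (hkq : 2 ≤ k * q)
    (hint : Integrable (fun z : 𝓨 × 𝓤 => ϖ z.1 z.2 ^ (k * q)) (μ.prod γ))
    {c : ℕ → ℝ} (hc0 : ∀ T, 0 ≤ c T)
    (hc : Tendsto (fun T : ℕ => c T ^ q * T) atTop (nhds 0)) :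
    TendstoInMeasure P (fun T ω => c T * ∑ t : Fin T,
      (normErr ϖ (N T) (Y t ω, fun i => U T t i ω) ^ k
        - ∫ z, normErr ϖ (N T) z ^ k ∂(μ.prod (Measure.pi fun _ : Fin (N T) => γ))))
      atTop (fun _ => 0) := by
  obtain ⟨M, hM, hbd⟩ := exists_moment_bound_normErr μ γ hϖ hϖ0 hmean hkq hint
  obtain ⟨M', hM', hbd'⟩ := exists_centered_power_bound hq hM k
  have hV := fun T => iIndepFun_pairs_and_map μ γ (fun t : Fin T => hY t) (hU T) (hlaw T)
  have hcen := fun T => hbd' _ (μ.prod (Measure.pi fun _ : Fin (N T) => γ)) (normErr ϖ (N T))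
    (measurable_normErr hϖ _) (hbd (N T)).1 (hbd (N T)).2
  have hgm : ∀ T, Measurable fun z => normErr ϖ (N T) z ^ k
      - ∫ z, normErr ϖ (N T) z ^ k ∂(μ.prod (Measure.pi fun _ : Fin (N T) => γ)) := fun T =>
    ((measurable_normErr hϖ _).pow_const k).sub_const _
  refine tendstoInMeasure_sum (W := fun T t ω => normErr ϖ (N T) (Y t ω, fun i => U T t i ω) ^ k
        - ∫ z, normErr ϖ (N T) z ^ k ∂(μ.prod (Measure.pi fun _ : Fin (N T) => γ)))
    hq hq2 (fun T t => (hgm T).comp ((hV T).2 t).measurable)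
    (fun T => (hV T).1.comp (fun _ => _) fun _ => hgm T)
    (fun T t => (hcen T).1.comp_measurePreserving ((hV T).2 t)) (fun T t => ?_)
    (fun T t => ?_) hM' hc0 hc
  · exact (integral_comp_measurePreserving ((hV T).2 t) (hgm T)).trans (hcen T).2.1
  · have hm : Measurable fun z => |normErr ϖ (N T) z ^ k
      - ∫ z, normErr ϖ (N T) z ^ k ∂(μ.prod (Measure.pi fun _ : Fin (N T) => γ))| ^ q := by
      have := hgm T
      fun_prop
    exact (integral_comp_measurePreserving ((hV T).2 t) hm).trans_le (hcen T).2.2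

/-- weak law of large numbers for the triangular array of normalized
importance-sampling errors.  In the importance-sampling random effects setup, put
`ε_{N_T}(Y_t) = N_T^{−1/2} Σ_i (ϖ(Y_t, U^T_{t,i}) − 1)` and let `k ≥ 2` be an integer.
(i) If `E[ϖ(Y₁,U₁₁)^{k+δ}] < ∞` for some `δ > 0`, then
`T⁻¹ Σ_{t≤T} ε_{N_T}(Y_t)^k − E[ε_{N_T}(Y₁)^k] → 0` in probability.
(ii) If `E[ϖ(Y₁,U₁₁)^{2k}] < ∞`, then for every `λ > 0`,
`T^{−(1+λ)/2} Σ_{t≤T} ε_{N_T}(Y_t)^k − T^{(1−λ)/2} E[ε_{N_T}(Y₁)^k] → 0` in probability.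
(The expectation `E[ε_{N_T}(Y₁)^k]` is written as the integral of the same functional
against the law `μ ⊗ (N(0,I_p))^{⊗N_T}` of `(Y₁, U^T_{1,1:N_T})`.) -/
theorem stmt13
    {Ω : Type*} [MeasurableSpace Ω] (P : Measure Ω) [IsProbabilityMeasure P]
    {𝓨 : Type*} [MeasurableSpace 𝓨] (μ : Measure 𝓨) [IsProbabilityMeasure μ]
    (p : ℕ) (α β : ℝ) (hα : 1 / 3 < α) (hα1 : α ≤ 1) (hβ : 0 < β)
    (N : ℕ → ℕ) (hN : ∀ T, N T = Nat.ceil (β * (T : ℝ) ^ α))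
    (Y : ℕ → Ω → 𝓨) (hYmeas : ∀ t, Measurable (Y t))
    (U : (T : ℕ) → Fin T → Fin (N T) → Ω → Fin p → ℝ)
    (hUmeas : ∀ T t i, Measurable (U T t i))
    (ϖ : 𝓨 → (Fin p → ℝ) → ℝ)
    (hϖmeas : Measurable (Function.uncurry ϖ))
    (hϖnonneg : ∀ y u, 0 ≤ ϖ y u)
    (hϖmean : ∀ᵐ y ∂μ, (∫ u, ϖ y u ∂(stdGaussianPi p)) = 1)
    (hlaw : ∀ T, Measure.map
        (fun ω => ((fun t : Fin T => Y ↑t ω),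
          fun ti : Fin T × Fin (N T) => U T ti.1 ti.2 ω)) P
      = (Measure.pi fun _ : Fin T => μ).prod
          (Measure.pi fun _ : Fin T × Fin (N T) => stdGaussianPi p))
    (ε : (T : ℕ) → Fin T → Ω → ℝ)
    (hε : ∀ T t ω, ε T t ω
      = (Real.sqrt (N T))⁻¹ * ∑ i : Fin (N T), (ϖ (Y ↑t ω) (U T t i ω) - 1))
    (Ek : ℕ → ℕ → ℝ)
    (hEk : ∀ T k, Ek T k = ∫ yu : 𝓨 × (Fin (N T) → Fin p → ℝ),
      ((Real.sqrt (N T))⁻¹ * ∑ i : Fin (N T), (ϖ yu.1 (yu.2 i) - 1)) ^ k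
      ∂(μ.prod (Measure.pi fun _ : Fin (N T) => stdGaussianPi p)))
    (k : ℕ) (hk : 2 ≤ k) :
    ((∃ δ : ℝ, 0 < δ ∧
        Integrable (fun yu : 𝓨 × (Fin p → ℝ) => ϖ yu.1 yu.2 ^ ((k : ℝ) + δ))
          (μ.prod (stdGaussianPi p))) →
      TendstoInMeasure P
        (fun (T : ℕ) ω => (T : ℝ)⁻¹ * (∑ t : Fin T, ε T t ω ^ k) - Ek T k)
        atTop (fun _ => (0 : ℝ))) ∧
    ((Integrable (fun yu : 𝓨 × (Fin p → ℝ) => ϖ yu.1 yu.2 ^ (2 * k))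
        (μ.prod (stdGaussianPi p))) →
      ∀ lam : ℝ, 0 < lam →
        TendstoInMeasure P
          (fun (T : ℕ) ω => (T : ℝ) ^ (-(1 + lam) / 2) * (∑ t : Fin T, ε T t ω ^ k)
            - (T : ℝ) ^ ((1 - lam) / 2) * Ek T k)
          atTop (fun _ => (0 : ℝ))) := by
  have hE : ∀ T, Ek T k = ∫ z, normErr ϖ (N T) z ^ k
      ∂(μ.prod (Measure.pi fun _ : Fin (N T) => stdGaussianPi p)) := fun T => hEk T k
  have hεn : ∀ T t ω, ε T t ω = normErr ϖ (N T) (Y t ω, fun i => U T t i ω) := hε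
  have hcore := @tendstoInMeasure_centered_sum Ω 𝓨 (Fin p → ℝ) _ _ _ P _ μ _ (stdGaussianPi p) _
    N Y hYmeas U hUmeas hlaw ϖ hϖmeas hϖnonneg hϖmean k
  simp_rw [← hE, ← hεn] at hcore
  have hk0 : (0 : ℝ) < k := by exact_mod_cast (by omega : 0 < k)
  have hk2 : (2 : ℝ) ≤ k := by exact_mod_cast hk
  constructor
  · rintro ⟨δ, hδ, hint⟩
    -- `q ≤ 1 + δ / k` makes the moment of order `k q` finite, `q ≤ 2` is the range of the
    -- von Bahr–Esseen bound, and `q > 1` gives `(T⁻¹) ^ q * T → 0`.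
    set q := min 2 (1 + δ / k) with hqdef
    have hq1 : 1 < q := lt_min (by norm_num) (by have := div_pos hδ hk0; linarith)
    have hkq : k * q ≤ k + δ := by
      calc k * q ≤ k * (1 + δ / k) := by gcongr; exact min_le_right _ _
        _ = k + δ := by field_simp
    have hint' : Integrable (fun z : 𝓨 × (Fin p → ℝ) => ϖ z.1 z.2 ^ (k * q))
        (μ.prod (stdGaussianPi p)) := by
      refine ((integrable_const 1).add hint).mono'
        (hϖmeas.pow_const _).aestronglyMeasurable (ae_of_all _ fun z => ?_)
      have h0 := hϖnonneg z.1 z.2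
      rw [Real.norm_of_nonneg (Real.rpow_nonneg h0 _)]
      simp only [Pi.add_apply]
      have h1 := Real.rpow_nonneg h0 (k + δ)
      rcases le_total (ϖ z.1 z.2) 1 with h | h
      · linarith [Real.rpow_le_one h0 h (by positivity : 0 ≤ k * q)]
      · linarith [Real.rpow_le_rpow_of_exponent_le h hkq]
    refine (hcore (q := q) (c := fun T => (T : ℝ)⁻¹) hq1.le (min_le_left _ _) (by nlinarith)
      hint' (fun T => by positivity) ?_).congr' ?_ (by rfl)
    · have h := (tendsto_rpow_neg_atTop (by linarith : 0 < q - 1)).comp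
        (tendsto_natCast_atTop_atTop (R := ℝ))
      refine h.congr' ?_
      filter_upwards [eventually_gt_atTop 0] with T hT
      have hT' : (0 : ℝ) < T := by exact_mod_cast hT
      simp only [Function.comp]
      rw [Real.inv_rpow hT'.le, ← Real.rpow_neg hT'.le, ← Real.rpow_add_one hT'.ne']
      congr 1; ring
    -- The identity uses `T⁻¹ * T = 1`, which fails at `T = 0`, where `0⁻¹ = 0`.
    · filter_upwards [eventually_gt_atTop 0] with T hT
      have hT' : (0 : ℝ) < T := by exact_mod_cast hT
      refine ae_of_all _ fun ω => ?_
      simp only [Finset.sum_sub_distrib, Finset.sum_const, Finset.card_univ, Fintype.card_fin,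
        nsmul_eq_mul]
      field_simp
  · intro hint lam hlam
    have hint' : Integrable (fun z : 𝓨 × (Fin p → ℝ) => ϖ z.1 z.2 ^ ((k : ℝ) * 2))
        (μ.prod (stdGaussianPi p)) := by
      refine hint.congr (ae_of_all _ fun z => ?_)
      simp only
      rw [← Real.rpow_natCast]
      congr 1; push_cast; ring
    refine (hcore (q := 2) (c := fun T => (T : ℝ) ^ (-(1 + lam) / 2)) (by norm_num) le_rfl
      (by linarith) hint' (fun T => by positivity) ?_).congr' ?_ (by rfl)
    · have h := (tendsto_rpow_neg_atTop hlam).comp (tendsto_natCast_atTop_atTop (R := ℝ))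
      refine h.congr' ?_
      filter_upwards [eventually_gt_atTop 0] with T hT
      have hT' : (0 : ℝ) < T := by exact_mod_cast hT
      simp only [Function.comp]
      rw [← Real.rpow_mul hT'.le, ← Real.rpow_add_one hT'.ne']
      congr 1; ring
    · filter_upwards [eventually_gt_atTop 0] with T hT
      have hT' : (0 : ℝ) < T := by exact_mod_cast hT
      refine ae_of_all _ fun ω => ?_
      have e : (T : ℝ) ^ ((1 - lam) / 2) = (T : ℝ) ^ (-(1 + lam) / 2) * T := by
        rw [← Real.rpow_add_one hT'.ne']
        congr 1; ring
      simp only [Finset.sum_sub_distrib, Finset.sum_const, Finset.card_univ, Fintype.card_fin,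
        nsmul_eq_mul]
      rw [e]
      ring
end
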